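/- arXiv:1206.3787 — 4 statements merged into one kernel-verified Lean document; each statement's English description precedes it below -/
import Mathlib

section
/- Let N ≥ 1, p ∈ ℂ^N and t ∈ ℂ^{N+1} with |Im p_i| < 2 and p_i ≠ 0 for i = 1,…,N, and |Im t_j| < π/2 for j = 1,…,N+1 with t_j ≠ t_k for 1 ≤ j < k ≤ N+1. Then ∫_{ℝ^N} exp(i z·p) ∏_{1≤j<k≤N} sinh(z_j−z_k) / ∏_{j=1}^{N+1} ∏_{k=1}^{N} cosh(t_j−z_k) dz = ∏_{j=1}^{N} (−iπ/sinh(π p_j/2)) · ∏_{1≤j<k≤N+1} (1/sinh(t_j−t_k)) · Σ_{τ∈S_{N+1}} sgn(τ) · exp(i Σ_{j=1}^{N} t_{τ(j)} p_j), where the sum is over all permutations τ of {1,…,N+1}. -/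
open MeasureTheory Complex

lemma prod_pairs_succ (n : ℕ) (f : Fin (n+1) → Fin (n+1) → ℂ) :
    ∏ q ∈ Finset.univ.filter (fun q : Fin (n+1) × Fin (n+1) => q.1 < q.2), f q.1 q.2
    = (∏ q ∈ Finset.univ.filter (fun q : Fin n × Fin n => q.1 < q.2),
        f q.1.castSucc q.2.castSucc) * ∏ j : Fin n, f j.castSucc (Fin.last n) := by
  rw [Finset.prod_filter, Finset.prod_filter, Fintype.prod_prod_type, Fintype.prod_prod_type]
  simp only [Fin.prod_univ_castSucc, Fin.castSucc_lt_castSucc_iff, Fin.castSucc_lt_last, if_true,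
    lt_irrefl, if_false, Finset.prod_mul_distrib, mul_one]
  have : ∀ x : Fin n, ¬ (Fin.last n < x.castSucc) := fun x => not_lt.mpr (Fin.le_last _)
  simp [this]

lemma det_last_col (n : ℕ) (B : Matrix (Fin (n+1)) (Fin (n+1)) ℂ) (c : Fin n → ℂ)
    (hc : ∀ j : Fin n, B j.castSucc (Fin.last n) = c j * B (Fin.last n) (Fin.last n)) :
    B.det = B (Fin.last n) (Fin.last n) *
      (Matrix.of fun j k : Fin n =>
        B j.castSucc k.castSucc - c j * B (Fin.last n) k.castSucc).det := by
  let A : Matrix (Fin (n+1)) (Fin (n+1)) ℂ := Matrix.of fun i k =>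
    B i k + (Fin.snoc (α := fun _ => ℂ) (fun j => - c j) 0 : Fin (n+1) → ℂ) i * B (Fin.last n) k
  have h1 : A.det = B.det := Matrix.det_eq_of_forall_row_eq_smul_add_const
    (Fin.snoc (α := fun _ => ℂ) (fun j => - c j) 0) (Fin.last n) (by simp) (fun i j => rfl)
  rw [← h1, Matrix.det_succ_column A (Fin.last n), Fin.sum_univ_castSucc]
  rw [Finset.sum_eq_zero, zero_add]
  · have : (-1 : ℂ) ^ (n + n) = 1 := by rw [← two_mul]; simp
    simp only [A, Matrix.of_apply, Fin.snoc_last, Fin.val_last, this]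
    simp only [zero_mul, add_zero, one_mul]
    congr 2
    ext j k
    simp [Fin.succAbove_last, sub_eq_add_neg]
  · intro j _
    simp [A, hc]

lemma cauchy_hyp (n : ℕ) (t z : Fin n → ℂ) (h : ∀ j k, Complex.cosh (t j - z k) ≠ 0) :
    (Matrix.of fun j k : Fin n => 1 / Complex.cosh (t j - z k)).det
    = (∏ q ∈ Finset.univ.filter (fun q : Fin n × Fin n => q.1 < q.2),
          Complex.sinh (t q.1 - t q.2)) *
      (∏ q ∈ Finset.univ.filter (fun q : Fin n × Fin n => q.1 < q.2),
          Complex.sinh (z q.1 - z q.2)) /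
        ∏ j : Fin n, ∏ k : Fin n, Complex.cosh (t j - z k) := by
  induction n with
  | zero => simp
  | succ n ih =>
    rw [prod_pairs_succ n (fun a b => Complex.sinh (t a - t b)),
      prod_pairs_succ n (fun a b => Complex.sinh (z a - z b))]
    rw [det_last_col n _ (fun j => Complex.cosh (t (Fin.last n) - z (Fin.last n)) /
      Complex.cosh (t j.castSucc - z (Fin.last n)))]
    · have hM : (Matrix.of fun j k : Fin n =>
        (Matrix.of fun j k : Fin (n+1) => 1 / Complex.cosh (t j - z k)) j.castSucc k.castSucc -
        Complex.cosh (t (Fin.last n) - z (Fin.last n)) /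
      Complex.cosh (t j.castSucc - z (Fin.last n)) *
        (Matrix.of fun j k : Fin (n+1) => 1 / Complex.cosh (t j - z k)) (Fin.last n) k.castSucc)
        = Matrix.of fun j k : Fin n => (Complex.sinh (t j.castSucc - t (Fin.last n)) /
              Complex.cosh (t j.castSucc - z (Fin.last n))) *
            (Matrix.of fun j k : Fin n => (Complex.sinh (z k.castSucc - z (Fin.last n)) /
              Complex.cosh (t (Fin.last n) - z k.castSucc)) *
            (Matrix.of fun j k : Fin n =>
              1 / Complex.cosh (t j.castSucc - z k.castSucc)) j k) j k := by
        ext j k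
        simp only [Matrix.of_apply]
        have h1 := h j.castSucc k.castSucc
        have h2 := h j.castSucc (Fin.last n)
        have h3 := h (Fin.last n) k.castSucc
        field_simp
        simp only [Complex.cosh_sub, Complex.sinh_sub]
        have a1 := Complex.cosh_sq_sub_sinh_sq (t (Fin.last n))
        have a2 := Complex.cosh_sq_sub_sinh_sq (z (Fin.last n))
        ring
      rw [hM, Matrix.det_mul_column, Matrix.det_mul_row,
        ih (fun j => t j.castSucc) (fun j => z j.castSucc) (fun j k => h _ _)]
      simp only [Fin.prod_univ_castSucc, Finset.prod_mul_distrib, Finset.prod_div_distrib,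
        Matrix.of_apply]
      simp only [div_eq_mul_inv, mul_inv]
      ring
    · intro j
      simp only [Matrix.of_apply]
      have h2 := h j.castSucc (Fin.last n)
      have h3 := h (Fin.last n) (Fin.last n)
      field_simp

lemma alg_left (n : ℕ) (t : Fin (n+1) → ℂ) (z : Fin n → ℂ)
    (h : ∀ j k, Complex.cosh (t j - z k) ≠ 0) :
    (Matrix.of fun j k : Fin n => Complex.sinh (t j.castSucc - t (Fin.last n)) /
       (Complex.cosh (t j.castSucc - z k) * Complex.cosh (t (Fin.last n) - z k))).det
    = (∏ q ∈ Finset.univ.filter (fun q : Fin (n+1) × Fin (n+1) => q.1 < q.2),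
          Complex.sinh (t q.1 - t q.2)) *
      (∏ q ∈ Finset.univ.filter (fun q : Fin n × Fin n => q.1 < q.2),
          Complex.sinh (z q.1 - z q.2)) /
        ∏ j : Fin (n+1), ∏ k : Fin n, Complex.cosh (t j - z k) := by
  rw [prod_pairs_succ n (fun a b => Complex.sinh (t a - t b))]
  have hM : (Matrix.of fun j k : Fin n => Complex.sinh (t j.castSucc - t (Fin.last n)) /
       (Complex.cosh (t j.castSucc - z k) * Complex.cosh (t (Fin.last n) - z k)))
       = Matrix.of fun j k : Fin n => Complex.sinh (t j.castSucc - t (Fin.last n)) *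
        (Matrix.of fun j k : Fin n => (1 / Complex.cosh (t (Fin.last n) - z k)) *
          (Matrix.of fun j k : Fin n => 1 / Complex.cosh (t j.castSucc - z k)) j k) j k := by
    ext j k
    simp only [Matrix.of_apply]
    simp only [div_eq_mul_inv, mul_inv]
    ring
  rw [hM, Matrix.det_mul_column, Matrix.det_mul_row,
        cauchy_hyp n (fun j => t j.castSucc) z (fun j k => h _ _)]
  simp only [Fin.prod_univ_castSucc, Finset.prod_div_distrib, Finset.prod_const_one]
  simp only [div_eq_mul_inv, mul_inv]
  ring

lemma alg_right (n : ℕ) (E : Fin (n+1) → Fin n → ℂ) :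
    (Matrix.of fun j k : Fin n => E j.castSucc k - E (Fin.last n) k).det
    = ∑ τ : Equiv.Perm (Fin (n + 1)), ((Equiv.Perm.sign τ : ℤ) : ℂ) *
        ∏ j : Fin n, E (τ j.castSucc) j := by
  have := det_last_col n (Matrix.of fun i => (Fin.snoc (α := fun _ => ℂ) (E i) 1 : Fin (n+1) → ℂ))
    (fun _ => 1) (by simp)
  simp only [Matrix.of_apply, Fin.snoc_last, Fin.snoc_castSucc, one_mul] at this
  rw [← this, Matrix.det_apply']
  simp [Fin.prod_univ_castSucc]

lemma cosh_zero_im {w : ℂ} (h : Complex.cosh w = 0) :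
    w.re = 0 ∧ ∃ k : ℤ, w.im = -((2 * k + 1) * Real.pi / 2) := by
  rw [← Complex.cos_mul_I, Complex.cos_eq_zero_iff] at h
  obtain ⟨k, hk⟩ := h
  have e : ((2 * (k:ℂ) + 1) * (Real.pi:ℂ) / 2) = (((2 * k + 1) * Real.pi / 2 : ℝ) : ℂ) := by
    push_cast; ring
  rw [e] at hk
  have h1 := congrArg Complex.re hk
  have h2 := congrArg Complex.im hk
  simp only [Complex.mul_I_re, Complex.mul_I_im, Complex.ofReal_re, Complex.ofReal_im] at h1 h2
  exact ⟨h2, k, by linarith⟩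

lemma cosh_strip {a z : ℂ} (ha : |a.im| < Real.pi / 2) (h0 : 0 ≤ z.im) (h1 : z.im ≤ Real.pi)
    (h : Complex.cosh (a - z) = 0) : z = a + (Real.pi / 2 : ℝ) * I := by
  obtain ⟨hr, k, hk⟩ := cosh_zero_im h
  have hpi := Real.pi_pos
  rw [abs_lt] at ha
  simp only [Complex.sub_im, Complex.sub_re] at hr hk
  have hk0 : k = 0 := by
    have l1 : (-1 : ℝ) < k := by
      by_contra hc
      push Not at hc
      nlinarith
    have l2 : (k : ℝ) < 1 := by
      by_contra hc
      push Not at hc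
      nlinarith
    have l1' : (-1 : ℤ) < k := by exact_mod_cast l1
    have l2' : k < (1 : ℤ) := by exact_mod_cast l2
    omega
  subst hk0
  apply Complex.ext
  · simp; linarith
  · simp only [Complex.add_im, Complex.mul_I_im, Complex.ofReal_re]
    push_cast at hk
    linarith

lemma cosh_real_ne {a : ℂ} (ha : |a.im| < Real.pi / 2) (x : ℝ) : Complex.cosh (a - x) ≠ 0 := by
  intro h
  have := cosh_strip ha (by simp) (by simp [Real.pi_pos.le]) h
  have h2 := congrArg Complex.im this
  simp only [Complex.add_im, Complex.mul_I_im, Complex.ofReal_re, Complex.ofReal_im] at h2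
  rw [abs_lt] at ha
  linarith

lemma sinh_ne {w : ℂ} (hw : |w.im| < Real.pi) (h0 : w ≠ 0) : Complex.sinh w ≠ 0 := by
  intro h
  have h' : Complex.sin (w * I) = 0 := by rw [Complex.sin_mul_I, h, zero_mul]
  rw [Complex.sin_eq_zero_iff] at h'
  obtain ⟨k, hk⟩ := h'
  have e : ((k:ℂ) * (Real.pi:ℂ)) = ((k * Real.pi : ℝ) : ℂ) := by
    push_cast; ring
  rw [e] at hk
  have h1 := congrArg Complex.re hk
  have h2 := congrArg Complex.im hk
  simp only [Complex.mul_I_re, Complex.mul_I_im, Complex.ofReal_re, Complex.ofReal_im] at h1 h2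
  have hpi := Real.pi_pos
  rw [abs_lt] at hw
  have hk0 : k = 0 := by
    have l1 : (-1 : ℝ) < k := by
      by_contra hc
      push Not at hc
      nlinarith
    have l2 : (k : ℝ) < 1 := by
      by_contra hc
      push Not at hc
      nlinarith
    have l1' : (-1 : ℤ) < k := by exact_mod_cast l1
    have l2' : k < (1 : ℤ) := by exact_mod_cast l2
    omega
  subst hk0
  apply h0
  apply Complex.ext
  · simpa using h2
  · simp at h1; simpa using h1

lemma cosh_lower {w : ℂ} (h : 1 ≤ |w.re|) : Real.exp |w.re| / 4 ≤ ‖Complex.cosh w‖ := by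
  have e : Complex.cosh w = (Complex.exp w + Complex.exp (-w)) / 2 := rfl
  have key : ∀ u : ℂ, 1 ≤ u.re → Real.exp u.re / 2 ≤ ‖Complex.exp u + Complex.exp (-u)‖ := by
    intro u hu
    have h1 := norm_sub_le_norm_add (Complex.exp u) (Complex.exp (-u))
    rw [Complex.norm_exp, Complex.norm_exp] at h1
    have h2 : 2 ≤ Real.exp u.re := by linarith [Real.add_one_le_exp u.re]
    have h3 : Real.exp (-u).re ≤ 1 := by
      rw [Real.exp_le_one_iff]; simp; linarith
    linarith
  rw [e, norm_div]
  simp only [Complex.norm_ofNat]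
  rcases le_total 0 w.re with h0 | h0
  · rw [abs_of_nonneg h0] at h ⊢
    linarith [key w h]
  · rw [abs_of_nonpos h0] at h ⊢
    have := key (-w) (by simpa using h)
    simp only [neg_neg, Complex.neg_re] at this
    rw [add_comm] at this
    linarith

lemma cosh_lower' {a z : ℂ} {T : ℝ} (hT : |a.re| ≤ T) (h : T + 1 ≤ |z.re|) :
    Real.exp (|z.re| - T) / 4 ≤ ‖Complex.cosh (a - z)‖ := by
  have h1 : |z.re| - T ≤ |(a - z).re| := by
    have := abs_sub_abs_le_abs_sub z.re a.re
    rw [Complex.sub_re, abs_sub_comm]; linarith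
  have h2 := cosh_lower (w := a - z) (by linarith)
  have h3 := Real.exp_le_exp.2 h1
  linarith

lemma tanh_add_one {a z : ℂ} {T : ℝ} (hT : |a.re| ≤ T) (h : T + 1 ≤ z.re) :
    ‖Complex.sinh (a - z) / Complex.cosh (a - z) + 1‖ ≤ 4 * Real.exp (2 * T - 2 * |z.re|) := by
  have hTn : 0 ≤ T := (abs_nonneg _).trans hT
  have hz : |z.re| = z.re := abs_of_nonneg (by linarith)
  have h1 := cosh_lower' hT (by rw [hz]; exact h)
  have hpos : 0 < ‖Complex.cosh (a - z)‖ := lt_of_lt_of_le (by positivity) h1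
  have hne : Complex.cosh (a - z) ≠ 0 := norm_pos_iff.1 hpos
  have e : Complex.sinh (a - z) / Complex.cosh (a - z) + 1
      = Complex.exp (a - z) / Complex.cosh (a - z) := by
    rw [← Complex.sinh_add_cosh]; field_simp
  rw [e, norm_div, div_le_iff₀ hpos, Complex.norm_exp]
  have h2 : Real.exp (a - z).re ≤ Real.exp (T - |z.re|) := by
    apply Real.exp_le_exp.2; rw [Complex.sub_re, hz]; linarith [le_abs_self a.re]
  have h3 : Real.exp (T - |z.re|) = 4 * Real.exp (2 * T - 2 * |z.re|) *
      (Real.exp (|z.re| - T) / 4) := by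
    rw [show 4 * Real.exp (2 * T - 2 * |z.re|) * (Real.exp (|z.re| - T) / 4) =
      Real.exp (2 * T - 2 * |z.re|) * Real.exp (|z.re| - T) by ring, ← Real.exp_add]
    congr 1; ring
  calc _ ≤ _ := h2
    _ = _ := h3
    _ ≤ _ := by gcongr

lemma tanh_sub_one {a z : ℂ} {T : ℝ} (hT : |a.re| ≤ T) (h : z.re ≤ -(T + 1)) :
    ‖Complex.sinh (a - z) / Complex.cosh (a - z) - 1‖ ≤ 4 * Real.exp (2 * T - 2 * |z.re|) := by
  have := tanh_add_one (a := -a) (z := -z) (T := T) (by simpa using hT) (by simp; linarith)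
  rw [show -a - -z = -(a - z) by ring, Complex.sinh_neg, Complex.cosh_neg, neg_div,
    show -(Complex.sinh (a - z) / Complex.cosh (a - z)) + 1 =
      -(Complex.sinh (a - z) / Complex.cosh (a - z) - 1) by ring, norm_neg] at this
  simpa using this

noncomputable def ff (p a b z : ℂ) : ℂ :=
  Complex.exp (I * (z * p)) * (Complex.sinh (a - b) / (Complex.cosh (a - z) * Complex.cosh (b - z)))

lemma ff_bound {p a b z : ℂ} {T : ℝ} (hTa : |a.re| ≤ T) (hTb : |b.re| ≤ T)
    (h : T + 1 ≤ |z.re|) (h0 : 0 ≤ z.im) (h1 : z.im ≤ Real.pi) :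
    ‖ff p a b z‖ ≤ (16 * ‖Complex.sinh (a - b)‖ * Real.exp (Real.pi * |p.re| + 2 * T)) *
      Real.exp (-(2 - |p.im|) * |z.re|) := by
  have ha := cosh_lower' hTa h
  have hb := cosh_lower' hTb h
  have hE : ‖Complex.exp (I * (z * p))‖ ≤ Real.exp (Real.pi * |p.re| + |z.re| * |p.im|) := by
    rw [Complex.norm_exp]
    apply Real.exp_le_exp.2
    simp only [Complex.mul_re, Complex.I_re, Complex.I_im, Complex.mul_im]
    have i1 : -(z.re * p.im) ≤ |z.re| * |p.im| := by rw [← abs_mul]; exact neg_le_abs _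
    have i2 : -(z.im * p.re) ≤ Real.pi * |p.re| := by
      calc -(z.im * p.re) ≤ |z.im * p.re| := neg_le_abs _
        _ = z.im * |p.re| := by rw [abs_mul, abs_of_nonneg h0]
        _ ≤ _ := by gcongr
    linarith
  have hab : Real.exp (|z.re| - T) / 4 * (Real.exp (|z.re| - T) / 4) ≤
    ‖Complex.cosh (a - z)‖ * ‖Complex.cosh (b - z)‖ := by gcongr
  unfold ff
  rw [norm_mul, norm_div, norm_mul]
  calc _ ≤ Real.exp (Real.pi * |p.re| + |z.re| * |p.im|) * (‖Complex.sinh (a - b)‖ /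
        (Real.exp (|z.re| - T) / 4 * (Real.exp (|z.re| - T) / 4))) := by gcongr
    _ = _ := by
      rw [show Real.exp (|z.re| - T) / 4 * (Real.exp (|z.re| - T) / 4) =
        Real.exp (2 * (|z.re| - T)) / 16 by rw [two_mul, Real.exp_add]; ring]
      rw [div_div_eq_mul_div, div_eq_mul_inv, ← Real.exp_neg]
      have : Real.exp (Real.pi * |p.re| + |z.re| * |p.im|) * Real.exp (-(2 * (|z.re| - T)))
        = Real.exp (Real.pi * |p.re| + 2 * T) * Real.exp (-(2 - |p.im|) * |z.re|) := by
        rw [← Real.exp_add, ← Real.exp_add]; congr 1; ring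
      linear_combination (16 * ‖Complex.sinh (a - b)‖) * this

lemma ff_cont {p a b : ℂ} (ha : |a.im| < Real.pi / 2) (hb : |b.im| < Real.pi / 2) :
    Continuous (fun x : ℝ => ff p a b x) := by
  unfold ff
  have h : ∀ x : ℝ, Complex.cosh (a - x) * Complex.cosh (b - x) ≠ 0 := fun x =>
    mul_ne_zero (cosh_real_ne ha x) (cosh_real_ne hb x)
  refine Continuous.mul (by fun_prop) (Continuous.div (by fun_prop) ?_ h)
  refine Continuous.mul (Complex.continuous_cosh.comp (by fun_prop)) (Complex.continuous_cosh.comp (by fun_prop))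

lemma ff_int {p a b : ℂ} (hp : |p.im| < 2) (ha : |a.im| < Real.pi / 2)
    (hb : |b.im| < Real.pi / 2) : Integrable (fun x : ℝ => ff p a b x) := by
  have hTa := le_max_left |a.re| |b.re|
  have hTb := le_max_right |a.re| |b.re|
  set T := max |a.re| |b.re|
  have hTn : 0 ≤ T := (abs_nonneg _).trans hTa
  have hd : 0 < 2 - |p.im| := by linarith
  refine (ff_cont ha hb).locallyIntegrable.integrable_of_isBigO_atBot_atTop
    (g := fun x => Real.exp ((2 - |p.im|) * x)) (g' := fun x => Real.exp (-(2 - |p.im|) * x))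
    ?_ ?_ ?_ ?_
  · refine Asymptotics.IsBigO.of_bound
      (16 * ‖Complex.sinh (a - b)‖ * Real.exp (Real.pi * |p.re| + 2 * T)) ?_
    filter_upwards [Filter.eventually_le_atBot (-(T + 1))] with x hx
    have hx' : |x| = -x := abs_of_nonpos (by linarith)
    have := ff_bound (p := p) (z := (x : ℂ)) hTa hTb (by simp [hx']; linarith) (by simp)
      (by simp [Real.pi_pos.le])
    simp only [Complex.ofReal_re, hx'] at this
    rw [Real.norm_of_nonneg (Real.exp_pos _).le]
    convert this using 3
    ring
  · exact ⟨Set.Iic 0, Filter.Iic_mem_atBot 0, integrableOn_exp_mul_Iic hd 0⟩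
  · refine Asymptotics.IsBigO.of_bound
      (16 * ‖Complex.sinh (a - b)‖ * Real.exp (Real.pi * |p.re| + 2 * T)) ?_
    filter_upwards [Filter.eventually_ge_atTop (T + 1)] with x hx
    have hx' : |x| = x := abs_of_nonneg (by linarith)
    have := ff_bound (p := p) (z := (x : ℂ)) hTa hTb (by simp [hx']; linarith) (by simp)
      (by simp [Real.pi_pos.le])
    simp only [Complex.ofReal_re, hx'] at this
    rw [Real.norm_of_nonneg (Real.exp_pos _).le]
    exact this
  · exact ⟨Set.Ioi 0, Filter.Ioi_mem_atTop 0, integrableOn_exp_mul_Ioi (by linarith) 0⟩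

noncomputable def DD (p a z : ℂ) : ℂ :=
  dslope (fun z => Complex.exp (I * (z * p))) (a + (Real.pi / 2 : ℝ) * I) z *
    (Complex.sinh (a - z) /
      dslope (fun z => Complex.cosh (a - z)) (a + (Real.pi / 2 : ℝ) * I) z)

lemma cosh_c (a : ℂ) : Complex.cosh (a - (a + (Real.pi / 2 : ℝ) * I)) = 0 := by
  rw [show a - (a + (Real.pi / 2 : ℝ) * I) = -((Real.pi / 2 : ℝ) * I) by ring, Complex.cosh_neg,
    Complex.cosh_mul_I]
  simp

lemma sinh_c (a : ℂ) : Complex.sinh (a - (a + (Real.pi / 2 : ℝ) * I)) ≠ 0 := by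
  rw [show a - (a + (Real.pi / 2 : ℝ) * I) = -((Real.pi / 2 : ℝ) * I) by ring, Complex.sinh_neg,
    Complex.sinh_mul_I]
  simp

lemma DD_eq {p a z : ℂ} (hz : z ≠ a + (Real.pi / 2 : ℝ) * I) :
    DD p a z = (Complex.exp (I * (z * p)) - Complex.exp (I * ((a + (Real.pi / 2 : ℝ) * I) * p))) *
      (Complex.sinh (a - z) / Complex.cosh (a - z)) := by
  unfold DD
  rw [dslope_of_ne _ hz, dslope_of_ne _ hz, slope_def_field, slope_def_field, cosh_c]
  have := sub_ne_zero.2 hz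
  by_cases hc : Complex.cosh (a - z) = 0
  · simp [hc]
  · generalize a + (Real.pi / 2 : ℝ) * I = c at *
    rw [sub_zero]
    field_simp

lemma hasDeriv_cosh (a z : ℂ) :
    HasDerivAt (fun z => Complex.cosh (a - z)) (-Complex.sinh (a - z)) z := by
  have := (Complex.hasDerivAt_cosh (a - z)).comp z ((hasDerivAt_id z).const_sub a)
  simpa [Function.comp_def] using this

lemma DD_diff {p a z : ℂ} (ha : |a.im| < Real.pi / 2) (h0 : 0 ≤ z.im) (h1 : z.im ≤ Real.pi) :
    DifferentiableAt ℂ (DD p a) z := by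
  have d1 : Differentiable ℂ
      (dslope (fun z => Complex.exp (I * (z * p))) (a + (Real.pi / 2 : ℝ) * I)) := by
    rw [← differentiableOn_univ, Complex.differentiableOn_dslope Filter.univ_mem]
    apply Differentiable.differentiableOn
    fun_prop
  have hch : Differentiable ℂ (fun z => Complex.cosh (a - z)) := fun z =>
    (hasDeriv_cosh a z).differentiableAt
  have hsh : Differentiable ℂ (fun z => Complex.sinh (a - z)) :=
    Complex.differentiable_sinh.comp (by fun_prop)
  have d2 : Differentiable ℂ
      (dslope (fun z => Complex.cosh (a - z)) (a + (Real.pi / 2 : ℝ) * I)) := by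
    rw [← differentiableOn_univ, Complex.differentiableOn_dslope Filter.univ_mem]
    exact hch.differentiableOn
  refine (d1 z).mul ((hsh z).div (d2 z) ?_)
  by_cases hz : z = a + (Real.pi / 2 : ℝ) * I
  · rw [hz, dslope_same, (hasDeriv_cosh a _).deriv]
    exact neg_ne_zero.2 (sinh_c a)
  · rw [dslope_of_ne _ hz, slope_def_field, cosh_c, sub_zero]
    exact div_ne_zero (fun h => hz (cosh_strip ha h0 h1 h)) (sub_ne_zero.2 hz)

lemma ff_tanh {p a b z : ℂ} (h1 : Complex.cosh (a - z) ≠ 0) (h2 : Complex.cosh (b - z) ≠ 0) :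
    ff p a b z = Complex.exp (I * (z * p)) * (Complex.sinh (a - z) / Complex.cosh (a - z) -
      Complex.sinh (b - z) / Complex.cosh (b - z)) := by
  unfold ff
  rw [show a - b = (a - z) - (b - z) by ring, Complex.sinh_sub (a - z)]
  field_simp

lemma KK_eq {p a b z : ℂ} (h1 : Complex.cosh (a - z) ≠ 0) (h2 : Complex.cosh (b - z) ≠ 0) :
    DD p a z - DD p b z = ff p a b z -
      (Complex.exp (I * ((a + (Real.pi / 2 : ℝ) * I) * p)) *
        (Complex.sinh (a - z) / Complex.cosh (a - z)) -
       Complex.exp (I * ((b + (Real.pi / 2 : ℝ) * I) * p)) *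
        (Complex.sinh (b - z) / Complex.cosh (b - z))) := by
  rw [DD_eq (fun h => h1 (by rw [h, cosh_c])), DD_eq (fun h => h2 (by rw [h, cosh_c])),
    ff_tanh h1 h2]
  ring

lemma KK_contOn {p a b : ℂ} (ha : |a.im| < Real.pi / 2) (hb : |b.im| < Real.pi / 2) :
    DifferentiableOn ℂ (fun z => DD p a z - DD p b z) {z | 0 ≤ z.im ∧ z.im ≤ Real.pi} := by
  intro z hz
  exact ((DD_diff ha hz.1 hz.2).sub (DD_diff hb hz.1 hz.2)).differentiableWithinAt

lemma ff_shift (p a b z : ℂ) :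
    ff p a b (z + Real.pi * I) = Complex.exp (-(Real.pi * p)) * ff p a b z := by
  have hc : ∀ u : ℂ, Complex.cosh (u - (z + Real.pi * I)) = - Complex.cosh (u - z) := by
    intro u
    rw [← sub_sub, Complex.cosh_sub (u - z), Complex.cosh_mul_I, Complex.sinh_mul_I]
    simp
  unfold ff
  rw [hc, hc, show I * ((z + Real.pi * I) * p) = -(Real.pi * p) + I * (z * p) by
    linear_combination (Real.pi * p) * Complex.I_mul_I, Complex.exp_add, neg_mul_neg]
  ring

lemma tanh_shift (u z : ℂ) :
    Complex.sinh (u - (z + Real.pi * I)) / Complex.cosh (u - (z + Real.pi * I)) =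
      Complex.sinh (u - z) / Complex.cosh (u - z) := by
  rw [← sub_sub, Complex.cosh_sub (u - z), Complex.sinh_sub (u - z),
    Complex.cosh_mul_I, Complex.sinh_mul_I]
  simp

lemma cosh_shift_ne {a : ℂ} (ha : |a.im| < Real.pi / 2) (x : ℝ) :
    Complex.cosh (a - (x + Real.pi * I)) ≠ 0 := by
  rw [← sub_sub, Complex.cosh_sub (a - x), Complex.cosh_mul_I, Complex.sinh_mul_I]
  simpa using cosh_real_ne ha x

lemma vert {p a b : ℂ} (hp : |p.im| < 2) (ha : |a.im| < Real.pi / 2)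
    (hb : |b.im| < Real.pi / 2) (s : ℝ) (hs : s = 1 ∨ s = -1) :
    Filter.Tendsto (fun R : ℝ => ∫ y in (0:ℝ)..Real.pi,
      (DD p a ((s * R : ℝ) + y * I) - DD p b ((s * R : ℝ) + y * I))) Filter.atTop
      (nhds (Real.pi * (s * (Complex.exp (I * ((a + (Real.pi / 2 : ℝ) * I) * p)) -
        Complex.exp (I * ((b + (Real.pi / 2 : ℝ) * I) * p)))))) := by
  have hTa := le_max_left |a.re| |b.re|
  have hTb := le_max_right |a.re| |b.re|
  set T := max |a.re| |b.re|
  have hTn : 0 ≤ T := (abs_nonneg _).trans hTa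
  have hd : 0 < 2 - |p.im| := by linarith
  set A := Complex.exp (I * ((a + (Real.pi / 2 : ℝ) * I) * p)) with hA
  set B := Complex.exp (I * ((b + (Real.pi / 2 : ℝ) * I) * p)) with hB
  set C := 16 * ‖Complex.sinh (a - b)‖ * Real.exp (Real.pi * |p.re| + 2 * T) with hC
  have hlim : Filter.Tendsto (fun R : ℝ => (C * Real.exp (-(2 - |p.im|) * R) +
      (‖A‖ + ‖B‖) * (4 * Real.exp (2 * T - 2 * R))) * |Real.pi - 0|) Filter.atTop (nhds 0) := by
    have e1 : Filter.Tendsto (fun R : ℝ => Real.exp (-(2 - |p.im|) * R)) Filter.atTop (nhds 0) :=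
      Real.tendsto_exp_atBot.comp (Filter.tendsto_id.const_mul_atTop_of_neg (by linarith))
    have e2 : Filter.Tendsto (fun R : ℝ => Real.exp (2 * T - 2 * R)) Filter.atTop (nhds 0) := by
      refine Real.tendsto_exp_atBot.comp ?_
      have := Filter.tendsto_atBot_add_const_left Filter.atTop (2 * T)
        (Filter.tendsto_id.const_mul_atTop_of_neg (r := (-2 : ℝ)) (β := ℝ) (by norm_num))
      refine this.congr (fun x => ?_)
      simp; ring
    have := (((e1.const_mul C).add ((e2.const_mul 4).const_mul (‖A‖ + ‖B‖))).mul_const |Real.pi - 0|)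
    simpa using this
  rw [tendsto_iff_norm_sub_tendsto_zero]
  refine squeeze_zero' (Filter.Eventually.of_forall fun _ => norm_nonneg _) ?_ hlim
  filter_upwards [Filter.eventually_ge_atTop (T + 1)] with R hR
  have hcont : ContinuousOn (fun y : ℝ =>
      (DD p a ((s * R : ℝ) + y * I) - DD p b ((s * R : ℝ) + y * I))) (Set.uIcc 0 Real.pi) := by
    refine (KK_contOn (p := p) ha hb).continuousOn.comp (by fun_prop) ?_
    intro y hy
    rw [Set.uIcc_of_le Real.pi_pos.le] at hy
    simpa using hy
  have hconst : (Real.pi * (s * (A - B)) : ℂ) = ∫ y in (0:ℝ)..Real.pi, (s * (A - B) : ℂ) := by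
    rw [intervalIntegral.integral_const]; simp
  rw [hconst, ← intervalIntegral.integral_sub hcont.intervalIntegrable (by simp)]
  refine intervalIntegral.norm_integral_le_of_norm_le_const ?_
  intro y hy
  rw [Set.uIoc_of_le Real.pi_pos.le] at hy
  set z : ℂ := (s * R : ℝ) + y * I with hz
  have hzre : z.re = s * R := by simp [hz]
  have hzim : z.im = y := by simp [hz]
  have habs : |z.re| = R := by
    rw [hzre]
    rcases hs with h | h <;> simp [h] <;> linarith
  have hge : T + 1 ≤ |z.re| := by rw [habs]; exact hR
  have n1 : Complex.cosh (a - z) ≠ 0 := norm_pos_iff.1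
    (lt_of_lt_of_le (by positivity) (cosh_lower' hTa hge))
  have n2 : Complex.cosh (b - z) ≠ 0 := norm_pos_iff.1
    (lt_of_lt_of_le (by positivity) (cosh_lower' hTb hge))
  have hf := ff_bound (p := p) hTa hTb hge (by rw [hzim]; exact hy.1.le) (by rw [hzim]; exact hy.2)
  have htan : ∀ u : ℂ, |u.re| ≤ T → ‖Complex.sinh (u - z) / Complex.cosh (u - z) + s‖ ≤
      4 * Real.exp (2 * T - 2 * |z.re|) := by
    intro u hu
    rcases hs with h | h
    · have := tanh_add_one (z := z) hu (by rw [hzre, h]; linarith)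
      simpa [h] using this
    · have := tanh_sub_one (z := z) hu (by rw [hzre, h]; linarith)
      simpa [h, sub_eq_add_neg] using this
  rw [KK_eq n1 n2, ← hA, ← hB]
  rw [habs] at hf htan
  have e : ff p a b z - (A * (Complex.sinh (a - z) / Complex.cosh (a - z)) -
      B * (Complex.sinh (b - z) / Complex.cosh (b - z))) - s * (A - B) =
    ff p a b z - (A * (Complex.sinh (a - z) / Complex.cosh (a - z) + s) -
      B * (Complex.sinh (b - z) / Complex.cosh (b - z) + s)) := by ring
  rw [e]
  calc _ ≤ ‖ff p a b z‖ + ‖A * (Complex.sinh (a - z) / Complex.cosh (a - z) + s) -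
      B * (Complex.sinh (b - z) / Complex.cosh (b - z) + s)‖ := norm_sub_le _ _
    _ ≤ ‖ff p a b z‖ + (‖A * (Complex.sinh (a - z) / Complex.cosh (a - z) + s)‖ +
      ‖B * (Complex.sinh (b - z) / Complex.cosh (b - z) + s)‖) := by
        gcongr; exact norm_sub_le _ _
    _ ≤ C * Real.exp (-(2 - |p.im|) * R) + (‖A‖ * (4 * Real.exp (2 * T - 2 * R)) +
          ‖B‖ * (4 * Real.exp (2 * T - 2 * R))) := by
        rw [norm_mul, norm_mul]
        gcongr
        · exact htan a hTa
        · exact htan b hTb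
    _ = _ := by ring

lemma horiz {p a b : ℂ} (ha : |a.im| < Real.pi / 2) (hb : |b.im| < Real.pi / 2) (R : ℝ) :
    (∫ x in (-R)..R, (DD p a (x : ℂ) - DD p b (x : ℂ))) -
    (∫ x in (-R)..R, (DD p a (x + Real.pi * I) - DD p b (x + Real.pi * I))) =
    (1 - Complex.exp (-(Real.pi * p))) * ∫ x in (-R)..R, ff p a b (x : ℂ) := by
  have c1 : Continuous (fun x : ℝ => DD p a (x : ℂ) - DD p b (x : ℂ)) := by
    rw [← continuousOn_univ]
    refine (KK_contOn (p := p) ha hb).continuousOn.comp (by fun_prop) ?_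
    intro y hy
    simp [Real.pi_pos.le]
  have c2 : Continuous (fun x : ℝ => DD p a (x + Real.pi * I) - DD p b (x + Real.pi * I)) := by
    rw [← continuousOn_univ]
    refine (KK_contOn (p := p) ha hb).continuousOn.comp (by fun_prop) ?_
    intro y hy
    simp [Real.pi_pos.le]
  rw [← intervalIntegral.integral_sub (c1.intervalIntegrable _ _) (c2.intervalIntegrable _ _),
    ← intervalIntegral.integral_const_mul]
  congr 1
  ext x
  rw [KK_eq (cosh_real_ne ha x) (cosh_real_ne hb x),
    KK_eq (cosh_shift_ne ha x) (cosh_shift_ne hb x), ff_shift, tanh_shift, tanh_shift]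
  ring

lemma one_dim {p a b : ℂ} (hp : |p.im| < 2) (hp0 : p ≠ 0) (ha : |a.im| < Real.pi / 2)
    (hb : |b.im| < Real.pi / 2) :
    ∫ x : ℝ, ff p a b x = (-I * (Real.pi : ℂ)) / Complex.sinh ((Real.pi : ℂ) * p / 2) *
      (Complex.exp (I * (a * p)) - Complex.exp (I * (b * p))) := by
  have hrect : ∀ R : ℝ, (1 - Complex.exp (-(Real.pi * p))) * (∫ x in (-R)..R, ff p a b (x : ℂ)) +
      I * (∫ y in (0:ℝ)..Real.pi,
        (DD p a (((1:ℝ) * R : ℝ) + y * I) - DD p b (((1:ℝ) * R : ℝ) + y * I))) -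
      I * (∫ y in (0:ℝ)..Real.pi,
        (DD p a (((-1:ℝ) * R : ℝ) + y * I) - DD p b (((-1:ℝ) * R : ℝ) + y * I))) = 0 := by
    intro R
    have := Complex.integral_boundary_rect_eq_zero_of_differentiableOn
      (fun z => DD p a z - DD p b z) (-R : ℝ) (R + Real.pi * I) ?_
    · rw [← horiz ha hb R]
      simpa using this
    · refine (KK_contOn ha hb).mono ?_
      intro z hz
      rw [Complex.mem_reProdIm] at hz
      have h2 := hz.2
      simp [Set.uIcc_of_le Real.pi_pos.le] at h2
      exact h2
  have hl := (((intervalIntegral_tendsto_integral (ff_int (p := p) hp ha hb)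
    Filter.tendsto_neg_atTop_atBot Filter.tendsto_id).const_mul
      (1 - Complex.exp (-(Real.pi * p)))).add
      ((vert (p := p) hp ha hb 1 (Or.inl rfl)).const_mul I)).sub
      ((vert (p := p) hp ha hb (-1) (Or.inr rfl)).const_mul I)
  have h0 := tendsto_nhds_unique hl (tendsto_const_nhds.congr (fun R => (hrect R).symm))
  have hsinh : Complex.sinh (Real.pi * p / 2) ≠ 0 := by
    apply sinh_ne
    · have : (Real.pi * p / 2 : ℂ).im = Real.pi / 2 * p.im := by
        rw [show (Real.pi * p / 2 : ℂ) = ((Real.pi / 2 : ℝ) : ℂ) * p by push_cast; ring]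
        rw [Complex.im_ofReal_mul]
      rw [this, abs_mul, abs_of_pos (by positivity)]
      nlinarith [Real.pi_pos]
    · have := Complex.ofReal_ne_zero.2 Real.pi_ne_zero
      simp [hp0]
  have hA : ∀ u : ℂ, Complex.exp (I * ((u + (Real.pi / 2 : ℝ) * I) * p)) =
      Complex.exp (-(Real.pi * p / 2)) * Complex.exp (I * (u * p)) := by
    intro u
    rw [← Complex.exp_add]
    congr 1
    push_cast
    linear_combination (Real.pi / 2 * p) * Complex.I_mul_I
  have hE : 1 - Complex.exp (-(Real.pi * p)) =
      2 * Complex.exp (-(Real.pi * p / 2)) * Complex.sinh (Real.pi * p / 2) := by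
    have : Complex.sinh (Real.pi * p / 2) =
      (Complex.exp (Real.pi * p / 2) - Complex.exp (-(Real.pi * p / 2))) / 2 := rfl
    rw [this]
    have e1 : Complex.exp (-(Real.pi * p / 2)) * Complex.exp (Real.pi * p / 2) = 1 := by
      rw [← Complex.exp_add]; simp
    have e2 : Complex.exp (-(Real.pi * p / 2)) * Complex.exp (-(Real.pi * p / 2)) =
        Complex.exp (-(Real.pi * p)) := by
      rw [← Complex.exp_add]; congr 1; ring
    linear_combination e2 - e1
  rw [hA, hA, hE] at h0
  have hne := Complex.exp_ne_zero (-(Real.pi * p / 2))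
  rw [div_mul_eq_mul_div, eq_div_iff hsinh]
  apply mul_left_cancel₀ (mul_ne_zero two_ne_zero hne)
  push_cast at h0
  linear_combination h0

/-- Explicit evaluation of the integral `I_N(p,t)` (Lemma C.1). -/
theorem statement1 (N : ℕ) (hN : 1 ≤ N) (p : Fin N → ℂ) (t : Fin (N + 1) → ℂ)
    (hp : ∀ i : Fin N, |(p i).im| < 2)
    (hp0 : ∀ i : Fin N, p i ≠ 0)
    (ht : ∀ j : Fin (N + 1), |(t j).im| < Real.pi / 2)
    (htd : ∀ j k : Fin (N + 1), j < k → t j ≠ t k) :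
    ∫ z : Fin N → ℝ,
      Complex.exp (Complex.I * ∑ i : Fin N, (z i : ℂ) * p i) *
        (∏ q ∈ Finset.univ.filter (fun q : Fin N × Fin N => q.1 < q.2),
          Complex.sinh ((z q.1 : ℂ) - (z q.2 : ℂ))) /
        ∏ j : Fin (N + 1), ∏ k : Fin N, Complex.cosh (t j - (z k : ℂ))
    = (∏ j : Fin N, (-Complex.I * (Real.pi : ℂ)) / Complex.sinh ((Real.pi : ℂ) * p j / 2)) *
      (∏ q ∈ Finset.univ.filter (fun q : Fin (N + 1) × Fin (N + 1) => q.1 < q.2),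
        1 / Complex.sinh (t q.1 - t q.2)) *
      ∑ τ : Equiv.Perm (Fin (N + 1)), ((Equiv.Perm.sign τ : ℤ) : ℂ) *
        Complex.exp (Complex.I * ∑ j : Fin N, t (τ (Fin.castSucc j)) * p j) := by
  have hD : (∏ q ∈ Finset.univ.filter (fun q : Fin (N + 1) × Fin (N + 1) => q.1 < q.2),
        Complex.sinh (t q.1 - t q.2)) ≠ 0 := by
    rw [Finset.prod_ne_zero_iff]
    intro q hq
    have hlt := (Finset.mem_filter.1 hq).2
    apply sinh_ne
    · have h1 := abs_lt.1 (ht q.1)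
      have h2 := abs_lt.1 (ht q.2)
      rw [Complex.sub_im, abs_lt]
      constructor <;> linarith
    · exact sub_ne_zero.2 (htd _ _ hlt)
  have hpoint : ∀ z : Fin N → ℝ,
      Complex.exp (Complex.I * ∑ i : Fin N, (z i : ℂ) * p i) *
        (∏ q ∈ Finset.univ.filter (fun q : Fin N × Fin N => q.1 < q.2),
          Complex.sinh ((z q.1 : ℂ) - (z q.2 : ℂ))) /
        ∏ j : Fin (N + 1), ∏ k : Fin N, Complex.cosh (t j - (z k : ℂ))
      = (∏ q ∈ Finset.univ.filter (fun q : Fin (N + 1) × Fin (N + 1) => q.1 < q.2),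
        Complex.sinh (t q.1 - t q.2))⁻¹ * ∑ σ : Equiv.Perm (Fin N),
          ((Equiv.Perm.sign σ : ℤ) : ℂ) *
            ∏ k : Fin N, ff (p k) (t (σ k).castSucc) (t (Fin.last N)) (z k) := by
    intro z
    have h1 := alg_left N t (fun k => (z k : ℂ)) (fun j k => cosh_real_ne (ht j) _)
    have h2 : ∀ σ : Equiv.Perm (Fin N),
        ∏ k : Fin N, ff (p k) (t (σ k).castSucc) (t (Fin.last N)) (z k) =
        Complex.exp (Complex.I * ∑ i : Fin N, (z i : ℂ) * p i) *
        ∏ k : Fin N, (Matrix.of fun j k : Fin N =>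
          Complex.sinh (t j.castSucc - t (Fin.last N)) /
       (Complex.cosh (t j.castSucc - z k) * Complex.cosh (t (Fin.last N) - z k))) (σ k) k := by
      intro σ
      rw [Finset.mul_sum, Complex.exp_sum, ← Finset.prod_mul_distrib]
      rfl
    simp only [h2]
    have h3 : ∀ σ : Equiv.Perm (Fin N), ∀ x y : ℂ, ((Equiv.Perm.sign σ : ℤ) : ℂ) * (x * y) =
      x * (((Equiv.Perm.sign σ : ℤ) : ℂ) * y) := fun σ x y => by ring
    simp only [h3]
    rw [← Finset.mul_sum, ← Matrix.det_apply', h1]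
    field_simp
  simp only [hpoint]
  rw [MeasureTheory.integral_const_mul, MeasureTheory.integral_finsetSum]
  · simp only [MeasureTheory.integral_const_mul]
    have h4 : ∀ σ : Equiv.Perm (Fin N), ∫ z : Fin N → ℝ,
        ∏ k : Fin N, ff (p k) (t (σ k).castSucc) (t (Fin.last N)) (z k) =
        (∏ j : Fin N, (-Complex.I * (Real.pi : ℂ)) / Complex.sinh ((Real.pi : ℂ) * p j / 2)) *
        ∏ k : Fin N, (Matrix.of fun j k : Fin N => Complex.exp (I * (t j.castSucc * p k)) -
          Complex.exp (I * (t (Fin.last N) * p k))) (σ k) k := by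
      intro σ
      rw [MeasureTheory.integral_fintype_prod_volume_eq_prod
        (fun k (x : ℝ) => ff (p k) (t (σ k).castSucc) (t (Fin.last N)) x),
        ← Finset.prod_mul_distrib]
      exact Finset.prod_congr rfl fun k _ => one_dim (hp k) (hp0 k) (ht _) (ht _)
    simp only [h4]
    have h3 : ∀ σ : Equiv.Perm (Fin N), ∀ x y : ℂ, ((Equiv.Perm.sign σ : ℤ) : ℂ) * (x * y) =
      x * (((Equiv.Perm.sign σ : ℤ) : ℂ) * y) := fun σ x y => by ring
    simp only [h3]
    rw [← Finset.mul_sum, ← Matrix.det_apply',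
      alg_right N (fun j k => Complex.exp (I * (t j * p k)))]
    have h5 : ∀ τ : Equiv.Perm (Fin (N + 1)),
        Complex.exp (I * ∑ j : Fin N, t (τ (Fin.castSucc j)) * p j) =
        ∏ j : Fin N, Complex.exp (I * (t (τ (Fin.castSucc j)) * p j)) := by
      intro τ
      rw [Finset.mul_sum, Complex.exp_sum]
    simp only [h5, one_div, Finset.prod_inv_distrib]
    ring
  · intro σ _
    refine Integrable.const_mul ?_ _
    exact Integrable.fintype_prod (f := fun k (x : ℝ) =>
      ff (p k) (t (σ k).castSucc) (t (Fin.last N)) x)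
      (fun k => ff_int (hp k) (ht _) (ht _))
end

section
/- Let N ≥ 1 and t ∈ ℂ^{N+1} with |Im t_j| < π/2 for j = 1,…,N+1. Then the function z ↦ ∏_{1≤m<n≤N} (z_m−z_n)·sinh(z_m−z_n) / ∏_{j=1}^{N+1} ∏_{k=1}^{N} cosh(t_j−z_k) is Lebesgue integrable on ℝ^N, and if moreover t_j ≠ t_k for all 1 ≤ j < k ≤ N+1, then ∫_{ℝ^N} ∏_{1≤m<n≤N} (z_m−z_n)·sinh(z_m−z_n) / ∏_{j=1}^{N+1} ∏_{k=1}^{N} cosh(t_j−z_k) dz = 2^N · ∏_{1≤m<n≤N+1} (t_m−t_n)/sinh(t_m−t_n). -/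
open MeasureTheory Complex

lemma aux_cosh_lower (w : ℂ) (hw : |w.im| < Real.pi / 2) :
    Real.cos w.im * Real.exp |w.re| / 2 ≤ ‖Complex.cosh w‖ := by
  have hc : 0 < Real.cos w.im := Real.cos_pos_of_mem_Ioo (abs_lt.1 hw)
  have h1 : ‖Complex.cosh w‖ ^ 2 = Real.cosh w.re ^ 2 - Real.sin w.im ^ 2 := by
    rw [← Complex.normSq_eq_norm_sq]
    conv_lhs => rw [← Complex.re_add_im w, Complex.cosh_add, Complex.cosh_mul_I, Complex.sinh_mul_I]
    rw [← Complex.ofReal_cosh, ← Complex.ofReal_sinh, ← Complex.ofReal_cos, ← Complex.ofReal_sin,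
      ← mul_assoc, ← Complex.ofReal_mul, ← Complex.ofReal_mul, Complex.normSq_add_mul_I]
    have := Real.cosh_sq w.re
    have h3 := Real.sin_sq_add_cos_sq w.im
    have : Real.sinh w.re ^2 = Real.cosh w.re ^ 2 - 1 := by linarith
    have h4 : Real.cos w.im ^2 = 1 - Real.sin w.im ^ 2 := by linarith
    rw [mul_pow, mul_pow, this, h4]; ring
  have h2 : Real.cos w.im * Real.cosh w.re ≤ ‖Complex.cosh w‖ := by
    apply le_of_sq_le_sq _ (norm_nonneg _) |> fun h => h
    rw [h1, mul_pow]
    have h3 := Real.sin_sq_add_cos_sq w.im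
    have h4 : Real.cos w.im ^2 = 1 - Real.sin w.im ^ 2 := by linarith
    have h5 : 1 ≤ Real.cosh w.re ^ 2 := by nlinarith [Real.one_le_cosh w.re]
    rw [h4]; nlinarith [sq_nonneg (Real.sin w.im)]
  have h3 : Real.exp |w.re| / 2 ≤ Real.cosh w.re := by
    rw [← Real.cosh_abs, Real.cosh_eq]
    have := Real.exp_pos (-|w.re|)
    linarith
  calc _ = Real.cos w.im * (Real.exp |w.re| / 2) := by ring
    _ ≤ _ := by gcongr
    _ ≤ _ := h2

lemma aux_sinh_upper (w : ℂ) : ‖Complex.sinh w‖ ≤ Real.exp |w.re| := by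
  rw [Complex.sinh]
  have h1 : ‖Complex.exp w‖ ≤ Real.exp |w.re| := by
    rw [Complex.norm_exp]; exact Real.exp_le_exp.2 (le_abs_self _)
  have h2 : ‖Complex.exp (-w)‖ ≤ Real.exp |w.re| := by
    rw [Complex.norm_exp]; exact Real.exp_le_exp.2 (by simpa using neg_le_abs _)
  rw [norm_div, Complex.norm_ofNat]
  have := norm_sub_le (Complex.exp w) (Complex.exp (-w))
  linarith

lemma aux_unif (a₀ : ℂ) (ha : |a₀.im| < Real.pi / 2) : ∃ ε > 0, ∃ c > 0, ∃ C > 0,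
    ∀ a ∈ Metric.ball a₀ ε, |a.im| < Real.pi / 2 ∧ ∀ z : ℝ,
      c * Real.exp |z| ≤ ‖Complex.cosh ((z : ℂ) - a)‖ ∧
      ‖Complex.sinh ((z : ℂ) - a)‖ ≤ C * Real.exp |z| := by
  set ε := (Real.pi / 2 - |a₀.im|) / 2 with hε
  have hεp : 0 < ε := by rw [hε]; linarith
  set r := |a₀.im| + ε with hr
  have hr0 : 0 ≤ r := by positivity
  have hr2 : r < Real.pi / 2 := by rw [hr, hε]; linarith
  have hcr : 0 < Real.cos r := Real.cos_pos_of_mem_Ioo ⟨by linarith, hr2⟩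
  set R := |a₀.re| + ε with hR
  refine ⟨ε, hεp, Real.cos r * Real.exp (-R) / 2, by positivity, Real.exp R, by positivity, ?_⟩
  intro a hA
  rw [Metric.mem_ball, dist_eq_norm] at hA
  have hi : |a.im| ≤ r := by
    have := (Complex.abs_im_le_norm (a - a₀)).trans hA.le
    rw [Complex.sub_im] at this
    have := abs_sub_abs_le_abs_sub a.im a₀.im
    linarith
  have hre : |a.re| ≤ R := by
    have := (Complex.abs_re_le_norm (a - a₀)).trans hA.le
    rw [Complex.sub_re] at this
    have := abs_sub_abs_le_abs_sub a.re a₀.re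
    linarith
  refine ⟨by linarith, fun z => ⟨?_, ?_⟩⟩
  · refine le_trans ?_ (aux_cosh_lower _ ?_)
    · have h1 : Real.cos r ≤ Real.cos ((z : ℂ) - a).im := by
        rw [← Real.cos_abs ((z : ℂ) - a).im]
        apply Real.cos_le_cos_of_nonneg_of_le_pi (abs_nonneg _) (by linarith [Real.pi_pos])
        simpa using hi
      have h2 : Real.exp (-R) * Real.exp |z| ≤ Real.exp |((z : ℂ) - a).re| := by
        rw [← Real.exp_add, Real.exp_le_exp]
        have := abs_sub_abs_le_abs_sub z a.re
        simp only [Complex.sub_re, Complex.ofReal_re]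
        linarith
      calc _ = Real.cos r * (Real.exp (-R) * Real.exp |z|) / 2 := by ring
        _ ≤ _ := by
          have := hcr.le.trans h1
          gcongr
    · simp; linarith
  · refine (aux_sinh_upper _).trans ?_
    rw [← Real.exp_add, Real.exp_le_exp]
    have := abs_sub z a.re
    simp only [Complex.sub_re, Complex.ofReal_re]
    linarith

lemma aux_cosh_ne (a : ℂ) (ha : |a.im| < Real.pi / 2) (z : ℝ) : Complex.cosh ((z : ℂ) - a) ≠ 0 := by
  obtain ⟨ε, hε, c, hc, C, hC, h⟩ := aux_unif a ha
  have := ((h a (Metric.mem_ball_self hε)).2 z).1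
  intro h0
  rw [h0, norm_zero] at this
  have : 0 < c * Real.exp |z| := by positivity
  linarith

lemma aux_int0 (k : ℕ) : Integrable (fun z : ℝ => (1 + |z|) ^ k * Real.exp (-2 * |z|)) := by
  refine Integrable.mono' (g := fun z => (2 * k.factorial * Real.exp 1) * (1 + z ^ 2)⁻¹)
    (integrable_inv_one_add_sq.const_mul _) (by fun_prop) (ae_of_all _ fun z => ?_)
  rw [Real.norm_of_nonneg (by positivity)]
  have h1 : (1 + |z|) ^ k ≤ k.factorial * (Real.exp 1 * Real.exp |z|) := by
    have := Real.pow_div_factorial_le_exp (1 + |z|) (by positivity) k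
    rw [div_le_iff₀ (by positivity), Real.exp_add] at this
    linarith
  have h2 : Real.exp (-|z|) ≤ 2 * (1 + z ^ 2)⁻¹ := by
    have := Real.quadratic_le_exp_of_nonneg (abs_nonneg z)
    rw [sq_abs] at this
    rw [Real.exp_neg, ← div_eq_mul_inv, inv_le_comm₀ (by positivity) (by positivity), inv_div]
    have := abs_nonneg z
    linarith
  calc _ ≤ k.factorial * (Real.exp 1 * Real.exp |z|) * Real.exp (-2 * |z|) := by gcongr
    _ = k.factorial * Real.exp 1 * Real.exp (-|z|) := by
      rw [show -|z| = |z| + -2 * |z| by ring, Real.exp_add]; ring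
    _ ≤ k.factorial * Real.exp 1 * (2 * (1 + z ^ 2)⁻¹) := by gcongr
    _ = _ := by ring

lemma aux_int (k : ℕ) (f : ℝ → ℂ) (hf : Continuous f) (C : ℝ)
    (h : ∀ z, ‖f z‖ ≤ C * ((1 + |z|) ^ k * Real.exp (-2 * |z|))) : Integrable f :=
  Integrable.mono' ((aux_int0 k).const_mul C) hf.aestronglyMeasurable (ae_of_all _ h)

/-- integrability of z^k / (cosh(z-a) cosh (z-b)) -/
lemma aux_int1 (k : ℕ) (a b : ℂ) (ha : |a.im| < Real.pi / 2) (hb : |b.im| < Real.pi / 2) :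
    Integrable (fun z : ℝ => (z : ℂ) ^ k / (Complex.cosh (z - a) * Complex.cosh (z - b))) := by
  obtain ⟨ε, hε, c, hc, C, hC, h⟩ := aux_unif a ha
  obtain ⟨ε', hε', c', hc', C', hC', h'⟩ := aux_unif b hb
  refine aux_int k _ ?_ (c * c')⁻¹ ?_
  · have := aux_cosh_ne a ha
    have := aux_cosh_ne b hb
    refine Continuous.div (by fun_prop) (by fun_prop) fun z => mul_ne_zero (by solve_by_elim) (by solve_by_elim)
  · intro z
    have h1 := ((h a (Metric.mem_ball_self hε)).2 z).1
    have h2 := ((h' b (Metric.mem_ball_self hε')).2 z).1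
    rw [norm_div, norm_mul, norm_pow, Complex.norm_real, Real.norm_eq_abs]
    calc _ ≤ (1 + |z|) ^ k / ((c * Real.exp |z|) * (c' * Real.exp |z|)) := by
          gcongr; linarith
      _ = _ := by
        rw [show -2 * |z| = -|z| + -|z| by ring, Real.exp_add, Real.exp_neg]
        field_simp

lemma aux_ibp1 (k : ℕ) (a b : ℂ) (ha : |a.im| < Real.pi / 2) (hb : |b.im| < Real.pi / 2) :
    (k + 1) * (Complex.sinh (a - b) *
      ∫ z : ℝ, (z : ℂ) ^ k / (Complex.cosh (z - a) * Complex.cosh (z - b))) =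
    (∫ z : ℝ, (z : ℂ) ^ (k + 1) / (Complex.cosh (z - a) * Complex.cosh (z - a))) -
    ∫ z : ℝ, (z : ℂ) ^ (k + 1) / (Complex.cosh (z - b) * Complex.cosh (z - b)) := by
  have key := integral_eq_zero_of_hasDerivAt_of_integrable
    (f := fun z : ℝ => Complex.sinh (a - b) *
      ((z : ℂ) ^ (k + 1) / (Complex.cosh (z - a) * Complex.cosh (z - b))))
    (f' := fun z : ℝ => (k + 1) * (Complex.sinh (a - b) *
       ((z : ℂ) ^ k / (Complex.cosh (z - a) * Complex.cosh (z - b)))) -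
       (z : ℂ) ^ (k + 1) / (Complex.cosh (z - a) * Complex.cosh (z - a)) +
       (z : ℂ) ^ (k + 1) / (Complex.cosh (z - b) * Complex.cosh (z - b))) ?_ ?_ ?_
  · have i1 := ((aux_int1 k a b ha hb).const_mul (Complex.sinh (a - b))).const_mul (k + 1 : ℂ)
    have i2 := aux_int1 (k + 1) a a ha ha
    have i3 := aux_int1 (k + 1) b b hb hb
    rw [integral_add (by exact i1.sub i2) i3, integral_sub i1 i2, integral_const_mul,
      integral_const_mul] at key
    linear_combination key
  · intro z
    have h1 := aux_cosh_ne a ha z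
    have h2 := aux_cosh_ne b hb z
    have d1 : HasDerivAt (fun z : ℂ => Complex.sinh (a - b) *
      (z ^ (k + 1) / (Complex.cosh (z - a) * Complex.cosh (z - b)))) _ (z : ℂ) :=
      (((hasDerivAt_pow (k + 1) (z : ℂ)).div
        ((((hasDerivAt_id (z : ℂ)).sub_const a).ccosh).mul
          (((hasDerivAt_id (z : ℂ)).sub_const b).ccosh)) (mul_ne_zero h1 h2)).const_mul _)
    refine d1.comp_ofReal.congr_deriv ?_
    have e1 : Complex.sinh (a - b) = Complex.sinh (z - b) * Complex.cosh (z - a) -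
      Complex.cosh (z - b) * Complex.sinh (z - a) := by
      rw [← Complex.sinh_sub]; congr 1; ring
    have q1 := Complex.cosh_sq (z - a)
    have q2 := Complex.cosh_sq (z - b)
    simp only [id, mul_one, Pi.mul_apply, Nat.add_sub_cancel, Nat.cast_add, Nat.cast_one]
    rw [e1]
    generalize Complex.cosh (z - a) = A at *
    generalize Complex.cosh (z - b) = B at *
    generalize Complex.sinh (z - a) = P at *
    generalize Complex.sinh (z - b) = Q at *
    field_simp
    have q1' : P ^ 2 = A ^ 2 - 1 := by linear_combination -q1
    have q2' : Q ^ 2 = B ^ 2 - 1 := by linear_combination -q2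
    ring_nf
    simp only [q1', q2']
    ring
  · have i1 := ((aux_int1 k a b ha hb).const_mul (Complex.sinh (a - b))).const_mul (k + 1 : ℂ)
    have i2 := aux_int1 (k + 1) a a ha ha
    have i3 := aux_int1 (k + 1) b b hb hb
    exact (i1.sub i2).add i3
  · exact (aux_int1 (k + 1) a b ha hb).const_mul _

lemma aux_int2 (k : ℕ) (a : ℂ) (ha : |a.im| < Real.pi / 2) : ∃ ε > 0, ∃ C : ℝ,
    ∀ b ∈ Metric.ball a ε, |b.im| < Real.pi / 2 ∧ ∀ z : ℝ,
      ‖(z : ℂ) ^ k * (2 * Complex.sinh (z - b)) / Complex.cosh (z - b) ^ 3‖ ≤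
        C * ((1 + |z|) ^ k * Real.exp (-2 * |z|)) := by
  obtain ⟨ε, hε, c, hc, C, hC, h⟩ := aux_unif a ha
  refine ⟨ε, hε, 2 * C / c ^ 3, fun b hb => ⟨(h b hb).1, fun z => ?_⟩⟩
  obtain ⟨h1, h2⟩ := (h b hb).2 z
  rw [norm_div, norm_mul, norm_mul, norm_pow, norm_pow, Complex.norm_real, Real.norm_eq_abs,
    Complex.norm_ofNat]
  calc _ ≤ (1 + |z|) ^ k * (2 * (C * Real.exp |z|)) / (c * Real.exp |z|) ^ 3 := by
          gcongr; linarith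
    _ = _ := by
        rw [show -2 * |z| = -|z| + -|z| by ring, Real.exp_add, Real.exp_neg]
        field_simp

lemma aux_cont2 (k : ℕ) (a : ℂ) (ha : |a.im| < Real.pi / 2) :
    Continuous (fun z : ℝ => (z : ℂ) ^ k * (2 * Complex.sinh (z - a)) / Complex.cosh (z - a) ^ 3) :=
  Continuous.div (by fun_prop) (by fun_prop) fun z => pow_ne_zero _ (aux_cosh_ne a ha z)

lemma aux_ibp2 (k : ℕ) (a : ℂ) (ha : |a.im| < Real.pi / 2) :
    ∫ z : ℝ, (z : ℂ) ^ (k + 1) * (2 * Complex.sinh (z - a)) / Complex.cosh (z - a) ^ 3 =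
    (k + 1) * ∫ z : ℝ, (z : ℂ) ^ k / (Complex.cosh (z - a) * Complex.cosh (z - a)) := by
  have i1 := ((aux_int1 k a a ha ha).const_mul (k + 1 : ℂ))
  have i2 : Integrable (fun z : ℝ =>
      (z : ℂ) ^ (k + 1) * (2 * Complex.sinh (z - a)) / Complex.cosh (z - a) ^ 3) := by
    obtain ⟨ε, hε, C, h⟩ := aux_int2 (k + 1) a ha
    exact aux_int _ _ (aux_cont2 _ a ha) C (h a (Metric.mem_ball_self hε)).2
  have key := integral_eq_zero_of_hasDerivAt_of_integrable
    (f := fun z : ℝ => (z : ℂ) ^ (k + 1) / (Complex.cosh (z - a) * Complex.cosh (z - a)))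
    (f' := fun z : ℝ => (k + 1) * ((z : ℂ) ^ k / (Complex.cosh (z - a) * Complex.cosh (z - a))) -
       (z : ℂ) ^ (k + 1) * (2 * Complex.sinh (z - a)) / Complex.cosh (z - a) ^ 3) ?_ (i1.sub i2)
       (aux_int1 (k + 1) a a ha ha)
  · rw [integral_sub i1 i2, integral_const_mul] at key
    linear_combination -key
  · intro z
    have h1 := aux_cosh_ne a ha z
    have d1 : HasDerivAt (fun z : ℂ =>
      (z ^ (k + 1) / (Complex.cosh (z - a) * Complex.cosh (z - a)))) _ (z : ℂ) :=
      (((hasDerivAt_pow (k + 1) (z : ℂ)).div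
        ((((hasDerivAt_id (z : ℂ)).sub_const a).ccosh).mul
          (((hasDerivAt_id (z : ℂ)).sub_const a).ccosh)) (mul_ne_zero h1 h1)))
    refine d1.comp_ofReal.congr_deriv ?_
    simp only [id, mul_one, Nat.add_sub_cancel, Nat.cast_add, Nat.cast_one]
    generalize Complex.cosh (z - a) = A at *
    generalize Complex.sinh (z - a) = P at *
    field_simp
    ring

lemma aux_deriv (k : ℕ) (a : ℂ) (ha : |a.im| < Real.pi / 2) :
    HasDerivAt (fun a : ℂ => ∫ z : ℝ, (z : ℂ) ^ (k + 1) / (Complex.cosh (z - a) * Complex.cosh (z - a)))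
    ((k + 1) * ∫ z : ℝ, (z : ℂ) ^ k / (Complex.cosh (z - a) * Complex.cosh (z - a))) a := by
  rw [← aux_ibp2 k a ha]
  obtain ⟨ε, hε, C, h⟩ := aux_int2 (k + 1) a ha
  refine (hasDerivAt_integral_of_dominated_loc_of_deriv_le (μ := volume)
    (F := fun (a : ℂ) (z : ℝ) => (z : ℂ) ^ (k + 1) / (Complex.cosh (z - a) * Complex.cosh (z - a)))
    (F' := fun (a : ℂ) (z : ℝ) =>
      (z : ℂ) ^ (k + 1) * (2 * Complex.sinh (z - a)) / Complex.cosh (z - a) ^ 3)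
    (bound := fun z => C * ((1 + |z|) ^ (k + 1) * Real.exp (-2 * |z|)))
    (Metric.ball_mem_nhds a hε) ?_ ?_ ?_ ?_ ?_ ?_).2
  · filter_upwards [Metric.ball_mem_nhds a hε] with b hb
    exact (aux_int1 (k + 1) b b (h b hb).1 (h b hb).1).aestronglyMeasurable
  · exact aux_int1 (k + 1) a a ha ha
  · exact (aux_cont2 _ a ha).aestronglyMeasurable
  · exact ae_of_all _ fun z b hb => (h b hb).2 z
  · exact (aux_int0 (k + 1)).const_mul C
  · refine ae_of_all _ fun z b hb => ?_
    have h1 := aux_cosh_ne b (h b hb).1 z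
    have d1 : HasDerivAt (fun b : ℂ =>
      ((z : ℂ) ^ (k + 1) / (Complex.cosh (z - b) * Complex.cosh (z - b)))) _ b :=
      (((hasDerivAt_const b ((z : ℂ) ^ (k + 1))).div
        ((((hasDerivAt_id b).const_sub (z : ℂ)).ccosh).mul
          (((hasDerivAt_id b).const_sub (z : ℂ)).ccosh)) (mul_ne_zero h1 h1)))
    refine d1.congr_deriv ?_
    simp only [id]
    generalize Complex.cosh (z - b) = A at *
    generalize Complex.sinh (z - b) = P at *
    field_simp
    ring

lemma aux_H0 (a : ℂ) (ha : |a.im| < Real.pi / 2) :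
    ∫ z : ℝ, (z : ℂ) ^ 0 / (Complex.cosh (z - a) * Complex.cosh (z - a)) = 2 := by
  obtain ⟨ε, hε, c, hc, C, hC, h⟩ := aux_unif a ha
  have hb := (h a (Metric.mem_ball_self hε)).2
  have hlim : Filter.Tendsto (fun z : ℝ => Real.exp |a.re| / c * Real.exp (-|z|))
      (Filter.atTop ⊔ Filter.atBot) (nhds 0) := by
    rw [← mul_zero (Real.exp |a.re| / c)]
    apply Filter.Tendsto.const_mul
    apply Real.tendsto_exp_atBot.comp
    apply Filter.tendsto_neg_atTop_atBot.comp
    exact Filter.Tendsto.sup Filter.tendsto_abs_atTop_atTop Filter.tendsto_abs_atBot_atTop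
  have key := integral_of_hasDerivAt_of_tendsto
    (f := fun z : ℝ => Complex.sinh (z - a) / Complex.cosh (z - a))
    (f' := fun z : ℝ => (z : ℂ) ^ 0 / (Complex.cosh (z - a) * Complex.cosh (z - a)))
    (m := -1) (n := 1) ?_ (aux_int1 0 a a ha ha) ?_ ?_
  · rw [key]; norm_num
  · intro z
    have h1 := aux_cosh_ne a ha z
    have d1 : HasDerivAt (fun z : ℂ => Complex.sinh (z - a) / Complex.cosh (z - a)) _ (z : ℂ) :=
      (((hasDerivAt_id (z : ℂ)).sub_const a).csinh).div
          (((hasDerivAt_id (z : ℂ)).sub_const a).ccosh) h1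
    refine d1.comp_ofReal.congr_deriv ?_
    have q1 := Complex.cosh_sq (z - a)
    simp only [id, mul_one]
    field_simp
    linear_combination q1
  · rw [← tendsto_sub_nhds_zero_iff]
    refine squeeze_zero_norm' ?_ (hlim.mono_left le_sup_right)
    filter_upwards [Filter.eventually_le_atBot 0] with z hz
    have h1 := aux_cosh_ne a ha z
    have e : Complex.sinh (z - a) / Complex.cosh (z - a) - (-1) =
      Complex.exp (z - a) / Complex.cosh (z - a) := by
      rw [← Complex.cosh_add_sinh]; field_simp; ring
    rw [e, norm_div, Complex.norm_exp]
    calc _ ≤ (Real.exp |a.re| * Real.exp z) / (c * Real.exp |z|) := by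
          gcongr
          · rw [← Real.exp_add, Real.exp_le_exp]; simp; linarith [neg_le_abs a.re]
          · exact (hb z).1
      _ ≤ (Real.exp |a.re| * 1) / (c * Real.exp |z|) := by
          gcongr; exact Real.exp_le_one_iff.2 hz
      _ = _ := by rw [Real.exp_neg]; field_simp
  · rw [← tendsto_sub_nhds_zero_iff]
    refine squeeze_zero_norm' ?_ (hlim.mono_left le_sup_left)
    filter_upwards [Filter.eventually_ge_atTop 0] with z hz
    have h1 := aux_cosh_ne a ha z
    have e : Complex.sinh (z - a) / Complex.cosh (z - a) - 1 =
      - (Complex.exp (-(z - a)) / Complex.cosh (z - a)) := by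
      rw [← Complex.cosh_sub_sinh]; field_simp; ring
    rw [e, norm_neg, norm_div, Complex.norm_exp]
    calc _ ≤ (Real.exp |a.re| * Real.exp (-z)) / (c * Real.exp |z|) := by
          gcongr
          · rw [← Real.exp_add, Real.exp_le_exp]; simp; linarith [le_abs_self a.re]
          · exact (hb z).1
      _ ≤ (Real.exp |a.re| * 1) / (c * Real.exp |z|) := by
          gcongr; exact Real.exp_le_one_iff.2 (by linarith)
      _ = _ := by rw [Real.exp_neg]; field_simp

lemma aux_anti (k : ℕ) (p : Polynomial ℂ) (hd : p.natDegree = k) (hm : p.Monic) (c : ℂ) :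
    ∃ q : Polynomial ℂ, q.natDegree = k + 1 ∧ q.Monic ∧ q.eval 0 = c ∧
      Polynomial.derivative q = Polynomial.C ((k : ℂ) + 1) * p := by
  set r : Polynomial ℂ := ∑ i ∈ Finset.range k,
    Polynomial.C ((k + 1) * p.coeff i / (i + 1)) * Polynomial.X ^ (i + 1) + Polynomial.C c with hr
  have hrd : r.degree < ((k + 1 : ℕ) : WithBot ℕ) := by
    refine (Polynomial.degree_add_le _ _).trans_lt (max_lt ?_ ?_)
    · refine (Polynomial.degree_sum_le _ _).trans_lt ?_
      rw [Finset.sup_lt_iff (WithBot.bot_lt_coe _)]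
      intro i hi
      refine (Polynomial.degree_C_mul_X_pow_le _ _).trans_lt ?_
      have := Finset.mem_range.1 hi
      exact_mod_cast (by omega : i + 1 < k + 1)
    · exact Polynomial.degree_C_le.trans_lt (by exact_mod_cast Nat.succ_pos k)
  refine ⟨Polynomial.X ^ (k + 1) + r, ?_, Polynomial.monic_X_pow_add hrd, ?_, ?_⟩
  · rw [Polynomial.natDegree_add_eq_left_of_degree_lt (by rwa [Polynomial.degree_X_pow]), Polynomial.natDegree_X_pow]
  · simp [hr, Polynomial.eval_finsetSum]
  · have hp : p = ∑ i ∈ Finset.range k, Polynomial.C (p.coeff i) * Polynomial.X ^ i +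
        Polynomial.X ^ k := by
      conv_lhs => rw [p.as_sum_range_C_mul_X_pow, hd, Finset.sum_range_succ]
      have : p.coeff k = 1 := by rw [← hd]; exact hm
      rw [this]; simp
    conv_rhs => rw [hp]
    simp only [hr, Polynomial.derivative_add, Polynomial.derivative_sum, Polynomial.derivative_C,
      Polynomial.derivative_X_pow, Polynomial.derivative_C_mul_X_pow, mul_add, Finset.mul_sum,
      Nat.add_sub_cancel, add_zero]
    rw [add_comm]
    congr 1
    · refine Finset.sum_congr rfl fun i _ => ?_
      rw [← mul_assoc, ← Polynomial.C_mul]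
      congr 2
      have : (i : ℂ) + 1 ≠ 0 := Nat.cast_add_one_ne_zero i
      push_cast; field_simp
    · push_cast; rfl

lemma aux_poly (k : ℕ) : ∃ p : Polynomial ℂ, p.natDegree = k ∧ p.Monic ∧
    ∀ a : ℂ, |a.im| < Real.pi / 2 →
      ∫ z : ℝ, (z : ℂ) ^ k / (Complex.cosh (z - a) * Complex.cosh (z - a)) = 2 * p.eval a := by
  induction k with
  | zero => exact ⟨1, by simp, Polynomial.monic_one, fun a ha => by rw [aux_H0 a ha]; simp⟩
  | succ k ih =>
    obtain ⟨p, hd, hm, hp⟩ := ih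
    obtain ⟨q, hqd, hqm, hq0, hq⟩ := aux_anti k p hd hm
      ((∫ z : ℝ, (z : ℂ) ^ (k + 1) / (Complex.cosh (z - 0) * Complex.cosh (z - 0))) / 2)
    refine ⟨q, hqd, hqm, fun a ha => ?_⟩
    set s : Set ℂ := {a : ℂ | |a.im| < Real.pi / 2} with hs
    have hso : IsOpen s := isOpen_lt (by fun_prop) (by fun_prop)
    have hsc : Convex ℝ s := by
      have : s = Complex.imLm ⁻¹' (Metric.ball 0 (Real.pi / 2)) := by
        ext x; simp [hs]
      rw [this]
      exact (convex_ball _ _).linear_preimage _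
    have h0 : (0 : ℂ) ∈ s := by simp [hs, Real.pi_pos]
    have hq' : ∀ x, HasDerivAt (fun x => 2 * q.eval x) (2 * (((k : ℂ) + 1) * p.eval x)) x := by
      intro x
      have := (q.hasDerivAt x).const_mul 2
      rwa [hq, Polynomial.eval_mul, Polynomial.eval_C] at this
    refine hso.eqOn_of_deriv_eq hsc.isPreconnected ?_ ?_ ?_ h0 ?_ ha
      (f := fun a : ℂ => ∫ z : ℝ, (z : ℂ) ^ (k + 1) / (Complex.cosh (z - a) * Complex.cosh (z - a)))
      (g := fun a => 2 * q.eval a)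
    · exact fun x hx => (aux_deriv k x hx).differentiableAt.differentiableWithinAt
    · exact fun x hx => (hq' x).differentiableAt.differentiableWithinAt
    · intro x hx
      rw [(aux_deriv k x hx).deriv, (hq' x).deriv, hp x hx]; ring
    · simp only [hq0]; ring

lemma aux_pairs {n : ℕ} (f : Fin n → Fin n → ℂ) :
    ∏ q ∈ Finset.univ.filter (fun q : Fin n × Fin n => q.1 < q.2), f q.1 q.2 =
      ∏ i, ∏ j ∈ Finset.Ioi i, f i j := by
  rw [Finset.prod_filter, Fintype.prod_prod_type]
  refine Finset.prod_congr rfl fun i _ => ?_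
  rw [← Finset.prod_filter]
  congr 1
  ext j; simp

lemma aux_pairs_succ {M : Type*} [CommMonoid M] {n : ℕ} (f : Fin (n + 1) → Fin (n + 1) → M) :
    ∏ i, ∏ j ∈ Finset.Ioi i, f i j =
      (∏ j : Fin n, f 0 j.succ) * ∏ i : Fin n, ∏ j ∈ Finset.Ioi i, f i.succ j.succ := by
  rw [Fin.prod_univ_succ, Fin.prod_Ioi_zero]
  congr 1
  exact Finset.prod_congr rfl fun i _ => Fin.prod_Ioi_succ _ _

lemma aux_det_succ {n : ℕ} (A : Matrix (Fin (n + 1)) (Fin (n + 1)) ℂ)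
    (h : ∀ i : Fin n, A i.succ 0 = 0) :
    A.det = A 0 0 * (A.submatrix Fin.succ Fin.succ).det := by
  rw [Matrix.det_succ_column_zero, Fin.sum_univ_succ]
  simp [h]

lemma aux_cauchy {n : ℕ} (t z : Fin n → ℂ) (h : ∀ i j, Complex.cosh (t i - z j) ≠ 0) :
    (Matrix.of fun i j => (Complex.cosh (t i - z j))⁻¹).det * ∏ i, ∏ j, Complex.cosh (t i - z j) =
    (∏ i, ∏ j ∈ Finset.Ioi i, Complex.sinh (t i - t j)) *
      ∏ i, ∏ j ∈ Finset.Ioi i, Complex.sinh (z i - z j) := by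
  induction n with
  | zero => simp
  | succ n ih =>
    have ih' := ih (fun i => t i.succ) (fun i => z i.succ) (fun i j => h _ _)
    set c : Fin (n + 1) → ℂ := Fin.cons 0 fun i : Fin n =>
      Complex.cosh (t 0 - z 0) / Complex.cosh (t i.succ - z 0) with hc
    set A : Matrix (Fin (n + 1)) (Fin (n + 1)) ℂ := Matrix.of fun i j => (Complex.cosh (t i - z j))⁻¹ with hA
    set B : Matrix (Fin (n + 1)) (Fin (n + 1)) ℂ := Matrix.of fun i j => A i j - c i * A 0 j with hB
    have hAB : A.det = B.det := by
      apply Matrix.det_eq_of_forall_row_eq_smul_add_const c 0 (by simp [hc])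
      intro i j
      simp [hB, hc]
    have key : ∀ i j, B (Fin.succ i) j = (Complex.sinh (t 0 - t i.succ) / Complex.cosh (t i.succ - z 0)) *
        ((Complex.sinh (z 0 - z j) / Complex.cosh (t 0 - z j)) * (Complex.cosh (t i.succ - z j))⁻¹) := by
      intro i j
      have h1 := h i.succ 0
      have h2 := h 0 j
      have h3 := h i.succ j
      have e : Complex.cosh (t i.succ - z 0) * Complex.cosh (t 0 - z j) -
          Complex.cosh (t 0 - z 0) * Complex.cosh (t i.succ - z j) =
          Complex.sinh (t 0 - t i.succ) * Complex.sinh (z 0 - z j) := by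
        simp only [Complex.cosh_sub, Complex.sinh_sub]
        ring
      simp only [hB, hA, hc, Matrix.of_apply, Fin.cons_succ]
      field_simp
      linear_combination e
    rw [hAB, aux_det_succ B (fun i => by rw [key]; simp)]
    have hsub : (B.submatrix Fin.succ Fin.succ).det =
        (∏ i : Fin n, (Complex.sinh (t 0 - t i.succ) / Complex.cosh (t i.succ - z 0))) *
        ((∏ j : Fin n, (Complex.sinh (z 0 - z j.succ) / Complex.cosh (t 0 - z j.succ))) *
        (Matrix.of fun i j : Fin n => (Complex.cosh (t i.succ - z j.succ))⁻¹).det) := by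
      rw [← Matrix.det_mul_row, ← Matrix.det_mul_column]
      congr 1
      ext i j
      simp [key]
    have hB0 : B 0 0 = (Complex.cosh (t 0 - z 0))⁻¹ := by simp [hB, hc, hA]
    rw [hsub, hB0, aux_pairs_succ, aux_pairs_succ, Fin.prod_univ_succ, Fin.prod_univ_succ]
    have hs : ∏ i : Fin n, ∏ j, Complex.cosh (t i.succ - z j) =
      (∏ i : Fin n, Complex.cosh (t i.succ - z 0)) *
        ∏ i : Fin n, ∏ j : Fin n, Complex.cosh (t i.succ - z j.succ) := by
      rw [← Finset.prod_mul_distrib]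
      exact Finset.prod_congr rfl fun i _ => Fin.prod_univ_succ _
    rw [hs, Finset.prod_div_distrib, Finset.prod_div_distrib]
    have n1 := h 0 0
    have n2 : ∏ i : Fin n, Complex.cosh (t i.succ - z 0) ≠ 0 :=
      Finset.prod_ne_zero_iff.2 fun i _ => h _ _
    have n3 : ∏ i : Fin n, Complex.cosh (t 0 - z i.succ) ≠ 0 :=
      Finset.prod_ne_zero_iff.2 fun i _ => h _ _
    generalize (Matrix.of fun i j : Fin n => (Complex.cosh (t i.succ - z j.succ))⁻¹).det = D at *
    field_simp
    linear_combination ((∏ j : Fin n, Complex.sinh (t 0 - t j.succ)) *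
      (∏ j : Fin n, Complex.sinh (z 0 - z j.succ))) * ih'

lemma aux_andreief {N : ℕ} (φ ψ : Fin N → ℝ → ℂ)
    (h : ∀ i j, Integrable (fun z => φ i z * ψ j z)) :
    ∫ z : Fin N → ℝ, (Matrix.of fun i k => φ i (z k)).det * (Matrix.of fun j k => ψ j (z k)).det =
    (N.factorial : ℂ) * (Matrix.of fun i j => ∫ z, φ i z * ψ j z).det := by
  have e1 : ∀ z : Fin N → ℝ,
      (Matrix.of fun i k => φ i (z k)).det * (Matrix.of fun j k => ψ j (z k)).det =
      ∑ τ : Equiv.Perm (Fin N), ∑ σ : Equiv.Perm (Fin N),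
        ((Equiv.Perm.sign τ : ℤ) : ℂ) * ((Equiv.Perm.sign σ : ℤ) : ℂ) *
          ∏ k, (φ (σ k) (z k) * ψ (τ k) (z k)) := by
    intro z
    rw [mul_comm, Matrix.det_apply', Matrix.det_apply', Finset.sum_mul_sum]
    refine Finset.sum_congr rfl fun τ _ => Finset.sum_congr rfl fun σ _ => ?_
    simp only [Matrix.of_apply, Finset.prod_mul_distrib]
    ring
  have hi : ∀ σ τ : Equiv.Perm (Fin N), Integrable (fun z : Fin N → ℝ =>
      ((Equiv.Perm.sign τ : ℤ) : ℂ) * ((Equiv.Perm.sign σ : ℤ) : ℂ) *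
          ∏ k, (φ (σ k) (z k) * ψ (τ k) (z k))) := fun σ τ =>
    (Integrable.fintype_prod (f := fun k z => φ (σ k) z * ψ (τ k) z)
      (fun k => h (σ k) (τ k))).const_mul _
  simp only [e1]
  rw [integral_finsetSum _ fun τ _ => integrable_finsetSum _ fun σ _ => hi σ τ]
  have e2 : ∀ τ : Equiv.Perm (Fin N), ∫ z : Fin N → ℝ, ∑ σ : Equiv.Perm (Fin N),
        ((Equiv.Perm.sign τ : ℤ) : ℂ) * ((Equiv.Perm.sign σ : ℤ) : ℂ) *
          ∏ k, (φ (σ k) (z k) * ψ (τ k) (z k)) =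
        (Matrix.of fun i j => ∫ z, φ i z * ψ j z).det := by
    intro τ
    rw [integral_finsetSum _ fun σ _ => hi σ τ]
    have hp := Matrix.det_permute' τ (Matrix.of fun i j => ∫ z, φ i z * ψ j z)
    have hs : ((Equiv.Perm.sign τ : ℤ) : ℂ) * ((Equiv.Perm.sign τ : ℤ) : ℂ) = 1 := by
      rw [← Int.cast_mul, ← Units.val_mul, Int.units_mul_self]; simp
    rw [← one_mul (Matrix.det _), ← hs, mul_assoc, ← hp, Matrix.det_apply', Finset.mul_sum]
    refine Finset.sum_congr rfl fun σ _ => ?_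
    rw [integral_const_mul, integral_fintype_prod_volume_eq_prod
      (fun k z => φ (σ k) z * ψ (τ k) z)]
    simp only [Matrix.submatrix_apply, Matrix.of_apply, id]
    ring
  simp only [e2]
  simp [Fintype.card_perm]

lemma aux_moment (N : ℕ) : ∃ p : Fin (N + 1) → Polynomial ℂ, (∀ i, (p i).natDegree = i) ∧
    (∀ i, (p i).Monic) ∧ ∀ (i : Fin N) (a b : ℂ), |a.im| < Real.pi / 2 → |b.im| < Real.pi / 2 →
      Complex.sinh (b - a) ≠ 0 →
      ∫ z : ℝ, (-(z : ℂ)) ^ (i : ℕ) * ((Complex.cosh (b - z))⁻¹ * (Complex.cosh (a - z))⁻¹) =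
        (2 / Complex.sinh (b - a)) * (((i : ℕ) + 1 : ℂ)⁻¹ *
          ((p i.succ).eval (-a) - (p i.succ).eval (-b))) := by
  choose p hd hm hp using aux_poly
  refine ⟨fun i => p i, fun i => hd i, fun i => hm i, fun i a b ha hb hs => ?_⟩
  have ha' : |(-a).im| < Real.pi / 2 := by simpa using ha
  have hb' : |(-b).im| < Real.pi / 2 := by simpa using hb
  have h1 := aux_ibp1 i (-a) (-b) ha' hb'
  rw [hp _ _ ha', hp _ _ hb'] at h1
  have e : ∫ z : ℝ, (-(z : ℂ)) ^ (i : ℕ) * ((Complex.cosh (b - z))⁻¹ * (Complex.cosh (a - z))⁻¹) =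
      ∫ z : ℝ, (z : ℂ) ^ (i : ℕ) / (Complex.cosh (z - -a) * Complex.cosh (z - -b)) := by
    rw [← integral_neg_eq_self]
    congr 1
    ext z
    rw [div_eq_mul_inv, mul_inv]
    push_cast
    rw [neg_neg, sub_neg_eq_add, sub_neg_eq_add, sub_neg_eq_add, sub_neg_eq_add, add_comm a, add_comm b,
      mul_comm (Complex.cosh (z + b))⁻¹]
  rw [e]
  have e2 : -a - -b = b - a := by ring
  rw [e2] at h1
  have hk : ((i : ℕ) : ℂ) + 1 ≠ 0 := Nat.cast_add_one_ne_zero _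
  simp only [Fin.val_succ]
  field_simp
  linear_combination h1

lemma aux_detD {N : ℕ} (p : Fin (N + 1) → Polynomial ℂ) (hd : ∀ i, (p i).natDegree = i)
    (hm : ∀ i, (p i).Monic) (v : Fin (N + 1) → ℂ) :
    (Matrix.of fun i j : Fin N => (p i.succ).eval (v j.succ) - (p i.succ).eval (v 0)).det =
    ∏ i, ∏ j ∈ Finset.Ioi i, (v j - v i) := by
  rw [← Matrix.det_vandermonde, Matrix.det_eval_matrixOfPolynomials_eq_det_vandermonde v p hd hm]
  set B : Matrix (Fin (N + 1)) (Fin (N + 1)) ℂ := Matrix.of fun i j =>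
    (p j).eval (v i) - (Fin.cons 0 (fun _ => 1) : Fin (N + 1) → ℂ) i * (p j).eval (v 0) with hB
  have h0 : p 0 = 1 := (hm 0).natDegree_eq_zero.1 (by simpa using hd 0)
  rw [Matrix.det_eq_of_forall_row_eq_smul_add_const (B := B) (Fin.cons 0 fun _ => 1) 0 (by simp)
    (fun i j => by simp [hB]), aux_det_succ B (fun i => by simp [hB, h0]), ← Matrix.det_transpose]
  have : B 0 0 = 1 := by simp [hB, h0]
  rw [this, one_mul]
  congr 1
  ext i j
  simp [hB]

lemma aux_sinh_ne (t s : ℂ) (ht : |t.im| < Real.pi / 2) (hs : |s.im| < Real.pi / 2) (h : t ≠ s) :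
    Complex.sinh (t - s) ≠ 0 := by
  intro h0
  have h1 : Complex.sin ((t - s) * I) = 0 := by rw [Complex.sin_mul_I, h0, zero_mul]
  obtain ⟨k, hk⟩ := Complex.sin_eq_zero_iff.1 h1
  have hr := congrArg Complex.re hk
  have hi := congrArg Complex.im hk
  simp at hr hi
  have hk0 : k = 0 := by
    have a1 := abs_lt.1 ht
    have a2 := abs_lt.1 hs
    have p := Real.pi_pos
    have : (k : ℝ) < 1 := by by_contra hh; push Not at hh; nlinarith
    have h2 : (-1 : ℝ) < k := by by_contra hh; push Not at hh; nlinarith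
    have : k < 1 := by exact_mod_cast this
    have : -1 < k := by exact_mod_cast h2
    omega
  apply h
  rw [hk0] at hk
  simpa [sub_eq_zero] using hk

lemma aux_pairs_pow {n : ℕ} (h : Fin n → ℝ) :
    (∏ i, ∏ j ∈ Finset.Ioi i, h i * h j) * ∏ i, h i = ∏ i, h i ^ n := by
  induction n with
  | zero => simp
  | succ n ih =>
    have := ih fun i => h i.succ
    simp only [pow_succ, Finset.prod_mul_distrib (f := fun i => h i ^ n)]
    rw [aux_pairs_succ, Finset.prod_mul_distrib, Fin.prod_univ_succ, Fin.prod_univ_succ (fun i => h i ^ n),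
      ← this, Finset.prod_const, Finset.card_univ, Fintype.card_fin]
    ring

lemma aux_integrable (N : ℕ) (hN : 1 ≤ N) (t : Fin (N + 1) → ℂ)
    (ht : ∀ j : Fin (N + 1), |(t j).im| < Real.pi / 2) :
    Integrable (fun z : Fin N → ℝ =>
      (∏ i, ∏ j ∈ Finset.Ioi i, ((z i : ℂ) - (z j : ℂ)) * Complex.sinh ((z i : ℂ) - (z j : ℂ))) /
        ∏ j : Fin (N + 1), ∏ k : Fin N, Complex.cosh (t j - (z k : ℂ))) := by
  have hc : ∀ j, ∃ c > 0, ∀ z : ℝ, c * Real.exp |z| ≤ ‖Complex.cosh (t j - z)‖ := by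
    intro j
    obtain ⟨ε, hε, c, hc, C, hC, h⟩ := aux_unif (t j) (ht j)
    refine ⟨c, hc, fun z => ?_⟩
    rw [← neg_sub, Complex.cosh_neg]
    exact ((h _ (Metric.mem_ball_self hε)).2 z).1
  choose c hc0 hc using hc
  have hne : ∀ j (z : ℝ), Complex.cosh (t j - z) ≠ 0 := by
    intro j z
    rw [← neg_sub, Complex.cosh_neg]
    exact aux_cosh_ne _ (ht j) z
  obtain ⟨n, rfl⟩ : ∃ n, N = n + 1 := ⟨N - 1, by omega⟩
  have hI : Integrable (fun z : Fin (n + 1) → ℝ => ∏ k, ((∏ j, c j)⁻¹ *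
      ((1 + |z k|) ^ n * Real.exp (-2 * |z k|)))) :=
    Integrable.fintype_prod (f := fun _ x => ((∏ j, c j)⁻¹ *
      ((1 + |x|) ^ n * Real.exp (-2 * |x|)))) fun _ => (aux_int0 n).const_mul _
  refine Integrable.mono' hI (Continuous.aestronglyMeasurable ?_) (ae_of_all _ fun z => ?_)
  · refine Continuous.div (by fun_prop) (by fun_prop) fun z => ?_
    exact Finset.prod_ne_zero_iff.2 fun j _ => Finset.prod_ne_zero_iff.2 fun k _ => hne j (z k)
  · set h : Fin (n + 1) → ℝ := fun k => (1 + |z k|) * Real.exp |z k| with hh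
    have hpos : ∀ k, 0 < h k := fun k => by positivity
    have e1 : ‖∏ i, ∏ j ∈ Finset.Ioi i, ((z i : ℂ) - (z j : ℂ)) * Complex.sinh ((z i : ℂ) - (z j : ℂ))‖ ≤
        ∏ i, ∏ j ∈ Finset.Ioi i, h i * h j := by
      rw [norm_prod]
      refine Finset.prod_le_prod (fun _ _ => norm_nonneg _) fun i _ => ?_
      rw [norm_prod]
      refine Finset.prod_le_prod (fun _ _ => norm_nonneg _) fun j _ => ?_
      rw [norm_mul]
      have b1 : ‖(z i : ℂ) - z j‖ ≤ (1 + |z i|) * (1 + |z j|) := by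
        rw [← Complex.ofReal_sub, Complex.norm_real, Real.norm_eq_abs]
        have := abs_sub (z i) (z j)
        nlinarith [abs_nonneg (z i), abs_nonneg (z j), mul_nonneg (abs_nonneg (z i)) (abs_nonneg (z j))]
      have b2 : ‖Complex.sinh ((z i : ℂ) - z j)‖ ≤ Real.exp |z i| * Real.exp |z j| := by
        refine (aux_sinh_upper _).trans ?_
        rw [← Real.exp_add, Real.exp_le_exp]
        simpa using abs_sub (z i) (z j)
      calc _ ≤ ((1 + |z i|) * (1 + |z j|)) * (Real.exp |z i| * Real.exp |z j|) := by gcongr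
        _ = _ := by simp only [hh]; ring
    have e2 : ∏ i, ∏ j ∈ Finset.Ioi i, h i * h j = ∏ k, h k ^ n := by
      have := aux_pairs_pow h
      simp only [pow_succ, Finset.prod_mul_distrib (f := fun i => h i ^ n)] at this
      exact mul_right_cancel₀ (Finset.prod_ne_zero_iff.2 fun k _ => (hpos k).ne') this
    have e3 : ∏ k : Fin (n + 1), ∏ j : Fin (n + 1 + 1), (c j * Real.exp |z k|) ≤
        ‖∏ j : Fin (n + 1 + 1), ∏ k : Fin (n + 1), Complex.cosh (t j - (z k : ℂ))‖ := by
      rw [Finset.prod_comm, norm_prod]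
      refine Finset.prod_le_prod (fun j _ => Finset.prod_nonneg fun k _ => ?_) fun j _ => ?_
      · have := hc0 j; positivity
      rw [norm_prod]
      refine Finset.prod_le_prod (fun k _ => ?_) fun k _ => hc j (z k)
      have := hc0 j; positivity
    rw [norm_div]
    have hcp : 0 < ∏ j, c j := Finset.prod_pos fun j _ => hc0 j
    have hp3 : 0 < ∏ k : Fin (n + 1), ∏ j : Fin (n + 1 + 1), (c j * Real.exp |z k|) :=
      Finset.prod_pos fun k _ => Finset.prod_pos fun j _ => mul_pos (hc0 j) (Real.exp_pos _)
    calc _ ≤ (∏ k, h k ^ n) / ∏ k : Fin (n + 1), ∏ j : Fin (n + 1 + 1), (c j * Real.exp |z k|) := by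
          rw [← e2]
          exact div_le_div₀ ((norm_nonneg _).trans e1) e1 hp3 e3
      _ = _ := by
          rw [← Finset.prod_div_distrib]
          refine Finset.prod_congr rfl fun k _ => ?_
          rw [Finset.prod_mul_distrib, Finset.prod_const, Finset.card_univ, Fintype.card_fin, hh,
            show -2 * |z k| = -|z k| + -|z k| by ring, Real.exp_add, Real.exp_neg]
          have := Real.exp_pos |z k|
          field_simp
          rw [mul_pow]
          ring

lemma aux_main (N : ℕ) (t : Fin (N + 1) → ℂ)
    (ht : ∀ j : Fin (N + 1), |(t j).im| < Real.pi / 2)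
    (hd : ∀ j k : Fin (N + 1), j < k → t j ≠ t k) :
      ∫ z : Fin N → ℝ,
        (∏ i, ∏ j ∈ Finset.Ioi i, ((z i : ℂ) - (z j : ℂ)) * Complex.sinh ((z i : ℂ) - (z j : ℂ))) /
          ∏ j : Fin (N + 1), ∏ k : Fin N, Complex.cosh (t j - (z k : ℂ))
      = (2 : ℂ) ^ N *
        ∏ i, ∏ j ∈ Finset.Ioi i, (t i - t j) / Complex.sinh (t i - t j) := by
  have hne : ∀ j (z : ℝ), Complex.cosh (t j - z) ≠ 0 := by
    intro j z
    rw [← neg_sub, Complex.cosh_neg]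
    exact aux_cosh_ne _ (ht j) z
  have hsn : ∀ i j, i < j → Complex.sinh (t i - t j) ≠ 0 := fun i j hij =>
    aux_sinh_ne _ _ (ht i) (ht j) (hd i j hij)
  set K : ℂ := ∏ i : Fin N, ∏ j ∈ Finset.Ioi i, Complex.sinh (t i.succ - t j.succ) with hK
  have hK0 : K ≠ 0 := Finset.prod_ne_zero_iff.2 fun i _ => Finset.prod_ne_zero_iff.2 fun j hj =>
    hsn _ _ (by simpa using hj)
  set φ : Fin N → ℝ → ℂ := fun i z => (-(z : ℂ)) ^ (i : ℕ) with hφ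
  set ψ : Fin N → ℝ → ℂ := fun j z => (Complex.cosh (t 0 - z))⁻¹ * (Complex.cosh (t j.succ - z))⁻¹ with hψ
  have e1 : ∀ z : Fin N → ℝ,
      (∏ i, ∏ j ∈ Finset.Ioi i, ((z i : ℂ) - (z j : ℂ)) * Complex.sinh ((z i : ℂ) - (z j : ℂ))) /
          ∏ j : Fin (N + 1), ∏ k : Fin N, Complex.cosh (t j - (z k : ℂ)) =
      K⁻¹ * ((Matrix.of fun i k => φ i (z k)).det * (Matrix.of fun j k => ψ j (z k)).det) := by
    intro z
    have v1 : (Matrix.of fun i k => φ i (z k)).det = ∏ i, ∏ j ∈ Finset.Ioi i, ((z i : ℂ) - (z j : ℂ)) := by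
      have := Matrix.det_vandermonde (fun k => -(z k : ℂ))
      rw [← Matrix.det_transpose] at this
      refine Eq.trans ?_ (this.trans ?_)
      · congr 1
      · refine Finset.prod_congr rfl fun i _ => Finset.prod_congr rfl fun j _ => by ring
    have v2 : (Matrix.of fun j k => ψ j (z k)).det =
        (∏ k, (Complex.cosh (t 0 - z k))⁻¹) *
          (Matrix.of fun j k : Fin N => (Complex.cosh (t j.succ - z k))⁻¹).det := by
      rw [← Matrix.det_mul_row]
      congr 1
    have v3 := aux_cauchy (fun j : Fin N => t j.succ) (fun k => (z k : ℂ)) (fun i j => hne _ _)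
    rw [v1, v2, Fin.prod_univ_succ, Finset.prod_inv_distrib]
    have n1 : ∏ k, Complex.cosh (t 0 - z k) ≠ 0 := Finset.prod_ne_zero_iff.2 fun k _ => hne _ _
    have n2 : ∏ i : Fin N, ∏ k, Complex.cosh (t i.succ - z k) ≠ 0 :=
      Finset.prod_ne_zero_iff.2 fun k _ => Finset.prod_ne_zero_iff.2 fun k _ => hne _ _
    simp only [Finset.prod_mul_distrib]
    rw [← hK] at v3
    generalize (Matrix.of fun j k : Fin N => (Complex.cosh (t j.succ - z k))⁻¹).det = D at *
    field_simp
    linear_combination (-∏ i, ∏ j ∈ Finset.Ioi i, ((z i : ℂ) - (z j : ℂ))) * v3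
  simp only [e1]
  rw [integral_const_mul, aux_andreief φ ψ]
  · obtain ⟨p, hpd, hpm, hp⟩ := aux_moment N
    have e2 : (Matrix.of fun i j => ∫ z, φ i z * ψ j z) = Matrix.of fun i j : Fin N =>
        (2 / Complex.sinh (t 0 - t j.succ)) * (Matrix.of (fun i j : Fin N => (((i : ℕ) : ℂ) + 1)⁻¹ *
          (Matrix.of fun i j : Fin N =>
            (p i.succ).eval (-t j.succ) - (p i.succ).eval (-t 0)) i j)) i j := by
      ext i j
      exact hp i (t j.succ) (t 0) (ht _) (ht _) (hsn _ _ (Fin.succ_pos j))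
    rw [e2, Matrix.det_mul_row, Matrix.det_mul_column, aux_detD p hpd hpm (fun i => -t i)]
    have hf : ∏ i : Fin N, (((i : ℕ) : ℂ) + 1)⁻¹ = (N.factorial : ℂ)⁻¹ := by
      rw [Finset.prod_inv_distrib, Fin.prod_univ_eq_prod_range (fun i => (i : ℂ) + 1),
        ← Finset.prod_range_add_one_eq_factorial]
      push_cast; rfl
    have hs : ∀ i j, -t j - -t i = t i - t j := fun i j => by ring
    simp only [hs]
    simp only [hf, Finset.prod_div_distrib]
    rw [aux_pairs_succ (fun i j => Complex.sinh (t i - t j)), ← hK]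
    have hfac : (N.factorial : ℂ) ≠ 0 := by exact_mod_cast N.factorial_ne_zero
    have n3 : ∏ j : Fin N, Complex.sinh (t 0 - t j.succ) ≠ 0 :=
      Finset.prod_ne_zero_iff.2 fun j _ => hsn _ _ (Fin.succ_pos j)
    rw [Finset.prod_const, Finset.card_univ, Fintype.card_fin]
    field_simp
  · intro i j
    have := aux_int1 i (t 0) (t j.succ) (ht _) (ht _)
    have := this.const_mul ((-1) ^ (i : ℕ))
    refine this.congr (ae_of_all _ fun z => ?_)
    simp only [hφ, hψ]
    rw [neg_pow, div_eq_mul_inv, mul_inv, ← Complex.cosh_neg (z - t 0), ← Complex.cosh_neg (z - t j.succ),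
      neg_sub, neg_sub]
    ring

/-- The integral `B_N(t)` (Lemma C.2): absolute convergence for
`|Im t_j| < π/2`, and explicit evaluation when the `t_j` are pairwise distinct. -/
theorem statement2 (N : ℕ) (hN : 1 ≤ N) (t : Fin (N + 1) → ℂ)
    (ht : ∀ j : Fin (N + 1), |(t j).im| < Real.pi / 2) :
    Integrable (fun z : Fin N → ℝ =>
      (∏ q ∈ Finset.univ.filter (fun q : Fin N × Fin N => q.1 < q.2),
        ((z q.1 : ℂ) - (z q.2 : ℂ)) * Complex.sinh ((z q.1 : ℂ) - (z q.2 : ℂ))) /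
        ∏ j : Fin (N + 1), ∏ k : Fin N, Complex.cosh (t j - (z k : ℂ)))
    ∧ ((∀ j k : Fin (N + 1), j < k → t j ≠ t k) →
      ∫ z : Fin N → ℝ,
        (∏ q ∈ Finset.univ.filter (fun q : Fin N × Fin N => q.1 < q.2),
          ((z q.1 : ℂ) - (z q.2 : ℂ)) * Complex.sinh ((z q.1 : ℂ) - (z q.2 : ℂ))) /
          ∏ j : Fin (N + 1), ∏ k : Fin N, Complex.cosh (t j - (z k : ℂ))
      = (2 : ℂ) ^ N *
        ∏ q ∈ Finset.univ.filter (fun q : Fin (N + 1) × Fin (N + 1) => q.1 < q.2),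
          (t q.1 - t q.2) / Complex.sinh (t q.1 - t q.2)) := by
  have h1 := fun z : Fin N → ℝ => aux_pairs (fun i j =>
    ((z i : ℂ) - (z j : ℂ)) * Complex.sinh ((z i : ℂ) - (z j : ℂ)))
  have h2 := aux_pairs (fun i j => (t i - t j) / Complex.sinh (t i - t j))
  simp only [h1, h2]
  exact ⟨aux_integrable N hN t ht, aux_main N t ht⟩
end

section
/- Let N ≥ 1 and let u, t ∈ ℂ^{N+1} satisfy |Re(u_{N+1}−u_i)| < 2 for i = 1,…,N and |Im t_j| < π/2 for j = 1,…,N+1. Then the function z ↦ ∏_{1≤j<k≤N} sinh(z_j−z_k) / ∏_{j=1}^{N+1} ∏_{k=1}^{N} cosh(t_j−z_k) · exp(Σ_{j=1}^{N} z_j (u_{N+1}−u_j)) is Lebesgue integrable on ℝ^N; denote the integral by C_N(u,t). If in addition u_i ≠ u_{N+1} for i = 1,…,N and t_j ≠ t_k for 1 ≤ j < k ≤ N+1, then C_N(u,t) = ∏_{j=1}^{N} (π/sin(π(u_{N+1}−u_j)/2)) · ∏_{1≤j<k≤N+1} (1/sinh(t_j−t_k)) · Σ_{τ∈S_{N+1}}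 sgn(τ) · exp(Σ_{j=1}^{N} t_{τ(j)} (u_{N+1}−u_j)). -/
open MeasureTheory Complex

lemma cc_prod_lt {M : Type*} [CommMonoid M] {n : ℕ} (f : Fin n → Fin n → M) :
    ∏ q ∈ Finset.univ.filter (fun q : Fin n × Fin n => q.1 < q.2), f q.1 q.2
      = ∏ i, ∏ j, if i < j then f i j else 1 := by
  rw [Finset.prod_filter, Fintype.prod_prod_type]

lemma cc_prod_lt_succ {M : Type*} [CommMonoid M] {n : ℕ} (f : Fin (n+1) → Fin (n+1) → M) :
    ∏ q ∈ Finset.univ.filter (fun q : Fin (n+1) × Fin (n+1) => q.1 < q.2), f q.1 q.2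
      = (∏ k : Fin n, f 0 k.succ) *
        ∏ q ∈ Finset.univ.filter (fun q : Fin n × Fin n => q.1 < q.2), f q.1.succ q.2.succ := by
  rw [cc_prod_lt, cc_prod_lt (fun i j => f i.succ j.succ)]
  simp [Fin.prod_univ_succ]

lemma cc_prod_lt_last {n : ℕ} (f : Fin (n+1) → Fin (n+1) → ℂ) :
    ∏ q ∈ Finset.univ.filter (fun q : Fin (n+1) × Fin (n+1) => q.1 < q.2), f q.1 q.2
      = (∏ k : Fin n, f k.castSucc (Fin.last n)) *
        ∏ q ∈ Finset.univ.filter (fun q : Fin n × Fin n => q.1 < q.2),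
          f q.1.castSucc q.2.castSucc := by
  rw [cc_prod_lt, cc_prod_lt (fun i j => f i.castSucc j.castSucc)]
  simp [Fin.prod_univ_castSucc, Fin.castSucc_lt_last, Finset.prod_mul_distrib, Fin.not_lt.2 (Fin.le_last _), mul_comm]

lemma cc_hyp (a b x y : ℂ) : cosh (a - y) * cosh (b - x) - cosh (a - x) * cosh (b - y)
    = sinh (a - b) * sinh (x - y) := by
  simp only [cosh_sub, sinh_sub]
  ring

lemma cc_cauchy : ∀ {n : ℕ} (t z : Fin n → ℂ) (_ : ∀ i j, cosh (t i - z j) ≠ 0),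
    (Matrix.of fun i j => 1 / cosh (t i - z j)).det
    = (∏ q ∈ Finset.univ.filter (fun q : Fin n × Fin n => q.1 < q.2), sinh (t q.1 - t q.2)) *
      (∏ q ∈ Finset.univ.filter (fun q : Fin n × Fin n => q.1 < q.2), sinh (z q.1 - z q.2)) /
      ∏ i, ∏ j, cosh (t i - z j)
  | 0, t, z, _ => by simp
  | n+1, t, z, h => by
    have ih := cc_cauchy (fun i => t i.succ) (fun i => z i.succ) (fun i j => h _ _)
    let A : Matrix (Fin (n+1)) (Fin (n+1)) ℂ := Matrix.of fun i j =>
      if i = 0 then 1 / cosh (t i - z j) else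
        sinh (t 0 - t i) * sinh (z 0 - z j) /
          (cosh (t i - z j) * cosh (t 0 - z j) * cosh (t i - z 0))
    have h1 : A.det = (Matrix.of fun i j => 1 / cosh (t i - z j)).det := by
      apply Matrix.det_eq_of_forall_row_eq_smul_add_const
        (fun i => if i = 0 then 0 else - (cosh (t 0 - z 0) / cosh (t i - z 0))) 0
      · simp
      · intro i j
        by_cases hi : i = 0
        · simp [A, hi]
        · simp only [A, hi, if_false, Matrix.of_apply]
          rw [← cc_hyp]
          have := h i j
          have := h 0 j
          have := h i 0
          field_simp
          ring
    rw [← h1, Matrix.det_succ_column_zero, Fin.sum_univ_succ]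
    have h2 : (A.submatrix (Fin.succAbove 0) Fin.succ) = Matrix.of fun i j =>
        (sinh (t 0 - t i.succ) / cosh (t i.succ - z 0)) *
        ((Matrix.of fun i j => (sinh (z 0 - z j.succ) / cosh (t 0 - z j.succ)) *
          (Matrix.of fun i j : Fin n => 1 / cosh (t i.succ - z j.succ)) i j) : Matrix (Fin n) (Fin n) ℂ) i j := by
      ext i j
      simp [A, Fin.succ_ne_zero]
      have := h i.succ j.succ
      have := h 0 j.succ
      have := h i.succ 0
      field_simp
    rw [h2, Matrix.det_mul_column, Matrix.det_mul_row, ih, cc_prod_lt_succ (fun i j => sinh (t i - t j)),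
      cc_prod_lt_succ (fun i j => sinh (z i - z j))]
    simp only [Fin.prod_univ_succ, Finset.prod_mul_distrib, Finset.prod_div_distrib]
    have e : ∀ i : Fin n, A i.succ 0 = 0 := by intro i; simp [A]
    simp only [e]
    simp [A]
    ring

lemma cc_border {n : ℕ} (B : Matrix (Fin (n+1)) (Fin (n+1)) ℂ) (h : ∀ i, B i (Fin.last n) = 1) :
    B.det = (Matrix.of fun i j : Fin n =>
      B i.castSucc j.castSucc - B (Fin.last n) j.castSucc).det := by
  let A : Matrix (Fin (n+1)) (Fin (n+1)) ℂ := Matrix.of fun i j =>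
      if i = Fin.last n then B i j else B i j - B (Fin.last n) j
  have h1 : A.det = B.det := by
    apply Matrix.det_eq_of_forall_row_eq_smul_add_const
        (fun i => if i = Fin.last n then 0 else - 1) (Fin.last n)
    · simp
    · intro i j
      by_cases hi : i = Fin.last n
      · simp [A, hi]
      · simp [A, hi]; ring
  rw [← h1, Matrix.det_succ_column _ (Fin.last n), Fin.sum_univ_castSucc]
  have e : ∀ i : Fin n, A i.castSucc (Fin.last n) = 0 := by
    intro i; simp [A, h]
  simp only [e]
  simp [A, h, ← two_mul]
  congr 1
  ext i j
  simp [Fin.ne_of_lt (Fin.castSucc_lt_last _)]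

lemma cc_prod_pow : ∀ {n : ℕ} (g : Fin n → ℝ),
    (∏ q ∈ Finset.univ.filter (fun q : Fin n × Fin n => q.1 < q.2), g q.1 * g q.2) * ∏ k, g k
      = ∏ k, g k ^ n
  | 0, g => by simp
  | n+1, g => by
    have ih := cc_prod_pow (fun i => g i.succ)
    rw [cc_prod_lt_succ (fun i j => g i * g j), Fin.prod_univ_succ, Fin.prod_univ_succ]
    simp only [Finset.prod_mul_distrib, pow_succ] at ih ⊢
    rw [← ih]
    simp
    ring

section
open Filter Topology

lemma cc_ncosh (w : ℂ) : ‖cosh w‖ ^ 2 = Real.sinh w.re ^ 2 + Real.cos w.im ^ 2 := by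
  rw [← Complex.normSq_eq_norm_sq]
  conv_lhs => rw [← re_add_im w]
  rw [Complex.cosh_add, cosh_mul_I, sinh_mul_I, normSq_apply]
  simp only [← ofReal_cosh, ← ofReal_sinh, ← ofReal_cos, ← ofReal_sin]
  simp only [add_re, add_im, mul_re, mul_im, ofReal_re, ofReal_im, I_re, I_im]
  have h1 := Real.cosh_sq w.re
  have h2 := Real.sin_sq_add_cos_sq w.im
  linear_combination (Real.cos w.im)^2 * h1 + (Real.sinh w.re)^2 * h2

lemma cc_nsinh (w : ℂ) : ‖sinh w‖ ^ 2 = Real.sinh w.re ^ 2 + Real.sin w.im ^ 2 := by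
  rw [← Complex.normSq_eq_norm_sq]
  conv_lhs => rw [← re_add_im w]
  rw [Complex.sinh_add, cosh_mul_I, sinh_mul_I, normSq_apply]
  simp only [← ofReal_cosh, ← ofReal_sinh, ← ofReal_cos, ← ofReal_sin]
  simp only [add_re, add_im, mul_re, mul_im, ofReal_re, ofReal_im, I_re, I_im]
  have h1 := Real.cosh_sq w.re
  have h2 := Real.sin_sq_add_cos_sq w.im
  linear_combination (Real.sin w.im)^2 * h1 + (Real.sinh w.re)^2 * h2

lemma cc_sinh_ne {w : ℂ} (h : |w.im| < Real.pi) (h0 : w ≠ 0) : sinh w ≠ 0 := by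
  intro hs
  have := cc_nsinh w
  rw [hs] at this
  have h1 : Real.sinh w.re = 0 := by
    simp at this; nlinarith [sq_nonneg (Real.sinh w.re), sq_nonneg (Real.sin w.im)]
  have h2 : Real.sin w.im = 0 := by
    simp at this; nlinarith [sq_nonneg (Real.sinh w.re), sq_nonneg (Real.sin w.im)]
  rw [Real.sinh_eq_zero] at h1
  rw [abs_lt] at h
  rw [Real.sin_eq_zero_iff_of_lt_of_lt h.1 h.2] at h2
  exact h0 (Complex.ext h1 h2)

lemma cc_exp_cosh (x : ℝ) : Real.exp |x| / 2 ≤ Real.cosh x := by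
  rw [← Real.cosh_abs, Real.cosh_eq]
  have := Real.exp_pos (-|x|)
  linarith

lemma cc_cos_cosh (w : ℂ) :
    Real.cos w.im * Real.cosh w.re ≤ ‖cosh w‖ := by
  apply le_of_abs_le; apply abs_le_of_sq_le_sq _ (norm_nonneg _)
  rw [cc_ncosh, mul_pow, Real.cosh_sq]
  nlinarith [Real.sin_sq_add_cos_sq w.im, sq_nonneg (Real.sin w.im), sq_nonneg (Real.sinh w.re), mul_nonneg (sq_nonneg (Real.sin w.im)) (sq_nonneg (Real.sinh w.re))]

lemma cc_lb1 (t : ℂ) (h : |t.im| < Real.pi / 2) :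
    ∃ C > 0, ∀ x : ℝ, C * Real.exp |x| ≤ ‖cosh (t - x)‖ := by
  have hc : 0 < Real.cos t.im := Real.cos_pos_of_mem_Ioo (by rwa [abs_lt] at h)
  refine ⟨Real.cos t.im * (Real.exp (-|t.re|) / 2), by positivity, fun x => ?_⟩
  have h1 := cc_cos_cosh (t - x)
  refine le_trans ?_ h1
  simp only [sub_re, sub_im, ofReal_re, ofReal_im, sub_zero]
  rw [mul_assoc]
  apply mul_le_mul_of_nonneg_left _ hc.le
  refine le_trans ?_ (cc_exp_cosh _)
  rw [div_mul_eq_mul_div, ← Real.exp_add]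
  gcongr
  have := abs_sub_abs_le_abs_sub x t.re
  rw [abs_sub_comm] at this
  linarith

lemma cc_cosh_ne (t : ℂ) (h : |t.im| < Real.pi / 2) (x : ℝ) : cosh (t - x) ≠ 0 := by
  obtain ⟨C, hC, hb⟩ := cc_lb1 t h
  intro h0
  have := hb x
  rw [h0, norm_zero] at this
  have : 0 < C * Real.exp |x| := by positivity
  linarith

lemma cc_int_exp {b : ℝ} (hb : 0 < b) : Integrable (fun x : ℝ => Real.exp (-b * |x|)) := by
  rw [← integrableOn_univ, ← Set.Iic_union_Ioi (a := (0:ℝ)), integrableOn_union]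
  constructor
  · refine (integrableOn_exp_mul_Iic hb 0).congr_fun (fun x hx => ?_) measurableSet_Iic
    simp [abs_of_nonpos (show x ≤ 0 from hx)]
  · refine (integrableOn_exp_mul_Ioi (neg_lt_zero.2 hb) 0).congr_fun (fun x hx => ?_) measurableSet_Ioi
    simp [abs_of_pos (show 0 < x from hx)]

lemma cc_lb2 (w : ℂ) (h : 1 ≤ |w.re|) : Real.exp |w.re| / 4 ≤ ‖cosh w‖ := by
  have h1 : |Real.sinh w.re| ≤ ‖cosh w‖ := by
    apply abs_le_of_sq_le_sq _ (norm_nonneg _)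
    rw [cc_ncosh]; nlinarith [sq_nonneg (Real.cos w.im)]
  refine le_trans ?_ h1
  rw [Real.abs_sinh, Real.sinh_eq]
  have h2 : Real.exp (-|w.re|) ≤ Real.exp (|w.re|) / 2 := by
    rw [Real.exp_neg]
    have := Real.add_one_le_exp |w.re|
    rw [inv_le_iff_one_le_mul₀ (by positivity)]
    nlinarith
  linarith

lemma cc_tanh (w : ℂ) (h : 1 ≤ w.re) : ‖sinh w / cosh w - 1‖ ≤ 4 * Real.exp (-2 * w.re) := by
  have hp : 0 ≤ w.re := by linarith
  have h1 := cc_lb2 w (by rwa [abs_of_nonneg hp])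
  rw [abs_of_nonneg hp] at h1
  have h2 : 0 < ‖cosh w‖ := lt_of_lt_of_le (by positivity) h1
  have h3 : cosh w ≠ 0 := norm_pos_iff.1 h2
  have : sinh w / cosh w - 1 = - exp (-w) / cosh w := by
    rw [← cosh_sub_sinh]; field_simp; ring
  rw [this, norm_div, norm_neg, norm_exp, div_le_iff₀ h2]
  have : Real.exp (-w).re = 4 * Real.exp (-2 * w.re) * (Real.exp w.re / 4) := by
    rw [show (-w).re = -2 * w.re + w.re by simp; ring, Real.exp_add]; ring
  rw [this]
  gcongr

lemma cc_tanh_top (s : ℂ) :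
    Tendsto (fun z : ℂ => sinh (z - s) / cosh (z - s)) (comap re atTop) (𝓝 1) := by
  rw [tendsto_iff_norm_sub_tendsto_zero]
  have hT : Tendsto (fun z : ℂ => (z - s).re) (comap re atTop) atTop := by
    simp only [sub_re]
    exact tendsto_atTop_add_const_right _ _ tendsto_comap
  refine squeeze_zero' (.of_forall fun _ => norm_nonneg _)
    (g := fun z : ℂ => 4 * Real.exp (-2 * (z - s).re)) ?_ ?_
  · filter_upwards [hT.eventually_ge_atTop 1] with z hz
    exact cc_tanh _ hz
  · rw [show (0:ℝ) = 4 * 0 by simp]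
    refine Tendsto.const_mul _ (Real.tendsto_exp_atBot.comp ?_)
    exact hT.const_mul_atTop_of_neg (by norm_num)

lemma cc_tanh_bot (s : ℂ) :
    Tendsto (fun z : ℂ => sinh (z - s) / cosh (z - s)) (comap re atBot) (𝓝 (-1)) := by
  have h1 : Tendsto (fun z : ℂ => -z) (comap re atBot) (comap re atTop) := by
    rw [tendsto_comap_iff]
    exact tendsto_neg_atBot_atTop.comp tendsto_comap
  have := ((cc_tanh_top (-s)).comp h1).neg
  refine this.congr fun z => ?_
  simp only [Function.comp]
  rw [show -z - -s = -(z - s) by ring, sinh_neg, cosh_neg, neg_div, neg_neg]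

lemma cc_f_zero (t s a : ℂ) (ha : |a.re| < 2) (L : Filter ℝ) (hL : Tendsto (fun x : ℝ => |x|) L atTop) :
    Tendsto (fun z : ℂ => exp (z * a) / (cosh (z - t) * cosh (z - s)))
      (comap re L ⊓ 𝓟 {z | z.im ∈ Set.Icc 0 Real.pi}) (𝓝 0) := by
  have hT : Tendsto (fun z : ℂ => |z.re|) (comap re L ⊓ 𝓟 {z | z.im ∈ Set.Icc 0 Real.pi}) atTop :=
    (hL.comp tendsto_comap).mono_left inf_le_left
  have key : ∀ r z : ℂ, 1 + |r.re| ≤ |z.re| → Real.exp (|z.re| - |r.re|) / 4 ≤ ‖cosh (z - r)‖ := by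
    intro r z h
    have h2 := abs_sub_abs_le_abs_sub z.re r.re
    refine le_trans ?_ (cc_lb2 (z - r) (by simp only [sub_re]; linarith))
    simp only [sub_re]
    gcongr
  refine squeeze_zero_norm' (a := fun z : ℂ =>
    16 * Real.exp (|a.im| * Real.pi + |t.re| + |s.re|) * Real.exp (-((2 - |a.re|) * |z.re|))) ?_ ?_
  · filter_upwards [hT.eventually_ge_atTop (1 + |t.re|), hT.eventually_ge_atTop (1 + |s.re|),
      mem_inf_of_right (mem_principal_self _)] with z h1 h2 h3
    have k1 := key t z h1
    have k2 := key s z h2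
    have p1 : 0 < Real.exp (|z.re| - |t.re|) / 4 := by positivity
    have p2 : 0 < Real.exp (|z.re| - |s.re|) / 4 := by positivity
    rw [norm_div, norm_mul, norm_exp, div_le_iff₀ (mul_pos (p1.trans_le k1) (p2.trans_le k2))]
    have e1 : (z * a).re ≤ |z.re| * |a.re| + |a.im| * Real.pi := by
      rw [mul_re]
      have q1 : z.re * a.re ≤ |z.re| * |a.re| := by rw [← abs_mul]; exact le_abs_self _
      have q2 : -(z.im * a.im) ≤ |a.im| * Real.pi := by
        have := neg_abs_le a.im
        obtain ⟨h3, h4⟩ := h3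
        nlinarith [mul_le_mul_of_nonneg_left h4 (abs_nonneg a.im), mul_le_mul_of_nonneg_left this h3]
      linarith
    have e2 : Real.exp (|z.re| * |a.re| + |a.im| * Real.pi) =
      16 * Real.exp (|a.im| * Real.pi + |t.re| + |s.re|) * Real.exp (-((2 - |a.re|) * |z.re|)) *
        ((Real.exp (|z.re| - |t.re|) / 4) * (Real.exp (|z.re| - |s.re|) / 4)) := by
      have : |z.re| * |a.re| + |a.im| * Real.pi = (|a.im| * Real.pi + |t.re| + |s.re|) +
        (-((2 - |a.re|) * |z.re|)) + (|z.re| - |t.re|) + (|z.re| - |s.re|) := by ring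
      rw [this]
      simp only [Real.exp_add]
      ring
    refine (Real.exp_le_exp.2 e1).trans ?_
    rw [e2]
    gcongr
  · have h0 := (Real.tendsto_exp_neg_atTop_nhds_zero.comp
      (hT.const_mul_atTop (show 0 < 2 - |a.re| by linarith))).const_mul
      (16 * Real.exp (|a.im| * Real.pi + |t.re| + |s.re|))
    rw [mul_zero] at h0
    exact h0

lemma cc_vert (H : ℂ → ℂ) (c : ℂ) (L : Filter ℝ) [L.IsCountablyGenerated]
    (hc : ContinuousOn H {z | z.im ∈ Set.Icc 0 Real.pi})
    (hH : Tendsto H (comap re L ⊓ 𝓟 {z | z.im ∈ Set.Icc 0 Real.pi}) (𝓝 c)) :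
    Tendsto (fun R : ℝ => ∫ y : ℝ in 0..Real.pi, H (R + y * I)) L (𝓝 (Real.pi * c)) := by
  have : (Real.pi * c : ℂ) = ∫ y : ℝ in 0..Real.pi, c := by simp
  rw [this]
  apply intervalIntegral.tendsto_integral_filter_of_dominated_convergence (fun _ => ‖c‖ + 1)
  · refine .of_forall fun R => ?_
    refine ContinuousOn.aestronglyMeasurable ?_ measurableSet_uIoc
    refine hc.comp (by fun_prop) ?_
    intro y hy
    rw [Set.uIoc_of_le Real.pi_pos.le] at hy
    simpa using ⟨hy.1.le, hy.2⟩
  · have h1 : ∀ᶠ z in comap re L ⊓ 𝓟 {z | z.im ∈ Set.Icc 0 Real.pi}, ‖H z‖ < ‖c‖ + 1 :=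
      hH.norm.eventually_lt_const (by linarith)
    rw [eventually_inf_principal, eventually_comap] at h1
    filter_upwards [h1] with R hR
    refine .of_forall fun y hy => ?_
    rw [Set.uIoc_of_le Real.pi_pos.le] at hy
    exact (hR (R + y * I) (by simp) (by simpa using ⟨hy.1.le, hy.2⟩)).le
  · simp
  · refine .of_forall fun y hy => ?_
    rw [Set.uIoc_of_le Real.pi_pos.le] at hy
    refine hH.comp ?_
    rw [tendsto_inf, tendsto_comap_iff, tendsto_principal]
    refine ⟨?_, .of_forall fun R => by simpa using ⟨hy.1.le, hy.2⟩⟩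
    have e0 : (re ∘ fun R : ℝ => (R : ℂ) + y * I) = id := by ext R; simp
    rw [e0]; exact tendsto_id

noncomputable def ccH (a t z : ℂ) : ℂ :=
  sinh (z - t) * dslope (fun z => exp (z * a)) (t + Real.pi / 2 * I) z /
    (I * dslope sinh 0 (z - (t + Real.pi / 2 * I)))

lemma cc_dslope_ne {w : ℂ} (h : |w.im| < Real.pi) : dslope sinh 0 w ≠ 0 := by
  by_cases h0 : w = 0
  · subst h0; simp
  · rw [dslope_of_ne _ h0, slope_def_field]
    simp [cc_sinh_ne h h0, h0]

lemma cc_im {t z : ℂ} (ht : |t.im| < Real.pi / 2) (hz : z.im ∈ Set.Icc 0 Real.pi) :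
    |(z - (t + Real.pi / 2 * I)).im| < Real.pi := by
  have : ((Real.pi : ℂ) / 2 * I).im = Real.pi / 2 := by
    rw [show ((Real.pi : ℂ) / 2) = ((Real.pi / 2 : ℝ) : ℂ) by simp, im_ofReal_mul]; simp
  rw [sub_im, add_im, this]
  rw [abs_lt] at *
  obtain ⟨h1, h2⟩ := hz
  constructor <;> linarith

lemma ccH_diff (a t : ℂ) (ht : |t.im| < Real.pi / 2) :
    DifferentiableOn ℂ (ccH a t) {z | z.im ∈ Set.Icc 0 Real.pi} := by
  have d1 : Differentiable ℂ (dslope (fun z => exp (z * a)) (t + Real.pi / 2 * I)) := by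
    rw [← differentiableOn_univ, differentiableOn_dslope univ_mem]
    fun_prop
  have d2 : Differentiable ℂ (dslope sinh 0) := by
    rw [← differentiableOn_univ, differentiableOn_dslope univ_mem]
    exact differentiable_sinh.differentiableOn
  have d3 : Differentiable ℂ (fun z => dslope sinh 0 (z - (t + Real.pi / 2 * I))) :=
    d2.comp (by fun_prop)
  have d4 : Differentiable ℂ (fun z => sinh (z - t)) := differentiable_sinh.comp (by fun_prop)
  unfold ccH
  refine DifferentiableOn.div (d4.mul d1).differentiableOn (d3.const_mul I).differentiableOn ?_
  intro z hz
  exact mul_ne_zero I_ne_zero (cc_dslope_ne (cc_im ht hz))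

lemma ccH_eq (a t z : ℂ) (h : cosh (z - t) ≠ 0) :
    ccH a t z = (exp (z * a) - exp ((t + Real.pi / 2 * I) * a)) * (sinh (z - t) / cosh (z - t)) := by
  have e : cosh (z - t) = I * sinh (z - (t + Real.pi / 2 * I)) := by
    rw [show z - (t + Real.pi / 2 * I) = (z - t) - Real.pi / 2 * I by ring, sinh_sub,
      cosh_mul_I, sinh_mul_I]
    simp
    rw [mul_left_comm, I_mul_I]; ring
  have hne : z ≠ t + Real.pi / 2 * I := by
    rintro rfl
    rw [e] at h; simp at h
  have hne' := sub_ne_zero.2 hne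
  rw [ccH, dslope_of_ne _ hne, dslope_of_ne _ hne', slope_def_field, slope_def_field, e]
  rw [e] at h
  have h2 := right_ne_zero_of_mul h
  simp only [sinh_zero, sub_zero]
  generalize z - (t + Real.pi / 2 * I) = w at *
  generalize sinh w = v at *
  field_simp

lemma cc_oneD_int (t s a : ℂ) (ha : |a.re| < 2) (ht : |t.im| < Real.pi / 2)
    (hs : |s.im| < Real.pi / 2) :
    Integrable (fun x : ℝ => exp (x * a) / (cosh (t - x) * cosh (s - x))) := by
  obtain ⟨C, hC, hb⟩ := cc_lb1 t ht
  obtain ⟨D, hD, hd⟩ := cc_lb1 s hs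
  refine Integrable.mono' ((cc_int_exp (b := 2 - |a.re|) (by linarith)).const_mul (C * D)⁻¹) ?_ ?_
  · apply Continuous.aestronglyMeasurable
    refine Continuous.div (by fun_prop) (by fun_prop) ?_
    intro x
    exact mul_ne_zero (cc_cosh_ne t ht x) (cc_cosh_ne s hs x)
  · refine .of_forall fun x => ?_
    have p1 : 0 < C * Real.exp |x| := by positivity
    have p2 : 0 < D * Real.exp |x| := by positivity
    rw [norm_div, norm_mul, norm_exp, div_le_iff₀ (mul_pos (p1.trans_le (hb x)) (p2.trans_le (hd x)))]
    have e1 : (x * a).re ≤ |x| * |a.re| := by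
      rw [re_ofReal_mul, ← abs_mul]; exact le_abs_self _
    have e2 : Real.exp (|x| * |a.re|) = (C * D)⁻¹ * Real.exp (-(2 - |a.re|) * |x|) *
        ((C * Real.exp |x|) * (D * Real.exp |x|)) := by
      have : |x| * |a.re| = -(2 - |a.re|) * |x| + |x| + |x| := by ring
      rw [this]
      simp only [Real.exp_add]
      field_simp
    refine (Real.exp_le_exp.2 e1).trans ?_
    rw [e2]
    gcongr
    · exact hb x
    · exact hd x

lemma cc_cosh_ev (t : ℂ) (L : Filter ℝ) (hL : Tendsto (fun x : ℝ => |x|) L atTop) :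
    ∀ᶠ z in comap re L, cosh (z - t) ≠ 0 := by
  have hT : Tendsto (fun z : ℂ => |z.re|) (comap re L) atTop := hL.comp tendsto_comap
  filter_upwards [hT.eventually_ge_atTop (1 + |t.re|)] with z hz
  have h2 := abs_sub_abs_le_abs_sub z.re t.re
  have := cc_lb2 (z - t) (by simp only [sub_re]; linarith)
  exact norm_pos_iff.1 (lt_of_lt_of_le (by positivity) this)

lemma cc_tanh_sub (t s z : ℂ) (h1 : cosh (z - t) ≠ 0) (h2 : cosh (z - s) ≠ 0) :
    sinh (z - s) / cosh (z - s) - sinh (z - t) / cosh (z - t) =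
      sinh (t - s) / (cosh (z - t) * cosh (z - s)) := by
  rw [show t - s = (z - s) - (z - t) by ring, sinh_sub (z - s)]
  field_simp

lemma cc_H_form (a t s z : ℂ) (h1 : cosh (z - t) ≠ 0) (h2 : cosh (z - s) ≠ 0) :
    ccH a s z - ccH a t z = sinh (t - s) * (exp (z * a) / (cosh (z - t) * cosh (z - s)))
      - exp ((s + Real.pi / 2 * I) * a) * (sinh (z - s) / cosh (z - s))
      + exp ((t + Real.pi / 2 * I) * a) * (sinh (z - t) / cosh (z - t)) := by
  rw [ccH_eq a s z h2, ccH_eq a t z h1]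
  linear_combination exp (z * a) * cc_tanh_sub t s z h1 h2

lemma cc_H_lim (a t s : ℂ) (ha : |a.re| < 2) (L : Filter ℝ)
    (hL : Tendsto (fun x : ℝ => |x|) L atTop) (ε : ℂ)
    (hε : ∀ r : ℂ, Tendsto (fun z : ℂ => sinh (z - r) / cosh (z - r)) (comap re L) (𝓝 ε)) :
    Tendsto (fun z => ccH a s z - ccH a t z) (comap re L ⊓ 𝓟 {z | z.im ∈ Set.Icc 0 Real.pi})
      (𝓝 ((exp ((t + Real.pi / 2 * I) * a) - exp ((s + Real.pi / 2 * I) * a)) * ε)) := by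
  have h1 := (((cc_f_zero t s a ha L hL).const_mul (sinh (t - s))).sub
    (((hε s).mono_left inf_le_left).const_mul (exp ((s + Real.pi / 2 * I) * a)))).add
    (((hε t).mono_left (inf_le_left (b := 𝓟 {z : ℂ | z.im ∈ Set.Icc 0 Real.pi}))).const_mul (exp ((t + Real.pi / 2 * I) * a)))
  have h2 : sinh (t - s) * 0 - exp ((s + Real.pi / 2 * I) * a) * ε + exp ((t + Real.pi / 2 * I) * a) * ε
    = (exp ((t + Real.pi / 2 * I) * a) - exp ((s + Real.pi / 2 * I) * a)) * ε := by ring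
  rw [h2] at h1
  refine h1.congr' ?_
  filter_upwards [(cc_cosh_ev t L hL).filter_mono inf_le_left,
    (cc_cosh_ev s L hL).filter_mono inf_le_left] with z z1 z2
  exact (cc_H_form a t s z z1 z2).symm

lemma cc_oneD (t s a : ℂ) (ha : |a.re| < 2) (ha0 : a ≠ 0) (ht : |t.im| < Real.pi / 2)
    (hs : |s.im| < Real.pi / 2) (hts : t ≠ s) :
    ∫ x : ℝ, exp (x * a) / (cosh (t - x) * cosh (s - x)) =
      Real.pi / sin (Real.pi * a / 2) * ((exp (t * a) - exp (s * a)) / sinh (t - s)) := by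
  set J := ∫ x : ℝ, exp (x * a) / (cosh (t - x) * cosh (s - x)) with hJ
  set Cs := exp ((s + Real.pi / 2 * I) * a) with hCs
  set Ct := exp ((t + Real.pi / 2 * I) * a) with hCt
  set H : ℂ → ℂ := fun z => ccH a s z - ccH a t z with hH
  have hd : DifferentiableOn ℂ H {z | z.im ∈ Set.Icc 0 Real.pi} :=
    (ccH_diff a s hs).sub (ccH_diff a t ht)
  have hc := hd.continuousOn
  have hne : ∀ r : ℂ, |r.im| < Real.pi / 2 → ∀ x : ℝ, cosh (x - r) ≠ 0 := by
    intro r hr x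
    rw [← neg_sub, cosh_neg]; exact cc_cosh_ne r hr x
  have cpi : ∀ w : ℂ, cosh (w + Real.pi * I) = - cosh w := by
    intro w; rw [cosh_add, cosh_mul_I, sinh_mul_I]; simp
  have spi : ∀ w : ℂ, sinh (w + Real.pi * I) = - sinh w := by
    intro w; rw [sinh_add, cosh_mul_I, sinh_mul_I]; simp
  have hdiff : ∀ x : ℝ, H (x + (0 : ℝ) * I) - H (x + Real.pi * I) =
      ((1 - exp (Real.pi * I * a)) * sinh (t - s)) *
        (exp (x * a) / (cosh (t - x) * cosh (s - x))) := by
    intro x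
    have e : ∀ r : ℂ, (x : ℂ) + Real.pi * I - r = (x - r) + Real.pi * I := by intro r; ring
    simp only [hH]
    rw [ofReal_zero, zero_mul, add_zero, cc_H_form _ _ _ _ (hne t ht x) (hne s hs x),
      cc_H_form _ _ _ _ (by rw [e, cpi]; exact neg_ne_zero.2 (hne t ht x))
        (by rw [e, cpi]; exact neg_ne_zero.2 (hne s hs x))]
    simp only [e, cpi, spi, neg_div_neg_eq, neg_mul_neg]
    rw [add_mul (x : ℂ), exp_add, ← neg_sub (x : ℂ) t, ← neg_sub (x : ℂ) s, cosh_neg, cosh_neg]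
    ring
  have rect : ∀ R : ℝ, ((1 - exp (Real.pi * I * a)) * sinh (t - s)) *
      (∫ x : ℝ in (-R)..R, exp (x * a) / (cosh (t - x) * cosh (s - x))) +
      I * (∫ y : ℝ in 0..Real.pi, H (R + y * I)) -
      I * (∫ y : ℝ in 0..Real.pi, H ((-R : ℝ) + y * I)) = 0 := by
    intro R
    have := integral_boundary_rect_eq_zero_of_differentiableOn H (-R : ℝ) (R + Real.pi * I)
      (hd.mono ?_)
    · have i1 : (((-R : ℝ) : ℂ)).re = -R := by simp
      have i2 : (((-R : ℝ) : ℂ)).im = 0 := ofReal_im _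
      have i3 : ((R : ℂ) + Real.pi * I).re = R := by simp
      have i4 : ((R : ℂ) + Real.pi * I).im = Real.pi := by simp
      rw [i1, i2, i3, i4] at this
      rw [← intervalIntegral.integral_const_mul]
      simp only [← hdiff]
      rw [intervalIntegral.integral_sub]
      · exact this
      · refine (Continuous.intervalIntegrable ?_ _ _)
        refine hc.comp_continuous (by fun_prop) fun x => ?_
        simp [Real.pi_pos.le]
      · refine (Continuous.intervalIntegrable ?_ _ _)
        refine hc.comp_continuous (by fun_prop) fun x => ?_
        simp [Real.pi_pos.le]
    · intro z hz
      rw [mem_reProdIm] at hz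
      have := hz.2
      rw [Set.uIcc_of_le (by simp [Real.pi_pos.le])] at this
      simpa using this
  have l1 := intervalIntegral_tendsto_integral (cc_oneD_int t s a ha ht hs)
    tendsto_neg_atTop_atBot tendsto_id
  have l2 := cc_vert H _ atTop hc (cc_H_lim a t s ha atTop tendsto_abs_atTop_atTop 1 cc_tanh_top)
  have l3 := (cc_vert H _ atBot hc (cc_H_lim a t s ha atBot tendsto_abs_atBot_atTop (-1) cc_tanh_bot)).comp
    tendsto_neg_atTop_atBot
  have l4 := ((l1.const_mul ((1 - exp (Real.pi * I * a)) * sinh (t - s))).add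
    (l2.const_mul I)).sub (l3.const_mul I)
  have l5 := tendsto_nhds_unique l4 (tendsto_const_nhds.congr fun R => (rect R).symm)
  have hsin : sin (Real.pi * a / 2) ≠ 0 := by
    intro h
    rw [Complex.sin_eq_zero_iff] at h
    obtain ⟨k, hk⟩ := h
    have hpi : (Real.pi : ℂ) ≠ 0 := by exact_mod_cast Real.pi_ne_zero
    have h2 : a = ((2 * k : ℝ) : ℂ) := by
      push_cast
      apply mul_left_cancel₀ hpi
      linear_combination 2 * hk
    rw [h2, ofReal_re, abs_lt] at ha
    have k1 : -1 < k := by have := ha.1; exact_mod_cast (by linarith : (-1 : ℝ) < k)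
    have k2 : k < 1 := by have := ha.2; exact_mod_cast (by linarith : (k : ℝ) < 1)
    have : k = 0 := by omega
    apply ha0; rw [h2, this]; simp
  have hsh : sinh (t - s) ≠ 0 := by
    apply cc_sinh_ne _ (sub_ne_zero.2 hts)
    rw [sub_im]; rw [abs_lt] at *
    constructor <;> linarith [ht.1, ht.2, hs.1, hs.2]
  have eC : ∀ r : ℂ, exp ((r + Real.pi / 2 * I) * a) = exp (r * a) * exp (Real.pi * a / 2 * I) := by
    intro r; rw [← exp_add]; congr 1; ring
  have eE : exp (Real.pi * I * a) = exp (Real.pi * a / 2 * I) * exp (Real.pi * a / 2 * I) := by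
    rw [← exp_add]; congr 1; ring
  have eS : sin (Real.pi * a / 2) = ((exp (Real.pi * a / 2 * I))⁻¹ - exp (Real.pi * a / 2 * I)) * I / 2 := by
    rw [sin, neg_mul, exp_neg]
  have hw := exp_ne_zero (Real.pi * a / 2 * I)
  rw [eC, eC, eE, ← hJ] at l5
  rw [div_mul_div_comm, eq_div_iff (mul_ne_zero hsin hsh), eS]
  generalize exp (Real.pi * a / 2 * I) = w at *
  field_simp
  have : w * (I * ((1 - w * w) * sinh (t - s) * J + I * (2 * Real.pi * ((exp (t * a) - exp (s * a)) * w)))) = 0 := by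
    linear_combination w * I * l5
  have h4 := (mul_eq_zero.1 this).resolve_left hw
  linear_combination h4 - 2 * Real.pi * ((exp (t * a) - exp (s * a)) * w) * I_sq

end

lemma cc_sinh_le (x y : ℝ) : ‖sinh ((x : ℂ) - (y : ℂ))‖ ≤ Real.exp |x| * Real.exp |y| := by
  rw [← ofReal_sub, ← ofReal_sinh, norm_real, Real.norm_eq_abs, Real.abs_sinh, Real.sinh_eq,
    ← Real.exp_add]
  have h1 : Real.exp |x - y| ≤ Real.exp (|x| + |y|) := Real.exp_le_exp.2 (abs_sub x y)
  have := Real.exp_pos (-|x - y|)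
  have := Real.exp_pos (|x - y|)
  linarith

theorem cc_integrable (N : ℕ) (t : Fin (N + 1) → ℂ) (a : Fin N → ℂ)
    (hu : ∀ i : Fin N, |(a i).re| < 2)
    (ht : ∀ j : Fin (N + 1), |(t j).im| < Real.pi / 2) :
    Integrable (fun z : Fin N → ℝ =>
      (∏ q ∈ Finset.univ.filter (fun q : Fin N × Fin N => q.1 < q.2),
        Complex.sinh ((z q.1 : ℂ) - (z q.2 : ℂ))) /
        (∏ j : Fin (N + 1), ∏ k : Fin N, Complex.cosh (t j - (z k : ℂ))) *
        Complex.exp (∑ j : Fin N, (z j : ℂ) * a j)) := by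
  choose C hC hb using fun j => cc_lb1 (t j) (ht j)
  have hne : ∀ z : Fin N → ℝ,
      (∏ j : Fin (N + 1), ∏ k : Fin N, Complex.cosh (t j - (z k : ℂ))) ≠ 0 := fun z =>
    Finset.prod_ne_zero_iff.2 fun j _ => Finset.prod_ne_zero_iff.2 fun k _ => cc_cosh_ne _ (ht j) _
  have hB : Integrable (fun z : Fin N → ℝ => ∏ k, Real.exp (-(2 - |(a k).re|) * |z k|)) :=
    Integrable.fintype_prod (f := fun k x => Real.exp (-(2 - |(a k).re|) * |x|))
      (fun k => cc_int_exp (by have := hu k; linarith))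
  refine Integrable.mono' (hB.const_mul (∏ j, ∏ _k : Fin N, C j)⁻¹) ?_ ?_
  · apply Continuous.aestronglyMeasurable
    refine Continuous.mul (Continuous.div (by fun_prop) (by fun_prop) hne) (by fun_prop)
  · refine .of_forall fun z => ?_
    have hden : (∏ j : Fin (N + 1), ∏ k : Fin N, (C j * Real.exp |z k|)) ≤
        ‖∏ j : Fin (N + 1), ∏ k : Fin N, Complex.cosh (t j - (z k : ℂ))‖ := by
      simp only [norm_prod]
      refine Finset.prod_le_prod (fun j _ => Finset.prod_nonneg fun k _ => ?_) fun j _ =>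
        Finset.prod_le_prod (fun k _ => ?_) fun k _ => hb j _
      · have := hC j; positivity
      · have := hC j; positivity
    have hnum : ‖∏ q ∈ Finset.univ.filter (fun q : Fin N × Fin N => q.1 < q.2),
        Complex.sinh ((z q.1 : ℂ) - (z q.2 : ℂ))‖ ≤
        ∏ q ∈ Finset.univ.filter (fun q : Fin N × Fin N => q.1 < q.2),
          Real.exp |z q.1| * Real.exp |z q.2| := by
      rw [norm_prod]
      exact Finset.prod_le_prod (fun _ _ => norm_nonneg _) fun q _ => cc_sinh_le _ _
    have hexp : ‖Complex.exp (∑ j : Fin N, (z j : ℂ) * a j)‖ ≤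
        ∏ k, Real.exp (|(a k).re| * |z k|) := by
      rw [exp_sum, norm_prod]
      refine Finset.prod_le_prod (fun _ _ => norm_nonneg _) fun k _ => ?_
      rw [norm_exp, re_ofReal_mul, mul_comm, ← abs_mul]
      exact Real.exp_le_exp.2 (le_abs_self _)
    have hdpos : 0 < ∏ j : Fin (N + 1), ∏ k : Fin N, (C j * Real.exp |z k|) :=
      Finset.prod_pos fun j _ => Finset.prod_pos fun k _ => mul_pos (hC j) (Real.exp_pos _)
    have hCpos : 0 < ∏ j : Fin (N + 1), ∏ _k : Fin N, C j :=
      Finset.prod_pos fun j _ => Finset.prod_pos fun k _ => hC j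
    rw [norm_mul, norm_div, div_mul_eq_mul_div, div_le_iff₀ (hdpos.trans_le hden)]
    have key : (∏ q ∈ Finset.univ.filter (fun q : Fin N × Fin N => q.1 < q.2),
          Real.exp |z q.1| * Real.exp |z q.2|) * ∏ k, Real.exp (|(a k).re| * |z k|) =
        (∏ j, ∏ _k : Fin N, C j)⁻¹ * (∏ k, Real.exp (-(2 - |(a k).re|) * |z k|)) *
          ∏ j : Fin (N + 1), ∏ k : Fin N, (C j * Real.exp |z k|) := by
      have hp : 0 < ∏ k : Fin N, Real.exp |z k| := Finset.prod_pos fun k _ => Real.exp_pos _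
      apply mul_right_cancel₀ hp.ne'
      rw [mul_right_comm, cc_prod_pow (fun k => Real.exp |z k|)]
      have e1 : ∏ j : Fin (N + 1), ∏ k : Fin N, (C j * Real.exp |z k|) =
          (∏ j : Fin (N + 1), ∏ _k : Fin N, C j) * (∏ k : Fin N, Real.exp |z k|) ^ (N + 1) := by
        simp only [Finset.prod_mul_distrib]; simp
      have e2 : ∏ k, Real.exp (|(a k).re| * |z k|) =
          (∏ k, Real.exp (-(2 - |(a k).re|) * |z k|)) * (∏ k : Fin N, Real.exp |z k|) ^ 2 := by
        rw [← Finset.prod_pow, ← Finset.prod_mul_distrib]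
        refine Finset.prod_congr rfl fun k _ => ?_
        rw [← Real.exp_nat_mul, ← Real.exp_add]
        congr 1; push_cast; ring
      rw [e1, e2, Finset.prod_pow]
      field_simp
      ring
    calc _ ≤ (∏ q ∈ Finset.univ.filter (fun q : Fin N × Fin N => q.1 < q.2),
          Real.exp |z q.1| * Real.exp |z q.2|) * ∏ k, Real.exp (|(a k).re| * |z k|) := by
            gcongr
      _ = _ := key
      _ ≤ _ := by
        gcongr

theorem cc_eval (N : ℕ) (t : Fin (N + 1) → ℂ) (a : Fin N → ℂ)
    (hu : ∀ i : Fin N, |(a i).re| < 2)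
    (ht : ∀ j : Fin (N + 1), |(t j).im| < Real.pi / 2)
    (ha0 : ∀ i, a i ≠ 0) (htt : ∀ j k : Fin (N + 1), j < k → t j ≠ t k) :
    ∫ z : Fin N → ℝ,
        (∏ q ∈ Finset.univ.filter (fun q : Fin N × Fin N => q.1 < q.2),
          Complex.sinh ((z q.1 : ℂ) - (z q.2 : ℂ))) /
          (∏ j : Fin (N + 1), ∏ k : Fin N, Complex.cosh (t j - (z k : ℂ))) *
          Complex.exp (∑ j : Fin N, (z j : ℂ) * a j)
      = (∏ j : Fin N, (Real.pi : ℂ) / Complex.sin ((Real.pi : ℂ) * a j / 2)) *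
        (∏ q ∈ Finset.univ.filter (fun q : Fin (N + 1) × Fin (N + 1) => q.1 < q.2),
          1 / Complex.sinh (t q.1 - t q.2)) *
        ∑ τ : Equiv.Perm (Fin (N + 1)), ((Equiv.Perm.sign τ : ℤ) : ℂ) *
          Complex.exp (∑ j : Fin N, t (τ (Fin.castSucc j)) * a j) := by
  set T : ℂ := ∏ q ∈ Finset.univ.filter (fun q : Fin N × Fin N => q.1 < q.2),
    sinh (t q.1.castSucc - t q.2.castSucc) with hT
  have hsh : ∀ j k, j < k → sinh (t j - t k) ≠ 0 := by
    intro j k hjk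
    apply cc_sinh_ne _ (sub_ne_zero.2 (htt j k hjk))
    have h1 := abs_lt.1 (ht j)
    have h2 := abs_lt.1 (ht k)
    rw [sub_im, abs_lt]
    constructor <;> linarith [h1.1, h1.2, h2.1, h2.2]
  have hT0 : T ≠ 0 := by
    refine Finset.prod_ne_zero_iff.2 fun q hq => hsh _ _ ?_
    simpa using hq
  let g : Fin N → Fin N → ℝ → ℂ := fun i k x =>
    exp (x * a k) / (cosh (t i.castSucc - x) * cosh (t (Fin.last N) - x))
  have hg : ∀ i k, Integrable (g i k) := fun i k => cc_oneD_int _ _ _ (hu k) (ht _) (ht _)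
  have hF : ∀ z : Fin N → ℝ,
      (∏ q ∈ Finset.univ.filter (fun q : Fin N × Fin N => q.1 < q.2),
          Complex.sinh ((z q.1 : ℂ) - (z q.2 : ℂ))) /
          (∏ j : Fin (N + 1), ∏ k : Fin N, Complex.cosh (t j - (z k : ℂ))) *
          Complex.exp (∑ j : Fin N, (z j : ℂ) * a j) =
      T⁻¹ * ∑ σ : Equiv.Perm (Fin N), ((Equiv.Perm.sign σ : ℤ) : ℂ) * ∏ k, g (σ k) k (z k) := by
    intro z
    have hc := cc_cauchy (fun i : Fin N => t i.castSucc) (fun k => (z k : ℂ))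
      (fun i j => cc_cosh_ne _ (ht _) _)
    rw [Matrix.det_apply'] at hc
    have e : ∀ σ : Equiv.Perm (Fin N), ∏ k, g (σ k) k (z k) =
        (∏ k, 1 / cosh (t (σ k).castSucc - z k)) *
        (exp (∑ j : Fin N, (z j : ℂ) * a j) / ∏ k, cosh (t (Fin.last N) - z k)) := by
      intro σ
      rw [exp_sum, ← Finset.prod_div_distrib, ← Finset.prod_mul_distrib]
      refine Finset.prod_congr rfl fun k _ => ?_
      simp only [g]
      rw [div_mul_div_comm, one_mul]
    simp only [e, ← mul_assoc, ← Finset.sum_mul]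
    simp only [Matrix.of_apply] at hc
    rw [hc, Fin.prod_univ_castSucc, ← hT]
    field_simp
  have hGint : ∀ σ : Equiv.Perm (Fin N), Integrable (fun z : Fin N → ℝ => ∏ k, g (σ k) k (z k)) :=
    fun σ => Integrable.fintype_prod (f := fun k x => g (σ k) k x) (fun k => hg _ _)
  simp only [hF]
  rw [integral_const_mul, integral_finset_sum _ (fun σ _ => (hGint σ).const_mul _)]
  simp only [integral_const_mul]
  have hG : ∀ σ : Equiv.Perm (Fin N), ∫ z : Fin N → ℝ, ∏ k, g (σ k) k (z k) =
      (∏ k, (Real.pi : ℂ) / Complex.sin ((Real.pi : ℂ) * a k / 2)) *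
      (∏ k : Fin N, 1 / sinh (t k.castSucc - t (Fin.last N))) *
      ∏ k, (exp (t (σ k).castSucc * a k) - exp (t (Fin.last N) * a k)) := by
    intro σ
    rw [integral_fintype_prod_volume_eq_prod (fun k x => g (σ k) k x),
      ← Equiv.prod_comp σ (fun k : Fin N => 1 / sinh (t k.castSucc - t (Fin.last N))),
      ← Finset.prod_mul_distrib, ← Finset.prod_mul_distrib]
    refine Finset.prod_congr rfl fun k _ => ?_
    simp only [g]
    rw [cc_oneD _ _ _ (hu k) (ha0 k) (ht _) (ht _) (htt _ _ (Fin.castSucc_lt_last _))]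
    ring
  have hdet : ∑ τ : Equiv.Perm (Fin (N + 1)), ((Equiv.Perm.sign τ : ℤ) : ℂ) *
          Complex.exp (∑ j : Fin N, t (τ (Fin.castSucc j)) * a j) =
      ∑ σ : Equiv.Perm (Fin N), ((Equiv.Perm.sign σ : ℤ) : ℂ) *
        ∏ k, (exp (t (σ k).castSucc * a k) - exp (t (Fin.last N) * a k)) := by
    have := cc_border (Matrix.of fun i j : Fin (N + 1) =>
      exp (t i * (Fin.snoc a 0 : Fin (N + 1) → ℂ) j)) (by intro i; simp)
    rw [Matrix.det_apply', Matrix.det_apply'] at this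
    simp only [Matrix.of_apply, Fin.prod_univ_castSucc, Fin.snoc_castSucc, Fin.snoc_last, mul_zero,
      exp_zero, mul_one] at this
    simp only [exp_sum]
    exact this
  rw [hdet, cc_prod_lt_last (fun i j => 1 / sinh (t i - t j))]
  simp only [hG]
  have hTi : ∏ q ∈ Finset.univ.filter (fun q : Fin N × Fin N => q.1 < q.2),
    1 / sinh (t q.1.castSucc - t q.2.castSucc) = T⁻¹ := by
    rw [hT, ← Finset.prod_inv_distrib]; simp
  rw [hTi, Finset.mul_sum, Finset.mul_sum]
  refine Finset.sum_congr rfl fun σ _ => ?_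
  ring


/-- The integral `C_N(u,t)` (Lemma C.3): absolute convergence for
`|Re(u_{N+1}−u_i)| < 2`, `|Im t_j| < π/2`, and explicit evaluation under the
additional nondegeneracy assumptions. -/
theorem statement3 (N : ℕ) (hN : 1 ≤ N) (u t : Fin (N + 1) → ℂ)
    (hu : ∀ i : Fin N, |(u (Fin.last N) - u (Fin.castSucc i)).re| < 2)
    (ht : ∀ j : Fin (N + 1), |(t j).im| < Real.pi / 2) :
    Integrable (fun z : Fin N → ℝ =>
      (∏ q ∈ Finset.univ.filter (fun q : Fin N × Fin N => q.1 < q.2),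
        Complex.sinh ((z q.1 : ℂ) - (z q.2 : ℂ))) /
        (∏ j : Fin (N + 1), ∏ k : Fin N, Complex.cosh (t j - (z k : ℂ))) *
        Complex.exp (∑ j : Fin N, (z j : ℂ) * (u (Fin.last N) - u (Fin.castSucc j))))
    ∧ ((∀ i : Fin N, u (Fin.castSucc i) ≠ u (Fin.last N)) →
       (∀ j k : Fin (N + 1), j < k → t j ≠ t k) →
      ∫ z : Fin N → ℝ,
        (∏ q ∈ Finset.univ.filter (fun q : Fin N × Fin N => q.1 < q.2),
          Complex.sinh ((z q.1 : ℂ) - (z q.2 : ℂ))) /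
          (∏ j : Fin (N + 1), ∏ k : Fin N, Complex.cosh (t j - (z k : ℂ))) *
          Complex.exp (∑ j : Fin N, (z j : ℂ) * (u (Fin.last N) - u (Fin.castSucc j)))
      = (∏ j : Fin N,
          (Real.pi : ℂ) / Complex.sin ((Real.pi : ℂ) * (u (Fin.last N) - u (Fin.castSucc j)) / 2)) *
        (∏ q ∈ Finset.univ.filter (fun q : Fin (N + 1) × Fin (N + 1) => q.1 < q.2),
          1 / Complex.sinh (t q.1 - t q.2)) *
        ∑ τ : Equiv.Perm (Fin (N + 1)), ((Equiv.Perm.sign τ : ℤ) : ℂ) *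
          Complex.exp (∑ j : Fin N, t (τ (Fin.castSucc j)) * (u (Fin.last N) - u (Fin.castSucc j)))) := by
  refine ⟨cc_integrable N t (fun j => u (Fin.last N) - u (Fin.castSucc j)) hu ht, fun h1 h2 => ?_⟩
  exact cc_eval N t (fun j => u (Fin.last N) - u (Fin.castSucc j)) hu ht
    (fun i => sub_ne_zero.2 (h1 i).symm) h2
end

section
/- Let N ≥ 1 and set 𝒞_N = {(u,t) ∈ ℂ^{N+1}×ℂ^{N+1} : |Re(u_{N+1}−u_i)| < 2 for i = 1,…,N and |Im t_j| < π/2 for j = 1,…,N+1}, and for (u,t) ∈ 𝒞_N set C_N(u,t) = ∫_{ℝ^N} ∏_{1≤j<k≤N} sinh(z_j−z_k) / ∏_{j=1}^{N+1} ∏_{k=1}^{N} cosh(t_j−z_k) · exp(Σ_{j=1}^{N} z_j (u_{N+1}−u_j)) dz. Then there exists a function H, holomorphic (jointly analytic in all 2(N+1) complex variables) on the open set 𝒞_N, such that C_N(u,t) = H(u,t) · ∏_{1≤j<k≤N} (u_j−u_k) for all (u,t) ∈ 𝒞_N. -/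
open MeasureTheory Complex

theorem aux_param {E α : Type*} [NormedAddCommGroup E] [NormedSpace ℂ E] [FiniteDimensional ℂ E]
    [MeasurableSpace α] {μ : Measure α} (F : E → α → ℂ) (x₀ : E) (ε : ℝ) (hε : 0 < ε)
    (b : α → ℝ) (hb : Integrable b μ)
    (hmeas : ∀ x ∈ Metric.ball x₀ ε, AEStronglyMeasurable (F x) μ)
    (hdiff : ∀ a, DifferentiableOn ℂ (fun x => F x a) (Metric.ball x₀ ε))
    (hbound : ∀ a, ∀ x ∈ Metric.ball x₀ ε, ‖F x a‖ ≤ b a) :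
    DifferentiableAt ℂ (fun x => ∫ a, F x a ∂μ) x₀ := by
  have hx₀ : x₀ ∈ Metric.ball x₀ ε := Metric.mem_ball_self hε
  have hd : ∀ a, HasFDerivAt (fun x => F x a) (fderiv ℂ (fun x => F x a) x₀) x₀ := fun a =>
    ((hdiff a).differentiableAt (Metric.ball_mem_nhds x₀ hε)).hasFDerivAt
  have hev : ∀ v : E, AEStronglyMeasurable (fun a => fderiv ℂ (fun x => F x a) x₀ v) μ := by
    intro v
    have hc : ∀ᶠ n : ℕ in Filter.atTop, x₀ + ((n : ℂ) + 1)⁻¹ • v ∈ Metric.ball x₀ ε := by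
      have : Filter.Tendsto (fun n : ℕ => x₀ + ((n : ℂ) + 1)⁻¹ • v) Filter.atTop (nhds x₀) := by
        have h1 : Filter.Tendsto (fun n : ℕ => ((n : ℂ) + 1)⁻¹) Filter.atTop (nhds 0) := by
          simpa [one_div] using tendsto_one_div_add_atTop_nhds_zero_nat (𝕜 := ℂ)
        simpa using (h1.smul_const v).const_add x₀
      exact this (Metric.ball_mem_nhds x₀ hε)
    obtain ⟨n₀, hn₀⟩ := Filter.eventually_atTop.1 hc
    refine aestronglyMeasurable_of_tendsto_ae Filter.atTop
      (f := fun (n : ℕ) a => (((n + n₀ : ℕ) : ℂ) + 1) • (F (x₀ + (((n + n₀ : ℕ) : ℂ) + 1)⁻¹ • v) a - F x₀ a))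
      (fun n => ((hmeas _ (hn₀ (n + n₀) (by omega))).sub (hmeas _ hx₀)).fun_const_smul _) ?_
    refine Filter.Eventually.of_forall fun a => ?_
    refine (hd a).lim v (c := fun n : ℕ => ((n + n₀ : ℕ) : ℂ) + 1) ?_
    have h2 : ∀ n : ℕ, ‖((n + n₀ : ℕ) : ℂ) + 1‖ = ((n + n₀ + 1 : ℕ) : ℝ) := by
      intro n
      rw [← Complex.norm_natCast]
      push_cast
      rfl
    simp only [h2]
    exact tendsto_natCast_atTop_atTop.comp (Filter.tendsto_atTop_mono (fun n => by simp only [id]; omega) Filter.tendsto_id)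
  have hF' : AEStronglyMeasurable (fun a => fderiv ℂ (fun x => F x a) x₀) μ := by
    let B := Module.finBasis ℂ E
    have : (fun a => fderiv ℂ (fun x => F x a) x₀) = fun a => ∑ i,
        (fderiv ℂ (fun x => F x a) x₀ (B i)) • (LinearMap.toContinuousLinearMap (B.coord i)) := by
      funext a
      ext v
      conv_lhs => rw [← B.sum_repr v]
      simp only [map_sum, map_smul]
      simp [mul_comm]
    rw [this]
    refine Finset.aestronglyMeasurable_fun_sum _ fun i _ => ?_
    exact (hev _).smul_const _
  have key := hasFDerivAt_integral_of_dominated_loc_of_lip' (μ := μ) (𝕜 := ℂ) (F := F) (x₀ := x₀)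
    (bound := fun a => (2 * b a) / ε)
    (F' := fun a => fderiv ℂ (fun x => F x a) x₀) (Metric.ball_mem_nhds x₀ hε) hmeas
    (hb.mono' (hmeas _ hx₀) (Filter.Eventually.of_forall fun a => hbound a _ hx₀)) hF'
    (Filter.Eventually.of_forall fun a x hx => ?_) ((hb.const_mul 2).div_const ε)
    (Filter.Eventually.of_forall hd)
  · exact key.2.differentiableAt
  · have := Complex.dist_le_div_mul_dist_of_mapsTo_ball (R₂ := 2 * b a) (hdiff a) (fun y hy => ?_) hx
    · simpa [dist_eq_norm] using this
    · rw [Metric.mem_closedBall, dist_eq_norm]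
      have h1 := hbound a y hy
      have h2 := hbound a _ hx₀
      exact (norm_sub_le _ _).trans (by linarith)

theorem aux_div {E : Type*} [NormedAddCommGroup E] [NormedSpace ℂ E] [FiniteDimensional ℂ E]
    (U : Set E) (hU : IsOpen U) (f : E → ℂ) (hf : DifferentiableOn ℂ f U) (l : E →L[ℂ] ℂ)
    (v : E) (hv : l v = 1) (h0 : ∀ x ∈ U, l x = 0 → f x = 0) :
    ∃ g : E → ℂ, DifferentiableOn ℂ g U ∧ ∀ x ∈ U, f x = g x * l x := by
  classical
  let g : E → ℂ := fun x => if l x = 0 then deriv (fun s : ℂ => f (x + s • v)) 0 else f x / l x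
  refine ⟨g, ?_, ?_⟩
  swap
  · intro x hx
    by_cases h : l x = 0
    · simp [h, h0 x hx h]
    · simp [g, h]
  intro x₀ hx₀
  apply DifferentiableAt.differentiableWithinAt
  by_cases hl : l x₀ = 0
  swap
  · have : g =ᶠ[nhds x₀] fun x => f x * (l x)⁻¹ := by
      filter_upwards [l.continuous.continuousAt.eventually_ne hl] with x hx
      simp [g, hx, div_eq_mul_inv]
    refine DifferentiableAt.congr_of_eventuallyEq ?_ this
    exact (hf.differentiableAt (hU.mem_nhds hx₀)).fun_mul
      (DifferentiableAt.fun_inv l.differentiableAt hl)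
  -- local bound
  have hfc : ContinuousAt f x₀ := (hf.differentiableAt (hU.mem_nhds hx₀)).continuousAt
  obtain ⟨R, hR, hRU⟩ : ∃ R > 0, ∀ x ∈ Metric.ball x₀ R, x ∈ U ∧ ‖f x‖ < ‖f x₀‖ + 1 := by
    have h1 : ∀ᶠ x in nhds x₀, x ∈ U ∧ ‖f x‖ < ‖f x₀‖ + 1 :=
      (hU.eventually_mem hx₀).and (hfc.norm.eventually_lt_const (by linarith))
    obtain ⟨R, hR, h⟩ := Metric.eventually_nhds_iff_ball.1 h1
    exact ⟨R, hR, h⟩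
  set M := ‖f x₀‖ + 1 with hM
  set r := R / (4 * (‖v‖ + 1)) with hr
  have hv0 : 0 ≤ ‖v‖ := norm_nonneg v
  have hrpos : 0 < r := by positivity
  have hrv : r * ‖v‖ ≤ R / 4 := by
    have : r * (‖v‖ + 1) = R / 4 := by rw [hr]; field_simp
    nlinarith
  obtain ⟨ε, hε, hεx⟩ : ∃ ε > 0, ∀ x ∈ Metric.ball x₀ ε, ‖l x‖ < r / 2 ∧ dist x x₀ < R / 4 := by
    have h1 : ∀ᶠ x in nhds x₀, ‖l x‖ < r / 2 ∧ dist x x₀ < R / 4 := by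
      refine Filter.Eventually.and ?_ (Metric.ball_mem_nhds x₀ (by positivity))
      refine (l.continuous.norm.continuousAt).eventually_lt_const ?_
      simp [hl, hrpos]
    obtain ⟨R, hR, h⟩ := Metric.eventually_nhds_iff_ball.1 h1
    exact ⟨R, hR, h⟩
  have hin : ∀ x ∈ Metric.ball x₀ ε, ∀ s : ℂ, ‖s‖ < 2 * r →
      x - l x • v + s • v ∈ Metric.ball x₀ R := by
    intro x hx s hs
    obtain ⟨h1, h2⟩ := hεx x hx
    rw [Metric.mem_ball, dist_eq_norm]
    rw [dist_eq_norm] at h2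
    have e : x - l x • v + s • v - x₀ = (x - x₀) - l x • v + s • v := by abel
    rw [e]
    have h3 : ‖l x • v‖ ≤ r / 2 * ‖v‖ := by rw [norm_smul]; gcongr
    have h4 : ‖s • v‖ ≤ 2 * r * ‖v‖ := by rw [norm_smul]; gcongr
    have h5 := norm_add_le ((x - x₀) - l x • v) (s • v)
    have h6 := norm_sub_le (x - x₀) (l x • v)
    linarith
  let F : E → ℝ → ℂ := fun x θ => deriv (circleMap 0 r) θ • ((circleMap 0 r θ - l x)⁻¹ •
    ((circleMap 0 r θ)⁻¹ * f (x - l x • v + circleMap 0 r θ • v)))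
  have hnc : ∀ θ, ‖circleMap 0 r θ‖ = r := fun θ => by simp [abs_of_pos hrpos]
  have hne : ∀ x ∈ Metric.ball x₀ ε, ∀ θ, r / 2 ≤ ‖circleMap 0 r θ - l x‖ := by
    intro x hx θ
    have := norm_sub_norm_le (circleMap 0 r θ) (l x)
    rw [hnc] at this
    linarith [(hεx x hx).1]
  have hne' : ∀ x ∈ Metric.ball x₀ ε, ∀ θ, circleMap 0 r θ - l x ≠ 0 := fun x hx θ => by
    rw [← norm_pos_iff]; linarith [hne x hx θ]
  have hc0 : ∀ θ, circleMap 0 r θ ≠ 0 := fun θ => circleMap_ne_center hrpos.ne'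
  have heq : g =ᶠ[nhds x₀] fun x => (2 * (Real.pi : ℂ) * I)⁻¹ •
      ∫ θ in Set.Icc 0 (2 * Real.pi), F x θ := by
    filter_upwards [Metric.ball_mem_nhds x₀ hε] with x hx
    let ψ : ℂ → ℂ := fun s => f (x - l x • v + s • v)
    have hψ : DifferentiableOn ℂ ψ (Metric.ball 0 (2 * r)) := by
      intro s hs
      have hs' := hRU _ (hin x hx s (by simpa using hs))
      have h1 := hf.differentiableAt (hU.mem_nhds hs'.1)
      apply DifferentiableAt.differentiableWithinAt
      exact DifferentiableAt.comp s (f := fun s : ℂ => x - l x • v + s • v) h1 (by fun_prop)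
    have hψ0 : ψ 0 = 0 := by
      apply h0
      · exact (hRU _ (hin x hx 0 (by simpa using hrpos))).1
      · simp [hv]
    have hds : DifferentiableOn ℂ (dslope ψ 0) (Metric.ball 0 (2 * r)) :=
      (differentiableOn_dslope (Metric.ball_mem_nhds 0 (by positivity))).2 hψ
    have hC := (hds.diffContOnCl_ball (c := 0) (R := r)
      (Metric.closedBall_subset_ball (by linarith))).two_pi_i_inv_smul_circleIntegral_sub_inv_smul
      (w := l x) (by simpa using (hεx x hx).1.trans (by linarith))
    have hg : g x = dslope ψ 0 (l x) := by
      by_cases h : l x = 0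
      · simp [g, h, ψ]
      · rw [dslope_of_ne _ h, slope_def_field, hψ0]
        simp [g, h, ψ]
    rw [hg, ← hC, circleIntegral_def_Icc]
    congr 1
    refine integral_congr_ae (Filter.Eventually.of_forall fun θ => ?_)
    simp only [F]
    rw [dslope_of_ne _ (hc0 θ), slope_def_field, hψ0]
    simp [ψ, div_eq_inv_mul]
  refine DifferentiableAt.congr_of_eventuallyEq ?_ heq
  refine DifferentiableAt.fun_const_smul ?_ _
  refine aux_param F x₀ ε hε (fun _ => r * ((r / 2)⁻¹ * (r⁻¹ * M))) (integrable_const _) ?_ ?_ ?_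
  · intro x hx
    have c1 : Continuous fun θ : ℝ => deriv (circleMap 0 r) θ := by
      simp only [deriv_circleMap]
      fun_prop
    have c2 : Continuous fun θ : ℝ => (circleMap 0 r θ - l x)⁻¹ :=
      Continuous.inv₀ (by fun_prop) (hne' x hx)
    have c3 : Continuous fun θ : ℝ => (circleMap 0 r θ)⁻¹ :=
      Continuous.inv₀ (by fun_prop) hc0
    have c4 : Continuous fun θ : ℝ => f (x - l x • v + circleMap 0 r θ • v) := by
      rw [continuous_iff_continuousAt]
      intro θ
      have hs' := hRU _ (hin x hx (circleMap 0 r θ) (by rw [hnc]; linarith))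
      have h1 := (hf.differentiableAt (hU.mem_nhds hs'.1)).continuousAt
      exact ContinuousAt.comp (f := fun θ => x - l x • v + circleMap 0 r θ • v) h1 (by fun_prop)
    exact (c1.smul (c2.smul (c3.mul c4))).aestronglyMeasurable
  · intro θ x hx
    apply DifferentiableAt.differentiableWithinAt
    have hs' := hRU _ (hin x hx (circleMap 0 r θ) (by rw [hnc]; linarith))
    have h1 := (hf.differentiableAt (hU.mem_nhds hs'.1))
    have h2 := DifferentiableAt.comp x (f := fun x => x - l x • v + circleMap 0 r θ • v) h1 (by fun_prop)
    refine DifferentiableAt.fun_const_smul ?_ _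
    refine DifferentiableAt.fun_smul ?_ (DifferentiableAt.const_mul h2 _)
    exact DifferentiableAt.fun_inv (by fun_prop) (hne' x hx θ)
  · intro θ x hx
    have hs' := hRU _ (hin x hx (circleMap 0 r θ) (by rw [hnc]; linarith))
    simp only [F, norm_smul, norm_mul, norm_inv, hnc, deriv_circleMap, norm_I, mul_one]
    have := hne x hx θ
    gcongr
    exact hs'.2.le

theorem aux_divs {E ι : Type*} [NormedAddCommGroup E] [NormedSpace ℂ E] [FiniteDimensional ℂ E]
    (U : Set E) (hU : IsOpen U) (f : E → ℂ) (hf : DifferentiableOn ℂ f U) (l : ι → E →L[ℂ] ℂ)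
    (S : Finset ι)
    (hne : ∀ q ∈ S, ∃ v, l q v = 1)
    (hindep : ∀ q ∈ S, ∃ v, l q v = 0 ∧ ∀ p ∈ S, p ≠ q → l p v ≠ 0)
    (h0 : ∀ q ∈ S, ∀ x ∈ U, l q x = 0 → f x = 0) :
    ∃ g : E → ℂ, DifferentiableOn ℂ g U ∧ ∀ x ∈ U, f x = g x * ∏ q ∈ S, l q x := by
  classical
  induction S using Finset.induction_on with
  | empty => exact ⟨f, hf, by simp⟩
  | insert q S hq ih =>
    obtain ⟨g, hg, hfg⟩ := ih (fun p hp => hne p (Finset.mem_insert_of_mem hp))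
      (fun p hp => by
        obtain ⟨v, hv, hv'⟩ := hindep p (Finset.mem_insert_of_mem hp)
        exact ⟨v, hv, fun p' hp' => hv' p' (Finset.mem_insert_of_mem hp')⟩)
      (fun p hp => h0 p (Finset.mem_insert_of_mem hp))
    obtain ⟨w, hw⟩ := hne q (Finset.mem_insert_self _ _)
    obtain ⟨v, hv, hv'⟩ := hindep q (Finset.mem_insert_self _ _)
    obtain ⟨g', hg', hgg'⟩ := aux_div U hU g hg (l q) w hw (by
      intro x hx hlx
      have hcont : ContinuousAt (fun s : ℂ => g (x + s • v)) 0 := by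
        have h1 : ContinuousAt g (x + (0 : ℂ) • v) := by
          simpa using (hg.differentiableAt (hU.mem_nhds hx)).continuousAt
        exact ContinuousAt.comp (f := fun s : ℂ => x + s • v) h1 (by fun_prop)
      have hmem : ∀ᶠ s : ℂ in nhdsWithin 0 {0}ᶜ, x + s • v ∈ U := by
        have : ContinuousAt (fun s : ℂ => x + s • v) 0 := by fun_prop
        refine Filter.Eventually.filter_mono nhdsWithin_le_nhds (this.eventually ?_)
        simpa using hU.mem_nhds hx
      have hnz : ∀ᶠ s : ℂ in nhdsWithin 0 {0}ᶜ, ∀ p ∈ S, l p (x + s • v) ≠ 0 := by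
        rw [Filter.eventually_all_finset]
        intro p hp
        by_cases hpx : l p x = 0
        · filter_upwards [self_mem_nhdsWithin] with s hs
          have := hv' p (Finset.mem_insert_of_mem hp) (by rintro rfl; exact hq hp)
          simpa [hpx, this] using hs
        · have : ContinuousAt (fun s : ℂ => l p (x + s • v)) 0 := by fun_prop
          exact Filter.Eventually.filter_mono nhdsWithin_le_nhds
            (this.eventually_ne (by simpa using hpx))
      have hz : ∀ᶠ s : ℂ in nhdsWithin 0 {0}ᶜ, g (x + s • v) = 0 := by
        filter_upwards [hmem, hnz] with s h1 h2
        have h3 := hfg _ h1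
        rw [h0 q (Finset.mem_insert_self _ _) _ h1 (by simp [hlx, hv])] at h3
        rcases mul_eq_zero.1 h3.symm with h | h
        · exact h
        · exact absurd h (Finset.prod_ne_zero_iff.2 h2)
      have h4 : Filter.Tendsto (fun s : ℂ => g (x + s • v)) (nhdsWithin 0 {0}ᶜ) (nhds (g x)) := by
        have := hcont.tendsto.mono_left (nhdsWithin_le_nhds (s := {0}ᶜ))
        simpa using this
      exact tendsto_nhds_unique h4 (tendsto_const_nhds.congr' (hz.mono fun _ h => h.symm)))
    refine ⟨g', hg', fun x hx => ?_⟩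
    rw [hfg x hx, hgg' x hx, Finset.prod_insert hq, mul_assoc]

theorem aux_prod_filter {N : ℕ} (f : Fin N → Fin N → ℂ) :
    ∏ q ∈ Finset.univ.filter (fun q : Fin N × Fin N => q.1 < q.2), f q.1 q.2 =
      ∏ i, ∏ j ∈ Finset.Ioi i, f i j := by
  rw [Finset.prod_filter, Fintype.prod_prod_type]
  refine Finset.prod_congr rfl fun i _ => ?_
  rw [← Finset.prod_filter]
  refine Finset.prod_congr ?_ fun _ _ => rfl
  ext j; simp

theorem aux_sum {N : ℕ} (a : Fin N → ℝ) :
    ∑ i, ∑ j ∈ Finset.Ioi i, (a i + a j) = ((N : ℝ) - 1) * ∑ i, a i := by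
  have h1 : ∑ i, ∑ j ∈ Finset.Ioi i, a j = ∑ j, ∑ i ∈ Finset.Iio j, a j := by
    refine Finset.sum_comm' ?_
    intro x y; simp
  simp only [Finset.sum_add_distrib]
  rw [h1, ← Finset.sum_add_distrib, Finset.mul_sum]
  refine Finset.sum_congr rfl fun i _ => ?_
  simp only [Finset.sum_const, Fin.card_Ioi, Fin.card_Iio, nsmul_eq_mul]
  have : ((N - 1 - (i : ℕ) : ℕ) : ℝ) = (N : ℝ) - 1 - (i : ℕ) := by
    have := i.2
    rw [Nat.cast_sub (by omega), Nat.cast_sub (by omega)]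
    simp
  rw [this]
  ring

theorem aux_exp_abs (d : ℝ) (hd : 0 < d) : Integrable (fun x : ℝ => Real.exp (-(d * |x|))) := by
  rw [← integrableOn_univ, ← Set.Iic_union_Ioi (a := (0 : ℝ))]
  refine IntegrableOn.union ?_ ?_
  · refine (integrableOn_exp_mul_Iic hd 0).congr_fun (fun x hx => ?_) measurableSet_Iic
    simp [abs_of_nonpos (Set.mem_Iic.1 hx)]
  · refine (integrableOn_exp_mul_Ioi (a := -d) (by linarith) 0).congr_fun (fun x hx => ?_)
      measurableSet_Ioi
    simp [abs_of_pos (Set.mem_Ioi.1 hx)]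

theorem aux_sinh (a b : ℝ) : ‖Complex.sinh ((a : ℂ) - b)‖ ≤ Real.exp (|a| + |b|) := by
  rw [← Complex.ofReal_sub, ← Complex.ofReal_sinh, Complex.norm_real, Real.norm_eq_abs, abs_le,
    Real.sinh_eq]
  have h1 : Real.exp (a - b) ≤ Real.exp (|a| + |b|) :=
    Real.exp_le_exp.2 (by linarith [le_abs_self a, neg_abs_le b])
  have h2 : Real.exp (-(a - b)) ≤ Real.exp (|a| + |b|) :=
    Real.exp_le_exp.2 (by linarith [le_abs_self b, neg_abs_le a])
  have h3 := Real.exp_pos (a - b)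
  have h4 := Real.exp_pos (-(a - b))
  constructor <;> linarith

theorem aux_cosh (t : ℂ) (z δ M : ℝ) (hδ : 0 < δ) (h1 : δ ≤ Real.cos t.im) (h2 : |t.re| ≤ M) :
    δ / 2 * Real.exp (-M) * Real.exp |z| ≤ ‖Complex.cosh (t - z)‖ := by
  refine le_trans ?_ ((le_abs_self _).trans (Complex.abs_re_le_norm _))
  have e : (Complex.cosh (t - z)).re = Real.cosh (t.re - z) * Real.cos t.im := by
    have : t - z = ((t.re - z : ℝ) : ℂ) + ((t.im : ℝ) : ℂ) * I := by
      apply Complex.ext <;> simp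
    rw [this, Complex.cosh_add, Complex.cosh_mul_I, Complex.sinh_mul_I,
      ← Complex.ofReal_cosh, ← Complex.ofReal_sinh, ← Complex.ofReal_cos, ← Complex.ofReal_sin]
    simp only [Complex.add_re, Complex.mul_re, Complex.mul_im, Complex.ofReal_re, Complex.ofReal_im,
      Complex.I_re, Complex.I_im]
    ring
  rw [e]
  have h3 : Real.exp (-M) * Real.exp |z| / 2 ≤ Real.cosh (t.re - z) := by
    rw [← Real.cosh_abs, Real.cosh_eq, ← Real.exp_add]
    have : Real.exp (-M + |z|) ≤ Real.exp |t.re - z| := by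
      apply Real.exp_le_exp.2
      have := abs_sub_abs_le_abs_sub z t.re
      rw [abs_sub_comm] at this
      linarith
    have := Real.exp_pos (-|t.re - z|)
    linarith
  have h4 : 0 ≤ Real.exp (-M) * Real.exp |z| / 2 := by positivity
  calc δ / 2 * Real.exp (-M) * Real.exp |z| = (Real.exp (-M) * Real.exp |z| / 2) * δ := by ring
    _ ≤ _ := mul_le_mul h3 h1 hδ.le (h4.trans h3)

/-- the integrand -/
noncomputable def auxG (N : ℕ) (ut : (Fin (N + 1) → ℂ) × (Fin (N + 1) → ℂ)) (z : Fin N → ℝ) : ℂ :=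
  (∏ q ∈ Finset.univ.filter (fun q : Fin N × Fin N => q.1 < q.2),
            Complex.sinh ((z q.1 : ℂ) - (z q.2 : ℂ))) /
            (∏ j : Fin (N + 1), ∏ k : Fin N, Complex.cosh (ut.2 j - (z k : ℂ))) *
            Complex.exp (∑ j : Fin N, (z j : ℂ) * (ut.1 (Fin.last N) - ut.1 (Fin.castSucc j)))

theorem auxG_bound (N : ℕ) (ut : (Fin (N + 1) → ℂ) × (Fin (N + 1) → ℂ)) (z : Fin N → ℝ)
    (d δ M : ℝ) (hδ : 0 < δ)
    (h1 : ∀ i : Fin N, |(ut.1 (Fin.last N) - ut.1 (Fin.castSucc i)).re| ≤ 2 - d)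
    (h2 : ∀ j, δ ≤ Real.cos (ut.2 j).im) (h3 : ∀ j, |(ut.2 j).re| ≤ M) :
    ‖auxG N ut z‖ ≤ (∏ _j : Fin (N + 1), ∏ _k : Fin N, (δ / 2 * Real.exp (-M)))⁻¹ *
      ∏ k, Real.exp (-(d * |z k|)) := by
  set S := ∑ k, |z k| with hS
  have b1 : ‖∏ q ∈ Finset.univ.filter (fun q : Fin N × Fin N => q.1 < q.2),
            Complex.sinh ((z q.1 : ℂ) - (z q.2 : ℂ))‖ ≤ Real.exp (((N : ℝ) - 1) * S) := by
    rw [aux_prod_filter (fun i j => Complex.sinh ((z i : ℂ) - (z j : ℂ))), hS, ← aux_sum,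
      Real.exp_sum, norm_prod]
    refine Finset.prod_le_prod (fun _ _ => norm_nonneg _) fun i _ => ?_
    rw [Real.exp_sum, norm_prod]
    exact Finset.prod_le_prod (fun _ _ => norm_nonneg _) fun j _ => aux_sinh _ _
  have b2 : (∏ _j : Fin (N + 1), ∏ _k : Fin N, (δ / 2 * Real.exp (-M))) *
      Real.exp (((N : ℝ) + 1) * S) ≤
      ‖∏ j : Fin (N + 1), ∏ k : Fin N, Complex.cosh (ut.2 j - (z k : ℂ))‖ := by
    have : Real.exp (((N : ℝ) + 1) * S) = ∏ _j : Fin (N + 1), ∏ k : Fin N, Real.exp |z k| := by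
      simp only [← Real.exp_sum]
      simp [hS]
    rw [this, ← Finset.prod_mul_distrib, norm_prod]
    refine Finset.prod_le_prod (fun _ _ => by positivity) fun j _ => ?_
    rw [← Finset.prod_mul_distrib, norm_prod]
    exact Finset.prod_le_prod (fun _ _ => by positivity) fun k _ => aux_cosh _ _ _ _ hδ (h2 j) (h3 j)
  have b3 : ‖Complex.exp (∑ j : Fin N, (z j : ℂ) * (ut.1 (Fin.last N) - ut.1 (Fin.castSucc j)))‖ ≤
      Real.exp ((2 - d) * S) := by
    rw [Complex.norm_exp, Complex.re_sum, hS, Finset.mul_sum]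
    refine Real.exp_le_exp.2 (Finset.sum_le_sum fun j _ => ?_)
    rw [Complex.re_ofReal_mul]
    refine (le_abs_self _).trans ?_
    rw [abs_mul, mul_comm]
    exact mul_le_mul_of_nonneg_right (h1 j) (abs_nonneg _)
  set K := ∏ _j : Fin (N + 1), ∏ _k : Fin N, (δ / 2 * Real.exp (-M)) with hK
  have hKpos : 0 < K := Finset.prod_pos fun _ _ => Finset.prod_pos fun _ _ => by positivity
  have e : ∏ k, Real.exp (-(d * |z k|)) = Real.exp (((N : ℝ) - 1) * S) /
      Real.exp (((N : ℝ) + 1) * S) * Real.exp ((2 - d) * S) := by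
    rw [← Real.exp_sum, ← Real.exp_sub, ← Real.exp_add]
    congr 1
    rw [Finset.sum_neg_distrib, ← Finset.mul_sum]
    ring
  rw [auxG, norm_mul, norm_div, e]
  calc _ ≤ Real.exp (((N : ℝ) - 1) * S) / (K * Real.exp (((N : ℝ) + 1) * S)) *
        Real.exp ((2 - d) * S) := by gcongr
    _ = _ := by field_simp

theorem aux_cosh_ne_s4 (t : ℂ) (z : ℝ) (h : |t.im| < Real.pi / 2) : Complex.cosh (t - z) ≠ 0 := by
  have hc : 0 < Real.cos t.im := Real.cos_pos_of_mem_Ioo (abs_lt.1 h)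
  have := aux_cosh t z _ _ hc le_rfl le_rfl
  rw [← norm_pos_iff]
  refine lt_of_lt_of_le (by positivity) this

/-- the domain -/
def auxU (N : ℕ) : Set ((Fin (N + 1) → ℂ) × (Fin (N + 1) → ℂ)) :=
  {ut : (Fin (N + 1) → ℂ) × (Fin (N + 1) → ℂ) |
          (∀ i : Fin N, |(ut.1 (Fin.last N) - ut.1 (Fin.castSucc i)).re| < 2) ∧
          ∀ j : Fin (N + 1), |(ut.2 j).im| < Real.pi / 2}

theorem auxU_open (N : ℕ) : IsOpen (auxU N) := by
  unfold auxU
  rw [Set.ofPred_and, Set.ofPred_forall, Set.ofPred_forall]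
  refine IsOpen.inter (isOpen_iInter_of_finite fun i => ?_) (isOpen_iInter_of_finite fun i => ?_)
  · exact isOpen_lt (by fun_prop) (by fun_prop)
  · exact isOpen_lt (by fun_prop) (by fun_prop)

theorem aux_dprod {E ι : Type*} [NormedAddCommGroup E] [NormedSpace ℂ E] (S : Finset ι)
    (f : ι → E → ℂ) (x : E) (h : ∀ i ∈ S, DifferentiableAt ℂ (f i) x) :
    DifferentiableAt ℂ (fun y => ∏ i ∈ S, f i y) x := by
  classical
  induction S using Finset.induction_on with
  | empty => simp
  | insert q S hq ih =>
    simp only [Finset.prod_insert hq]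
    exact (h q (Finset.mem_insert_self _ _)).fun_mul
      (ih fun i hi => h i (Finset.mem_insert_of_mem hi))

theorem auxG_diff (N : ℕ) : DifferentiableOn ℂ (fun ut => ∫ z, auxG N ut z) (auxU N) := by
  intro x₀ hx₀
  apply DifferentiableAt.differentiableWithinAt
  obtain ⟨d, hd, hd1, hd2⟩ : ∃ d : ℝ, 0 < d ∧
      (∀ i : Fin N, |(x₀.1 (Fin.last N) - x₀.1 (Fin.castSucc i)).re| < 2 - d) ∧
      ∀ j, d < Real.cos (x₀.2 j).im := by
    have h1 : ∀ᶠ d : ℝ in nhdsWithin 0 (Set.Ioi 0), 0 < d ∧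
      (∀ i : Fin N, |(x₀.1 (Fin.last N) - x₀.1 (Fin.castSucc i)).re| < 2 - d) ∧
      ∀ j, d < Real.cos (x₀.2 j).im := by
      refine Filter.Eventually.and self_mem_nhdsWithin
        (Filter.Eventually.filter_mono nhdsWithin_le_nhds (Filter.Eventually.and ?_ ?_))
      · rw [Filter.eventually_all]
        intro i
        have : ContinuousAt (fun d : ℝ => 2 - d) 0 := by fun_prop
        exact this.eventually_const_lt (by simpa using hx₀.1 i)
      · rw [Filter.eventually_all]
        intro j
        exact eventually_lt_nhds (Real.cos_pos_of_mem_Ioo (abs_lt.1 (hx₀.2 j)))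
    exact h1.exists
  have h1 : ∀ᶠ x in nhds x₀, x ∈ auxU N ∧
      (∀ i : Fin N, |(x.1 (Fin.last N) - x.1 (Fin.castSucc i)).re| < 2 - d) ∧
      (∀ j, d < Real.cos (x.2 j).im) ∧ ‖x‖ < ‖x₀‖ + 1 := by
    refine (auxU_open N).eventually_mem hx₀ |>.and (Filter.Eventually.and ?_
      (Filter.Eventually.and ?_ ?_))
    · rw [Filter.eventually_all]
      intro i
      have : ContinuousAt (fun x : (Fin (N + 1) → ℂ) × (Fin (N + 1) → ℂ) =>
        |(x.1 (Fin.last N) - x.1 (Fin.castSucc i)).re|) x₀ := by fun_prop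
      exact this.eventually_lt_const (hd1 i)
    · rw [Filter.eventually_all]
      intro j
      have : ContinuousAt (fun x : (Fin (N + 1) → ℂ) × (Fin (N + 1) → ℂ) =>
        Real.cos (x.2 j).im) x₀ := by fun_prop
      exact this.eventually_const_lt (hd2 j)
    · exact (continuous_norm.continuousAt (x := x₀)).eventually_lt_const (by linarith)
  obtain ⟨ε, hε, h⟩ := Metric.eventually_nhds_iff_ball.1 h1
  refine aux_param (auxG N) x₀ ε hε (fun z =>
    (∏ _j : Fin (N + 1), ∏ _k : Fin N, (d / 2 * Real.exp (-(‖x₀‖ + 1))))⁻¹ *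
      ∏ k, Real.exp (-(d * |z k|))) ?_ ?_ ?_ ?_
  · exact (Integrable.fintype_prod (f := fun _ x => Real.exp (-(d * |x|)))
      (fun _ => aux_exp_abs d hd)).const_mul _
  · intro x hx
    apply Continuous.aestronglyMeasurable
    unfold auxG
    refine Continuous.mul (Continuous.div (by fun_prop) (by fun_prop) fun z => ?_) (by fun_prop)
    exact Finset.prod_ne_zero_iff.2 fun j _ => Finset.prod_ne_zero_iff.2 fun k _ =>
      aux_cosh_ne_s4 _ _ ((h x hx).1.2 j)
  · intro z x hx
    apply DifferentiableAt.differentiableWithinAt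
    have hne : (∏ j : Fin (N + 1), ∏ k : Fin N, Complex.cosh (x.2 j - (z k : ℂ))) ≠ 0 :=
      Finset.prod_ne_zero_iff.2 fun j _ => Finset.prod_ne_zero_iff.2 fun k _ =>
      aux_cosh_ne_s4 _ _ ((h x hx).1.2 j)
    simp only [auxG, div_eq_mul_inv]
    have d1 : DifferentiableAt ℂ (fun x : (Fin (N + 1) → ℂ) × (Fin (N + 1) → ℂ) =>
        ∏ j : Fin (N + 1), ∏ k : Fin N, Complex.cosh (x.2 j - (z k : ℂ))) x := by
      have hk : ∀ j k, DifferentiableAt ℂ (fun x : (Fin (N + 1) → ℂ) × (Fin (N + 1) → ℂ) =>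
          Complex.cosh (x.2 j - (z k : ℂ))) x := fun j k => by fun_prop
      have hj : ∀ j, DifferentiableAt ℂ (fun x : (Fin (N + 1) → ℂ) × (Fin (N + 1) → ℂ) =>
          ∏ k : Fin N, Complex.cosh (x.2 j - (z k : ℂ))) x := fun j =>
        aux_dprod Finset.univ _ x (fun k _ => hk j k)
      exact aux_dprod Finset.univ _ x (fun j _ => hj j)
    have d2 : DifferentiableAt ℂ (fun x : (Fin (N + 1) → ℂ) × (Fin (N + 1) → ℂ) =>
        Complex.exp (∑ j : Fin N, (z j : ℂ) * (x.1 (Fin.last N) - x.1 (Fin.castSucc j)))) x := by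
      fun_prop
    exact DifferentiableAt.fun_mul (DifferentiableAt.const_mul (DifferentiableAt.fun_inv d1 hne) _) d2
  · intro z x hx
    obtain ⟨-, h1, h2, h3⟩ := h x hx
    refine auxG_bound N x z d d _ hd (fun i => (h1 i).le) (fun j => (h2 j).le) fun j => ?_
    exact (Complex.abs_re_le_norm _).trans ((norm_le_pi_norm x.2 j).trans
      ((norm_snd_le x).trans h3.le))

theorem auxG_zero (N : ℕ) (ut : (Fin (N + 1) → ℂ) × (Fin (N + 1) → ℂ)) (a b : Fin N) (hab : a ≠ b)
    (h : ut.1 (Fin.castSucc a) = ut.1 (Fin.castSucc b)) : ∫ z, auxG N ut z = 0 := by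
  let σ := Equiv.swap a b
  have h1 := (volume_measurePreserving_piCongrLeft (fun _ : Fin N => ℝ) σ).integral_comp
    (MeasurableEquiv.measurableEmbedding _) (auxG N ut)
  have h2 : ∀ z, auxG N ut (MeasurableEquiv.piCongrLeft (fun _ : Fin N => ℝ) σ z) =
      - auxG N ut z := by
    intro z
    have e : MeasurableEquiv.piCongrLeft (fun _ : Fin N => ℝ) σ z = fun i => z (σ i) := by
      funext i
      obtain ⟨j, rfl⟩ := σ.surjective i
      rw [MeasurableEquiv.coe_piCongrLeft, Equiv.piCongrLeft_apply_apply]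
      simp [σ]
    rw [e]
    unfold auxG
    have p1 : ∏ q ∈ Finset.univ.filter (fun q : Fin N × Fin N => q.1 < q.2),
            Complex.sinh ((z (σ q.1) : ℂ) - (z (σ q.2) : ℂ)) =
        - ∏ q ∈ Finset.univ.filter (fun q : Fin N × Fin N => q.1 < q.2),
            Complex.sinh ((z q.1 : ℂ) - (z q.2 : ℂ)) := by
      rw [aux_prod_filter (fun i j => Complex.sinh ((z i : ℂ) - (z j : ℂ))),
        aux_prod_filter (fun i j => Complex.sinh ((z (σ i) : ℂ) - (z (σ j) : ℂ)))]
      have := σ.prod_Ioi_comp_eq_sign_mul_prod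
        (f := fun i j => Complex.sinh ((z i : ℂ) - (z j : ℂ))) (fun i j => by
          rw [← Complex.sinh_neg, neg_sub])
      rw [this, Equiv.Perm.sign_swap hab]
      simp
    have p2 : ∀ j, ∏ k : Fin N, Complex.cosh (ut.2 j - (z (σ k) : ℂ)) =
        ∏ k : Fin N, Complex.cosh (ut.2 j - (z k : ℂ)) := fun j =>
      Equiv.prod_comp σ (fun k => Complex.cosh (ut.2 j - (z k : ℂ)))
    have p3 : ∑ j : Fin N, (z (σ j) : ℂ) * (ut.1 (Fin.last N) - ut.1 (Fin.castSucc j)) =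
        ∑ j : Fin N, (z j : ℂ) * (ut.1 (Fin.last N) - ut.1 (Fin.castSucc j)) := by
      rw [← Equiv.sum_comp σ (fun j => (z j : ℂ) * (ut.1 (Fin.last N) - ut.1 (Fin.castSucc j)))]
      refine Finset.sum_congr rfl fun j _ => ?_
      have : ut.1 (Fin.castSucc (σ j)) = ut.1 (Fin.castSucc j) := by
        simp only [σ, Equiv.swap_apply_def]
        split_ifs with h1 h2
        · rw [h1, h]
        · rw [h2, h]
        · rfl
      rw [this]
    simp only [p1, p2, p3]
    ring
  simp only [h2] at h1
  rw [integral_neg] at h1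
  exact self_eq_neg.1 h1.symm

theorem statement4 (N : ℕ) (hN : 1 ≤ N) :
    ∃ H : (Fin (N + 1) → ℂ) × (Fin (N + 1) → ℂ) → ℂ,
      DifferentiableOn ℂ H
        {ut : (Fin (N + 1) → ℂ) × (Fin (N + 1) → ℂ) |
          (∀ i : Fin N, |(ut.1 (Fin.last N) - ut.1 (Fin.castSucc i)).re| < 2) ∧
          ∀ j : Fin (N + 1), |(ut.2 j).im| < Real.pi / 2} ∧
      ∀ ut : (Fin (N + 1) → ℂ) × (Fin (N + 1) → ℂ),
        (∀ i : Fin N, |(ut.1 (Fin.last N) - ut.1 (Fin.castSucc i)).re| < 2) →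
        (∀ j : Fin (N + 1), |(ut.2 j).im| < Real.pi / 2) →
        (∫ z : Fin N → ℝ,
          (∏ q ∈ Finset.univ.filter (fun q : Fin N × Fin N => q.1 < q.2),
            Complex.sinh ((z q.1 : ℂ) - (z q.2 : ℂ))) /
            (∏ j : Fin (N + 1), ∏ k : Fin N, Complex.cosh (ut.2 j - (z k : ℂ))) *
            Complex.exp (∑ j : Fin N, (z j : ℂ) * (ut.1 (Fin.last N) - ut.1 (Fin.castSucc j))))
        = H ut *
          ∏ q ∈ Finset.univ.filter (fun q : Fin N × Fin N => q.1 < q.2),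
            (ut.1 (Fin.castSucc q.1) - ut.1 (Fin.castSucc q.2)) := by
  let l : Fin N × Fin N → ((Fin (N + 1) → ℂ) × (Fin (N + 1) → ℂ)) →L[ℂ] ℂ := fun q =>
    ((ContinuousLinearMap.proj (R := ℂ) (φ := fun _ : Fin (N + 1) => ℂ) (Fin.castSucc q.1)) -
      (ContinuousLinearMap.proj (R := ℂ) (φ := fun _ : Fin (N + 1) => ℂ) (Fin.castSucc q.2))).comp
      (ContinuousLinearMap.fst ℂ (Fin (N + 1) → ℂ) (Fin (N + 1) → ℂ))
  have hl : ∀ q ut, l q ut = ut.1 (Fin.castSucc q.1) - ut.1 (Fin.castSucc q.2) := fun q ut => by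
    simp [l]
  have key := aux_divs (auxU N) (auxU_open N) _ (auxG_diff N) l
    (Finset.univ.filter (fun q : Fin N × Fin N => q.1 < q.2)) ?_ ?_ ?_
  · obtain ⟨H, hH, hHeq⟩ := key
    refine ⟨H, hH, fun ut h1 h2 => ?_⟩
    have := hHeq ut ⟨h1, h2⟩
    simp only [hl] at this
    exact this
  · rintro ⟨a, b⟩ hq
    have hab : a < b := by simpa using hq
    refine ⟨(Pi.single (Fin.castSucc a) 1, 0), ?_⟩
    rw [hl]
    simp [hab.ne']
  · rintro ⟨a, b⟩ hq
    have hab : a < b := by simpa using hq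
    refine ⟨(fun i => if i = Fin.castSucc b then ((a : ℕ) : ℂ) else ((i : ℕ) : ℂ), 0), ?_, ?_⟩
    · rw [hl]
      simp [hab.ne]
    · rintro ⟨c, e⟩ hp hne h
      have hce : c < e := by simpa using hp
      rw [hl] at h
      simp only [Fin.castSucc_inj, Fin.val_castSucc] at h
      rw [sub_eq_zero] at h
      apply hne
      split_ifs at h with h1 h2 h2
      · omega
      · have := Nat.cast_injective h
        omega
      · have := Nat.cast_injective h
        ext <;> simp <;> omega
      · have := Nat.cast_injective h
        omega
  · rintro ⟨a, b⟩ hq x hx hlx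
    have hab : a < b := by simpa using hq
    rw [hl] at hlx
    exact auxG_zero N x a b hab.ne (sub_eq_zero.1 hlx)
end
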